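/- arXiv:2011.00590 — 6 statements merged into one kernel-verified Lean document; each statement's English description precedes it below -/
import Mathlib

section
/- Let K be a quadratic field. If u, v, w ∈ K satisfy both v^2 + v = u^3 - u^2 - 7u + 10 and w^2 = -(4u^3 + 7u^2 - 6u + 19), then u is rational. -/
/-- value of the binary quartic form with the given coefficients -/
def qev (a b c d e m n : ℤ) : ℤ :=
  a * m ^ 4 + b * m ^ 3 * n + c * m ^ 2 * n ^ 2 + d * m * n ^ 3 + e * n ^ 4

/-- identity, written so that kernel evaluation computes the argument first -/
def forceN {α : Type} (n : ℕ) (f : ℕ → α) : α :=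
  match n with
  | 0 => f 0
  | k + 1 => f (k + 1)

theorem forceN_eq {α : Type} (n : ℕ) (f : ℕ → α) : forceN n f = f n := by
  cases n <;> rfl

/-- identity, written so that kernel evaluation computes the argument first -/
def forceZ {α : Type} (z : ℤ) (f : ℤ → α) : α :=
  match z with
  | Int.ofNat n => forceN n fun k => f (Int.ofNat k)
  | Int.negSucc n => forceN n fun k => f (Int.negSucc k)

theorem forceZ_eq {α : Type} (z : ℤ) (f : ℤ → α) : forceZ z f = f z := by
  cases z <;> simp [forceZ, forceN_eq]

/-- Newton iteration for an integer square root (result is checked afterwards) -/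
def newt (n : ℕ) : ℕ → ℕ → ℕ
  | 0, x => x
  | k + 1, x => forceN ((x + n / x) / 2) fun y => if y < x then newt n k y else x

/-- Horner version of `qev`, cheaper to evaluate -/
def qevh (a b c d e m n : ℤ) : ℤ :=
  forceZ (n * n) fun n2 =>
    (((a * m + b * n) * m + c * n2) * m + d * (n2 * n)) * m + e * (n2 * n2)

theorem qevh_eq (a b c d e m n : ℤ) : qevh a b c d e m n = qev a b c d e m n := by
  simp only [qevh, forceZ_eq, qev]; ring

def hasRoot (a b c d e : ℤ) : Bool :=
  (List.range 7).any fun n => (List.range 17).any fun j =>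
    (decide (n ≠ 0)) && decide (qevh a b c d e ((j : ℤ) - 8) (n : ℤ) = 0)

def insol (a b c d e : ℤ) : Bool :=
  (List.range 16).all fun m => (List.range 16).all fun n =>
    (decide (m % 2 = 0) && decide (n % 2 = 0)) ||
      (forceZ (qevh a b c d e (m : ℤ) (n : ℤ) % 16) fun v =>
       decide (v ≠ 0) && decide (v ≠ 1) && decide (v ≠ 4) && decide (v ≠ 9))

def goodQ (a b c d e : ℤ) : Bool := hasRoot a b c d e || insol a b c d e

def chk2 (a b c A B s : ℤ) : Bool :=
  forceZ ((s - B) / (2 * A)) fun d =>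
  if s - B = 2 * A * d then
    forceZ ((121 - c * c + 3 * b * d) / (12 * a)) fun e =>
    if 121 - c * c + 3 * b * d = 12 * a * e then goodQ a b c d e else true
  else true

def chk (a b c : ℤ) : Bool :=
  forceZ (-108 * a * a) fun A =>
  forceZ (108 * a * b * c - 27 * (b * b * b)) fun B =>
  forceZ (24 * a * c * (121 - c * c) - 9 * b * b * (121 - c * c) - 8 * a * (c * c * c)
    - 41624 * a) fun C =>
  forceZ (B * B - 4 * A * C) fun D =>
  if D < 0 then true else
    forceZ (newt D.toNat 60 (2 ^ (Nat.log2 D.toNat / 2 + 1)) : ℕ) fun r =>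
    if r * r < D ∧ D < (r + 1) * (r + 1) ∧ 0 ≤ r then true
    else decide (r * r = D) && (chk2 a b c A B r && chk2 a b c A B (-r))

noncomputable def chkAll : Bool :=
  (List.range 18).all fun i => forceZ (-((i : ℤ) + 1)) fun a =>
  (List.range (4 * (i + 1))).all fun j => forceZ ((j : ℤ) + 2 * a) fun b =>
  (List.range 58).all fun k => forceZ ((k : ℤ) - 41) fun c =>
  forceZ (8 * a * c - 3 * (b * b)) fun H =>
    !(Int.ble' (9 * a * a + 55 * a - 88) H) || !(Int.ble' H (-110 * a)) || chk a b c

theorem chkAll_true : chkAll = true := by decide +kernel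

theorem chk2_sound (a b c d e A B : ℤ) (ha : a ≠ 0) (hA : A ≠ 0)
    (hI : 12 * a * e - 3 * b * d + c ^ 2 = 121)
    (h : chk2 a b c A B (2 * A * d + B) = true) : goodQ a b c d e = true := by
  have h1 : (2 * A * d + B - B) / (2 * A) = d := by
    rw [add_sub_cancel_right]; exact Int.mul_ediv_cancel_left _ (by simpa using hA)
  have h2 : (121 - c * c + 3 * b * d) / (12 * a) = e := by
    rw [show 121 - c * c + 3 * b * d = 12 * a * e by linear_combination -hI]
    exact Int.mul_ediv_cancel_left _ (by simpa using ha)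
  unfold chk2 at h
  simp only [forceZ_eq, h1, h2] at h
  rw [if_pos (by ring), if_pos (by linear_combination -hI)] at h
  exact h

theorem chk_sound (a b c d e : ℤ) (ha : a ≠ 0)
    (hI : 12 * a * e - 3 * b * d + c ^ 2 = 121)
    (hJ : 72 * a * c * e + 9 * b * c * d - 27 * a * d ^ 2 - 27 * e * b ^ 2 - 2 * c ^ 3 = 10406)
    (h : chk a b c = true) : goodQ a b c d e = true := by
  unfold chk at h
  simp only [forceZ_eq] at h
  set A := -108 * a * a with hA
  set B := 108 * a * b * c - 27 * (b * b * b) with hB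
  set C := 24 * a * c * (121 - c * c) - 9 * b * b * (121 - c * c) - 8 * a * (c * c * c) - 41624 * a with hC
  have hquad : A * d ^ 2 + B * d + C = 0 := by
    rw [hA, hB, hC]
    linear_combination (9 * b ^ 2 - 24 * a * c) * hI + 4 * a * hJ
  have hA0 : A ≠ 0 := by
    rw [hA]; simp [ha]
  have hD : B * B - 4 * A * C = (2 * A * d + B) ^ 2 := by
    linear_combination (-4 * A) * hquad
  rw [hD] at h
  set t := 2 * A * d + B with ht
  rw [if_neg (not_lt.mpr (sq_nonneg t))] at h
  set r : ℤ := ((newt (t ^ 2).toNat 60 (2 ^ (Nat.log2 (t ^ 2).toNat / 2 + 1)) : ℕ) : ℤ) with hr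
  clear_value r
  by_cases hc : r * r < t ^ 2 ∧ t ^ 2 < (r + 1) * (r + 1) ∧ 0 ≤ r
  · exfalso
    obtain ⟨h1, h2, h3⟩ := hc
    have h4 : r < |t| := by
      have : r ^ 2 < t ^ 2 := by linarith [sq r]
      have := sq_lt_sq.mp this
      rwa [abs_of_nonneg h3] at this
    have h5 : |t| < r + 1 := by
      have : t ^ 2 < (r + 1) ^ 2 := by linarith [sq (r + 1)]
      have := sq_lt_sq.mp this
      rwa [abs_of_nonneg (by linarith : (0:ℤ) ≤ r + 1)] at this
    omega
  · rw [if_neg hc] at h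
    simp only [Bool.and_eq_true, decide_eq_true_eq] at h
    obtain ⟨h1, h2, h3⟩ := h
    have h4 : t ^ 2 = r ^ 2 := by linarith [sq r]
    rcases sq_eq_sq_iff_eq_or_eq_neg.mp h4 with h5 | h5
    · rw [← h5] at h2; exact chk2_sound a b c d e A B ha hA0 hI h2
    · rw [← h5] at h3; exact chk2_sound a b c d e A B ha hA0 hI h3

theorem fin_sound (a b c d e : ℤ) (ha : -18 ≤ a) (ha' : a < 0) (hb : 2 * a ≤ b) (hb' : b < -2 * a)
    (hI : 12 * a * e - 3 * b * d + c ^ 2 = 121)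
    (hJ : 72 * a * c * e + 9 * b * c * d - 27 * a * d ^ 2 - 27 * e * b ^ 2 - 2 * c ^ 3 = 10406)
    (hH1 : 9 * a * a + 55 * a - 88 ≤ 8 * a * c - 3 * (b * b))
    (hH2 : 8 * a * c - 3 * (b * b) ≤ -110 * a) : goodQ a b c d e = true := by
  apply chk_sound a b c d e (by omega) hI hJ
  have hbb : b * b ≤ 4 * (a * a) := by nlinarith
  have hbb0 : 0 ≤ b * b := mul_self_nonneg b
  have hc : -41 ≤ c ∧ c < 17 := by
    generalize b * b = t at *
    interval_cases a <;> omega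
  have hall := chkAll_true
  have e1 : (((-a - 1).toNat : ℕ) : ℤ) = -a - 1 := Int.toNat_of_nonneg (by omega)
  have e2 : (((b - 2 * a).toNat : ℕ) : ℤ) = b - 2 * a := Int.toNat_of_nonneg (by omega)
  have e3 : (((c + 41).toNat : ℕ) : ℤ) = c + 41 := Int.toNat_of_nonneg (by omega)
  have e4 : -(-a - 1 + 1) = a := by ring
  have e5 : b - 2 * a + 2 * a = b := by ring
  have e6 : c + 41 - 41 = c := by ring
  simp only [chkAll, forceZ_eq] at hall
  rw [List.all_eq_true] at hall
  have h1 := hall (-a - 1).toNat (by rw [List.mem_range]; omega)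
  rw [List.all_eq_true] at h1
  have h2 := h1 (b - 2 * a).toNat (by rw [List.mem_range]; omega)
  rw [List.all_eq_true] at h2
  have h3 := h2 (c + 41).toNat (by rw [List.mem_range]; omega)
  rw [e1, e2, e3, e4, e5, e6] at h3
  rw [Int.ble'_eq_true _ _ |>.mpr hH1, Int.ble'_eq_true _ _ |>.mpr hH2] at h3
  simpa using h3

theorem good_root (a b c d e : ℤ) (h : goodQ a b c d e = true) (m n s : ℤ)
    (hmn : ¬ (2 ∣ m ∧ 2 ∣ n)) (hs : qev a b c d e m n = s ^ 2) :
    ∃ m' n' : ℤ, (m' ≠ 0 ∨ n' ≠ 0) ∧ qev a b c d e m' n' = 0 := by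
  unfold goodQ at h
  rw [Bool.or_eq_true] at h
  rcases h with h | h
  · unfold hasRoot at h
    simp only [qevh_eq] at h
    rw [List.any_eq_true] at h
    obtain ⟨n', -, h⟩ := h
    rw [List.any_eq_true] at h
    obtain ⟨j, -, h⟩ := h
    simp only [Bool.and_eq_true, decide_eq_true_eq] at h
    exact ⟨_, _, Or.inr (by exact_mod_cast h.1), h.2⟩
  · exfalso
    unfold insol at h
    simp only [qevh_eq, forceZ_eq] at h
    rw [List.all_eq_true] at h
    have h1 := h (m % 16).toNat (by rw [List.mem_range]; omega)
    rw [List.all_eq_true] at h1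
    have h2 := h1 (n % 16).toNat (by rw [List.mem_range]; omega)
    have e1 : (((m % 16).toNat : ℕ) : ℤ) = m % 16 := Int.toNat_of_nonneg (by omega)
    have e2 : (((n % 16).toNat : ℕ) : ℤ) = n % 16 := Int.toNat_of_nonneg (by omega)
    have hq : qev a b c d e (m % 16) (n % 16) % 16 = s ^ 2 % 16 := by
      rw [← hs]
      have hm : m % 16 ≡ m [ZMOD 16] := Int.mod_modEq m 16
      have hn : n % 16 ≡ n [ZMOD 16] := Int.mod_modEq n 16
      unfold qev
      show _ ≡ _ [ZMOD 16]
      gcongr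
    rw [e1, e2] at h2
    simp only [hq, Bool.or_eq_true, Bool.and_eq_true, decide_eq_true_eq] at h2
    rcases h2 with h2 | h2
    · apply hmn; omega
    · have : s ^ 2 % 16 = (s % 16) ^ 2 % 16 := (Int.ModEq.pow 2 (Int.mod_modEq s 16)).symm
      rw [this] at h2
      have l1 : 0 ≤ s % 16 := by omega
      have l2 : s % 16 < 16 := by omega
      generalize s % 16 = u at *
      interval_cases u <;> simp at h2
theorem sl2_reduce (q0 q1 q2 : ℝ) (hq0 : 0 < q0) (hq : 4 * q0 * q2 - q1 ^ 2 = 4) :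
    ∃ A B C D : ℤ, A * D - B * C = 1 ∧
      3 * (q0 * A ^ 2 + q1 * A * C + q2 * C ^ 2) ^ 2 ≤ 4 := by
  let z : UpperHalfPlane := ⟨⟨q1 / (2 * q0), 1 / q0⟩, by positivity⟩
  obtain ⟨γ, hγ⟩ := ModularGroup.exists_smul_mem_fd z
  have him := ModularGroup.three_le_four_mul_im_sq_of_mem_fd hγ
  rw [ModularGroup.im_smul_eq_div_normSq, ModularGroup.denom_apply] at him
  have hdet := γ.det_coe
  rw [Matrix.det_fin_two] at hdet
  refine ⟨γ 1 1, γ 0 1, γ 1 0, γ 0 0, by linarith, ?_⟩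
  generalize γ 1 1 = A at *
  generalize γ 1 0 = C at *
  have hn : Complex.normSq ((C : ℂ) * z + A) * q0 = q0 * A ^ 2 + q1 * A * C + q2 * C ^ 2 := by
    have : q2 = (4 + q1 ^ 2) / (4 * q0) := by field_simp; linarith
    rw [this]
    simp [Complex.normSq_apply, z]
    field_simp
    ring
  rw [← hn]
  have hz : z.im = 1 / q0 := rfl
  rw [hz] at him
  set w := Complex.normSq ((C : ℂ) * z + A) with hw
  have hw0 : 0 ≤ w := Complex.normSq_nonneg _
  rcases hw0.eq_or_lt with h | h
  · rw [← h]; norm_num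
  · have : 1 / q0 / w = 1 / (w * q0) := by field_simp
    rw [this] at him
    have hp : 0 < w * q0 := by positivity
    rw [div_pow, one_pow, mul_one_div, le_div_iff₀ (by positivity)] at him
    exact him

theorem core_bounds (a b c : ℤ) (p0 p1 p2 q0 q1 q2 κ N : ℝ)
    (h0 : (a : ℝ) = p0 * q0) (h1 : (b : ℝ) = p0 * q1 + p1 * q0)
    (h2 : (c : ℝ) = p0 * q2 + p1 * q1 + p2 * q0)
    (hq : 4 * q0 * q2 - q1 ^ 2 = 4) (hp : 4 * p0 * p2 - p1 ^ 2 = -N)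
    (hk : p0 * q2 + p2 * q0 - p1 * q1 / 2 = κ)
    (hk1 : -(55 / 4) ≤ κ) (hk2 : κ ≤ -(27 / 2)) (hN0 : 0 ≤ N) (hN : N ≤ 22)
    (hq0 : 3 * q0 ^ 2 ≤ 4) (ha : a ≠ 0) :
    -18 ≤ a ∧ a < 0 ∧ 9 * a * a + 55 * a - 88 ≤ 8 * a * c - 3 * (b * b) ∧
      8 * a * c - 3 * (b * b) ≤ -110 * a := by
  have k1 : (p0 * q1 - p1 * q0) ^ 2 = 4 * κ * a - 4 * p0 ^ 2 + N * q0 ^ 2 := by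
    rw [h0, ← hk]
    linear_combination (-p0 ^ 2) * hq - q0 ^ 2 * hp
  have k2 : (8 * a * c - 3 * (b * b) : ℝ) = 12 * p0 ^ 2 - 3 * N * q0 ^ 2 - 4 * κ * a := by
    have : (8 * a * c - 3 * (b * b) : ℝ) = 8 * p0 ^ 2 - 2 * N * q0 ^ 2 - (p0 * q1 - p1 * q0) ^ 2 := by
      rw [h0, h1, h2]
      linear_combination 2 * p0 ^ 2 * hq + 2 * q0 ^ 2 * hp
    rw [this, k1]; ring
  have hs := sq_nonneg (p0 * q1 - p1 * q0)
  rw [k1] at hs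
  have hNq : N * q0 ^ 2 ≤ 88 / 3 := by nlinarith [sq_nonneg q0]
  have ha2 : (a : ℝ) ^ 2 = p0 ^ 2 * q0 ^ 2 := by rw [h0]; ring
  have hp0 : 3 * (a : ℝ) ^ 2 ≤ 4 * p0 ^ 2 := by rw [ha2]; nlinarith [sq_nonneg p0]
  have hneg : a < 0 := by
    by_contra hcon
    have : (1 : ℝ) ≤ a := by
      have : 1 ≤ a := by omega
      exact_mod_cast this
    nlinarith [sq_nonneg p0]
  have hnegR : (a : ℝ) ≤ -1 := by
    have : a ≤ -1 := by omega
    exact_mod_cast this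
  have hka : κ * a ≤ -(55 / 4) * a := by nlinarith
  refine ⟨?_, hneg, ?_, ?_⟩
  · by_contra hcon
    have : (a : ℝ) ≤ -19 := by
      have : a ≤ -19 := by omega
      exact_mod_cast this
    nlinarith
  · have : (9 * a * a + 55 * a - 88 : ℝ) ≤ 8 * a * c - 3 * (b * b) := by
      rw [k2]; nlinarith
    exact_mod_cast this
  · have : (8 * a * c - 3 * (b * b) : ℝ) ≤ -110 * a := by
      rw [k2]; nlinarith
    exact_mod_cast this

theorem quartic_root (g0 g1 g2 g3 g4 : ℤ) (p0 p1 p2 q0 q1 q2 κ N : ℝ) (δ : ℤ)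
    (h0 : (g0 : ℝ) = p0 * q0) (h1 : (g1 : ℝ) = p0 * q1 + p1 * q0)
    (h2 : (g2 : ℝ) = p0 * q2 + p1 * q1 + p2 * q0)
    (h3 : (g3 : ℝ) = p1 * q2 + p2 * q1) (h4 : (g4 : ℝ) = p2 * q2)
    (hq0 : 0 < q0)
    (hq : 4 * q0 * q2 - q1 ^ 2 = 4) (hp : 4 * p0 * p2 - p1 ^ 2 = -N)
    (hk : p0 * q2 + p2 * q0 - p1 * q1 / 2 = κ)
    (hk1 : -(55 / 4) ≤ κ) (hk2 : κ ≤ -(27 / 2)) (hN0 : 0 ≤ N) (hN : N ≤ 22)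
    (hI : 12 * g0 * g4 - 3 * g1 * g3 + g2 ^ 2 = 121)
    (hJ : 72 * g0 * g2 * g4 + 9 * g1 * g2 * g3 - 27 * g0 * g3 ^ 2 - 27 * g4 * g1 ^ 2 - 2 * g2 ^ 3
      = 10406) (hδ : g0 = δ ^ 2) :
    ∃ m n : ℤ, (m ≠ 0 ∨ n ≠ 0) ∧ qev g0 g1 g2 g3 g4 m n = 0 := by
  obtain ⟨A, B₀, C, D₀, hdet₀, hred⟩ := sl2_reduce q0 q1 q2 hq0 hq
  obtain ⟨a, ha⟩ : ∃ a, a = qev g0 g1 g2 g3 g4 A C := ⟨_, rfl⟩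
  by_cases ha0 : a = 0
  · refine ⟨A, C, ?_, by rw [← ha, ha0]⟩
    by_contra hcon
    push Not at hcon
    rw [hcon.1, hcon.2] at hdet₀
    simp at hdet₀
  -- translation
  obtain ⟨b₀, hb₀⟩ : ∃ b, b = 4 * g0 * A ^ 3 * B₀ + g1 * (3 * A ^ 2 * B₀ * C + A ^ 3 * D₀)
    + g2 * (2 * A * B₀ * C ^ 2 + 2 * A ^ 2 * C * D₀) + g3 * (B₀ * C ^ 3 + 3 * A * C ^ 2 * D₀)
    + 4 * g4 * C ^ 3 * D₀ := ⟨_, rfl⟩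
  obtain ⟨k, hk'⟩ : ∃ k, k = -((b₀ - 2 * a) / (4 * a)) := ⟨_, rfl⟩
  obtain ⟨B, hB⟩ : ∃ B, B = B₀ + k * A := ⟨_, rfl⟩
  obtain ⟨D, hD⟩ : ∃ D, D = D₀ + k * C := ⟨_, rfl⟩
  have hdet : A * D - B * C = 1 := by rw [hB, hD]; linear_combination hdet₀
  obtain ⟨b, hb⟩ : ∃ b, b = 4 * g0 * A ^ 3 * B + g1 * (3 * A ^ 2 * B * C + A ^ 3 * D)
    + g2 * (2 * A * B * C ^ 2 + 2 * A ^ 2 * C * D) + g3 * (B * C ^ 3 + 3 * A * C ^ 2 * D)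
    + 4 * g4 * C ^ 3 * D := ⟨_, rfl⟩
  obtain ⟨c, hc⟩ : ∃ c, c = 6 * g0 * A ^ 2 * B ^ 2 + g1 * (3 * A * B ^ 2 * C + 3 * A ^ 2 * B * D)
    + g2 * (B ^ 2 * C ^ 2 + 4 * A * B * C * D + A ^ 2 * D ^ 2)
    + g3 * (3 * B * C ^ 2 * D + 3 * A * C * D ^ 2) + 6 * g4 * C ^ 2 * D ^ 2 := ⟨_, rfl⟩
  obtain ⟨d, hd⟩ : ∃ d, d = 4 * g0 * A * B ^ 3 + g1 * (B ^ 3 * C + 3 * A * B ^ 2 * D)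
    + g2 * (2 * B ^ 2 * C * D + 2 * A * B * D ^ 2) + g3 * (3 * B * C * D ^ 2 + A * D ^ 3)
    + 4 * g4 * C * D ^ 3 := ⟨_, rfl⟩
  obtain ⟨e, he⟩ : ∃ e, e = qev g0 g1 g2 g3 g4 B D := ⟨_, rfl⟩
  have hev : ∀ m n : ℤ, qev a b c d e m n = qev g0 g1 g2 g3 g4 (A * m + B * n) (C * m + D * n) := by
    intro m n
    rw [ha, hb, hc, hd, he]
    unfold qev
    ring
  have hbb : b = b₀ + 4 * a * k := by
    rw [hb, hb₀, ha, hB, hD]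
    unfold qev
    ring
  have hdet4 : (A * D - B * C) ^ 4 = 1 := by rw [hdet]; norm_num
  have hdet6 : (A * D - B * C) ^ 6 = 1 := by rw [hdet]; norm_num
  have hI' : 12 * a * e - 3 * b * d + c ^ 2 = 121 := by
    have : 12 * a * e - 3 * b * d + c ^ 2
        = (A * D - B * C) ^ 4 * (12 * g0 * g4 - 3 * g1 * g3 + g2 ^ 2) := by
      rw [ha, hb, hc, hd, he]
      unfold qev
      ring
    rw [this, hI, hdet4]; norm_num
  have hJ' : 72 * a * c * e + 9 * b * c * d - 27 * a * d ^ 2 - 27 * e * b ^ 2 - 2 * c ^ 3 = 10406 := by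
    have : 72 * a * c * e + 9 * b * c * d - 27 * a * d ^ 2 - 27 * e * b ^ 2 - 2 * c ^ 3
        = (A * D - B * C) ^ 6 * (72 * g0 * g2 * g4 + 9 * g1 * g2 * g3 - 27 * g0 * g3 ^ 2
          - 27 * g4 * g1 ^ 2 - 2 * g2 ^ 3) := by
      rw [ha, hb, hc, hd, he]
      unfold qev
      ring
    rw [this, hJ, hdet6]; norm_num
  have hdetR : (A * D - B * C : ℝ) = 1 := by exact_mod_cast hdet
  have hdetR2 : (A * D - B * C : ℝ) ^ 2 = 1 := by rw [hdetR]; norm_num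
  obtain ⟨l1, l2, l3, l4⟩ := core_bounds a b c
    (p0 * A ^ 2 + p1 * A * C + p2 * C ^ 2)
    (2 * p0 * A * B + p1 * (A * D + B * C) + 2 * p2 * C * D)
    (p0 * B ^ 2 + p1 * B * D + p2 * D ^ 2)
    (q0 * A ^ 2 + q1 * A * C + q2 * C ^ 2)
    (2 * q0 * A * B + q1 * (A * D + B * C) + 2 * q2 * C * D)
    (q0 * B ^ 2 + q1 * B * D + q2 * D ^ 2) κ N
    (by rw [ha]; unfold qev; push_cast; rw [h0, h1, h2, h3, h4]; ring)
    (by rw [hb]; push_cast; rw [h0, h1, h2, h3, h4]; ring)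
    (by rw [hc]; push_cast; rw [h0, h1, h2, h3, h4]; ring)
    (by linear_combination (A * D - B * C : ℝ) ^ 2 * hq + 4 * hdetR2)
    (by linear_combination (A * D - B * C : ℝ) ^ 2 * hp - N * hdetR2)
    (by linear_combination (A * D - B * C : ℝ) ^ 2 * hk + κ * hdetR2)
    hk1 hk2 hN0 hN hred ha0
  have hm1 := Int.emod_nonneg (b₀ - 2 * a) (show 4 * a ≠ 0 by omega)
  have hm2 := Int.emod_lt_of_neg (b₀ - 2 * a) (show 4 * a < 0 by omega)
  have hm3 := Int.emod_add_mul_ediv (b₀ - 2 * a) (4 * a)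
  have hbm : b = 2 * a + (b₀ - 2 * a) % (4 * a) := by
    rw [hbb, hk']; linear_combination -hm3
  have hgood := fin_sound a b c d e l1 l2 (by omega) (by omega) hI' hJ' l3 l4
  obtain ⟨m', n', hne, hz⟩ := good_root a b c d e hgood D (-C) δ (by
      rintro ⟨⟨s, hs⟩, ⟨t, ht⟩⟩
      have : C = -(2 * t) := by linarith
      rw [hs, this] at hdet
      have : 2 * (A * s + B * t) = 1 := by linear_combination hdet
      omega) (by
      rw [hev]
      have e1 : A * D + B * -C = 1 := by linear_combination hdet
      have e2 : C * D + D * -C = 0 := by ring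
      rw [e1, e2, ← hδ]
      unfold qev
      ring)
  refine ⟨A * m' + B * n', C * m' + D * n', ?_, by rw [← hev, hz]⟩
  by_contra hcon
  push Not at hcon
  obtain ⟨y1, y2⟩ := hcon
  have z1 : m' = 0 := by linear_combination D * y1 - B * y2 - m' * hdet
  have z2 : n' = 0 := by linear_combination A * y2 - C * y1 - n' * hdet
  rcases hne with h | h
  · exact h z1
  · exact h z2

theorem real_data (x z : ℝ) (h : z ^ 2 = 4 * x ^ 3 + 5 * x ^ 2 - 8 * x - 28) :
    ∃ s τ ω : ℝ, 0 < τ ∧ s ^ 2 / 2 + ω - τ = 6 * x + 5 / 2 ∧ s * (τ + ω) = -4 * z ∧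
      s ^ 4 + 4 * (τ - ω) * s ^ 2 - 16 * τ * ω = -48 * x ^ 2 - 40 * x + 153 ∧
      -(55 / 4) ≤ s ^ 2 + τ - ω ∧ s ^ 2 + τ - ω ≤ -(27 / 2) ∧
      0 ≤ 4 * τ * ω ∧ 4 * τ * ω ≤ 22 := by
  obtain ⟨e, ⟨he1, he2⟩, he⟩ : (0 : ℝ) ∈ (fun e : ℝ => 4 * e ^ 3 + 5 * e ^ 2 - 8 * e - 28) ''
      Set.Icc (1.85 : ℝ) 1.86 := by
    apply intermediate_value_Icc (by norm_num) (by fun_prop)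
    constructor <;> norm_num
  simp only at he
  have hpos : 0 < 4 * x ^ 2 + (5 + 4 * e) * x + (4 * e ^ 2 + 5 * e - 8) := by
    nlinarith [sq_nonneg (8 * x + (5 + 4 * e)), sq_nonneg (e - 1.85)]
  have hfac : z ^ 2 = (x - e) * (4 * x ^ 2 + (5 + 4 * e) * x + (4 * e ^ 2 + 5 * e - 8)) := by
    linear_combination h + he
  obtain ⟨W, hW, hW2⟩ : ∃ W : ℝ, 0 < W ∧
      W ^ 2 = 4 * x ^ 2 + (5 + 4 * e) * x + (4 * e ^ 2 + 5 * e - 8) :=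
    ⟨Real.sqrt _, Real.sqrt_pos.mpr hpos, Real.sq_sqrt hpos.le⟩
  rw [← hW2] at hfac
  have hs2 : (-2 * z / W) ^ 2 = 4 * (x - e) := by
    field_simp
    linear_combination 4 * hfac
  have hsW : (-2 * z / W) * W = -2 * z := by field_simp
  generalize (-2 * z / W) = s at hs2 hsW
  have hprod : (W - 2 * x - (5 + 4 * e) / 4) * (W + 2 * x + (5 + 4 * e) / 4)
      = (48 * e ^ 2 + 40 * e - 153) / 16 := by
    linear_combination hW2
  have hNpos : (0:ℝ) < (48 * e ^ 2 + 40 * e - 153) / 16 := by nlinarith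
  refine ⟨s, W - 2 * x - (5 + 4 * e) / 4, W + 2 * x + (5 + 4 * e) / 4, ?_, ?_, ?_, ?_, ?_, ?_, ?_, ?_⟩
  · rw [← hprod] at hNpos
    rcases mul_pos_iff.mp hNpos with h | h
    · exact h.1
    · linarith [h.1, h.2]
  · linear_combination hs2 / 2
  · linear_combination 2 * hsW
  · linear_combination (s ^ 2 + 4 * (x - e) - 16 * x - 2 * (5 + 4 * e)) * hs2 - 16 * hprod
  · rw [hs2]; linarith
  · rw [hs2]; linarith
  · rw [mul_assoc, hprod]; linarith
  · rw [mul_assoc, hprod]; nlinarith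

theorem halving (a b d : ℤ) (hd : 0 < d) (hcop : IsCoprime a d)
    (hE : b ^ 2 + a * b * d = a ^ 3 + a ^ 2 * d ^ 2 - 2 * a * d ^ 4 - 7 * d ^ 6) :
    ∃ M Y : ℤ, (M ≠ 0 ∨ Y ≠ 0) ∧
      qev 1 (2 * d) (-(d ^ 2 + 6 * a)) (8 * b - 2 * a * d - 2 * d ^ 3)
        (9 * d ^ 4 - 2 * a * d ^ 2 - 3 * a ^ 2 + 4 * b * d) M Y = 0 := by
  obtain ⟨u, v, huv⟩ : IsCoprime a (d ^ 6) := hcop.pow_right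
  obtain ⟨r, hr⟩ : ∃ r, r = b * u := ⟨_, rfl⟩
  obtain ⟨k, hk⟩ : ∃ k, k = -b * v := ⟨_, rfl⟩
  have har : a * r = b + d ^ 6 * k := by rw [hr, hk]; linear_combination b * huv
  have c2 : IsCoprime (d ^ 2) (a ^ 2) := hcop.symm.pow
  have c3 : IsCoprime (d ^ 4) (a ^ 3) := hcop.symm.pow
  have c4 : IsCoprime (d ^ 6) (a ^ 4) := hcop.symm.pow
  obtain ⟨g2, hg2⟩ : d ^ 2 ∣ 6 * r ^ 2 + 6 * d * r - d ^ 2 - 6 * a := by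
    refine c2.dvd_of_dvd_mul_left ⟨-42 * d ^ 4 - 12 * a * d ^ 2 + 5 * a ^ 2
      + d ^ 4 * k * (6 * (2 * b + d ^ 6 * k) + 6 * d * a), ?_⟩
    have : a ^ 2 * (6 * r ^ 2 + 6 * d * r - d ^ 2 - 6 * a)
      = 6 * (a * r) ^ 2 + 6 * d * a * (a * r) - 6 * a ^ 3 - d ^ 2 * a ^ 2 := by ring
    rw [this, har]
    linear_combination 6 * hE
  obtain ⟨g3, hg3⟩ : d ^ 4 ∣ 4 * r ^ 3 + 6 * d * r ^ 2 - 2 * (d ^ 2 + 6 * a) * r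
      + (8 * b - 2 * a * d - 2 * d ^ 3) := by
    refine c3.dvd_of_dvd_mul_left ⟨-28 * b * d ^ 2 - 14 * a * d ^ 3 - 8 * a * b - 4 * a ^ 2 * d
      + d ^ 2 * k * (4 * (3 * b ^ 2 + 3 * b * (d ^ 6 * k) + (d ^ 6 * k) ^ 2)
        + 6 * d * a * (2 * b + d ^ 6 * k) - 2 * (d ^ 2 + 6 * a) * a ^ 2), ?_⟩
    have : a ^ 3 * (4 * r ^ 3 + 6 * d * r ^ 2 - 2 * (d ^ 2 + 6 * a) * r
      + (8 * b - 2 * a * d - 2 * d ^ 3)) = 4 * (a * r) ^ 3 + 6 * d * a * (a * r) ^ 2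
        - 2 * (d ^ 2 + 6 * a) * a ^ 2 * (a * r) + (8 * b - 2 * a * d - 2 * d ^ 3) * a ^ 3 := by ring
    rw [this, har]
    linear_combination (4 * b + 2 * a * d) * hE
  obtain ⟨g4, hg4⟩ : d ^ 6 ∣ r ^ 4 + 2 * d * r ^ 3 - (d ^ 2 + 6 * a) * r ^ 2
      + (8 * b - 2 * a * d - 2 * d ^ 3) * r + (9 * d ^ 4 - 2 * a * d ^ 2 - 3 * a ^ 2 + 4 * b * d) := by
    refine c4.dvd_of_dvd_mul_left ⟨49 * d ^ 6 + 28 * a * d ^ 4 + 4 * a ^ 2 * d ^ 2 - 28 * a ^ 3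
      + k * ((2 * b + d ^ 6 * k) * (b ^ 2 + (b + d ^ 6 * k) ^ 2)
        + 2 * d * a * (3 * b ^ 2 + 3 * b * (d ^ 6 * k) + (d ^ 6 * k) ^ 2)
        - (d ^ 2 + 6 * a) * a ^ 2 * (2 * b + d ^ 6 * k)
        + (8 * b - 2 * a * d - 2 * d ^ 3) * a ^ 3), ?_⟩
    have : a ^ 4 * (r ^ 4 + 2 * d * r ^ 3 - (d ^ 2 + 6 * a) * r ^ 2
      + (8 * b - 2 * a * d - 2 * d ^ 3) * r + (9 * d ^ 4 - 2 * a * d ^ 2 - 3 * a ^ 2 + 4 * b * d))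
      = (a * r) ^ 4 + 2 * d * a * (a * r) ^ 3 - (d ^ 2 + 6 * a) * a ^ 2 * (a * r) ^ 2
      + (8 * b - 2 * a * d - 2 * d ^ 3) * a ^ 3 * (a * r)
      + (9 * d ^ 4 - 2 * a * d ^ 2 - 3 * a ^ 2 + 4 * b * d) * a ^ 4 := by ring
    rw [this, har]
    linear_combination (-7 * d ^ 6 + b ^ 2 - 2 * a * d ^ 4 + a * b * d - a ^ 2 * d ^ 2 + 3 * a ^ 3) * hE
  have hd0 : d ≠ 0 := hd.ne'
  have hI : 12 * d ^ 2 * g4 - 3 * (4 * r + 2 * d) * g3 + g2 ^ 2 = 121 := by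
    apply mul_left_cancel₀ (pow_ne_zero 4 hd0)
    have : d ^ 4 * (12 * d ^ 2 * g4 - 3 * (4 * r + 2 * d) * g3 + g2 ^ 2)
      = 12 * (d ^ 6 * g4) - 3 * (4 * r + 2 * d) * (d ^ 4 * g3) + (d ^ 2 * g2) ^ 2 := by ring
    rw [this, ← hg2, ← hg3, ← hg4]
    ring
  have hJ : 72 * d ^ 2 * g2 * g4 + 9 * (4 * r + 2 * d) * g2 * g3 - 27 * d ^ 2 * g3 ^ 2
      - 27 * g4 * (4 * r + 2 * d) ^ 2 - 2 * g2 ^ 3 = 10406 := by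
    apply mul_left_cancel₀ (pow_ne_zero 6 hd0)
    have : d ^ 6 * (72 * d ^ 2 * g2 * g4 + 9 * (4 * r + 2 * d) * g2 * g3 - 27 * d ^ 2 * g3 ^ 2
      - 27 * g4 * (4 * r + 2 * d) ^ 2 - 2 * g2 ^ 3)
      = 72 * (d ^ 2 * g2) * (d ^ 6 * g4) + 9 * (4 * r + 2 * d) * (d ^ 2 * g2) * (d ^ 4 * g3)
        - 27 * (d ^ 4 * g3) ^ 2
      - 27 * (d ^ 6 * g4) * (4 * r + 2 * d) ^ 2 - 2 * (d ^ 2 * g2) ^ 3 := by ring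
    rw [this, ← hg2, ← hg3, ← hg4]
    linear_combination (-1728) * hE
  -- real factorisation
  have hdR : (0 : ℝ) < d := by exact_mod_cast hd
  obtain ⟨x, hx⟩ : ∃ x : ℝ, x = a / d ^ 2 := ⟨_, rfl⟩
  obtain ⟨z, hz⟩ : ∃ z : ℝ, z = (2 * b + a * d) / d ^ 3 := ⟨_, rfl⟩
  obtain ⟨l, hl⟩ : ∃ l : ℝ, l = 2 * r / d + 1 := ⟨_, rfl⟩
  have haR : (a : ℝ) = x * d ^ 2 := by rw [hx]; field_simp
  have hbR : (b : ℝ) = (z - x) * d ^ 3 / 2 := by rw [hx, hz]; field_simp; ring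
  have hrR : (r : ℝ) = (l - 1) * d / 2 := by rw [hl]; field_simp; ring
  have hER : (b : ℝ) ^ 2 + a * b * d = a ^ 3 + a ^ 2 * d ^ 2 - 2 * a * d ^ 4 - 7 * d ^ 6 := by
    exact_mod_cast hE
  have hF : z ^ 2 = 4 * x ^ 3 + 5 * x ^ 2 - 8 * x - 28 := by
    rw [haR, hbR] at hER
    apply mul_left_cancel₀ (pow_ne_zero 6 hdR.ne')
    linear_combination 4 * hER
  obtain ⟨s, τ, ω, hτ, e1, e2, e3, k1, k2, n1, n2⟩ := real_data x z hF
  obtain ⟨σ, hσ, hσ2⟩ : ∃ σ : ℝ, 0 < σ ∧ σ ^ 2 = τ :=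
    ⟨Real.sqrt τ, Real.sqrt_pos.mpr hτ, Real.sq_sqrt hτ.le⟩
  have hg2R : (g2 : ℝ) = 3 / 2 * l ^ 2 - 6 * x - 5 / 2 := by
    have : (6 * r ^ 2 + 6 * d * r - d ^ 2 - 6 * a : ℝ) = d ^ 2 * g2 := by exact_mod_cast hg2
    rw [haR, hrR] at this
    apply mul_left_cancel₀ (pow_ne_zero 2 hdR.ne')
    linear_combination -this
  have hg3R : (g3 : ℝ) = (l ^ 3 / 2 - l * (6 * x + 5 / 2) + 4 * z) / d := by
    have : (4 * r ^ 3 + 6 * d * r ^ 2 - 2 * (d ^ 2 + 6 * a) * r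
      + (8 * b - 2 * a * d - 2 * d ^ 3) : ℝ) = d ^ 4 * g3 := by exact_mod_cast hg3
    rw [haR, hrR, hbR] at this
    rw [eq_div_iff hdR.ne']
    apply mul_left_cancel₀ (pow_ne_zero 3 hdR.ne')
    linear_combination -this
  have hg4R : (g4 : ℝ) = (l ^ 4 - (24 * x + 10) * l ^ 2 + 32 * z * l
      + (-48 * x ^ 2 - 40 * x + 153)) / (16 * d ^ 2) := by
    have : (r ^ 4 + 2 * d * r ^ 3 - (d ^ 2 + 6 * a) * r ^ 2
      + (8 * b - 2 * a * d - 2 * d ^ 3) * r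
      + (9 * d ^ 4 - 2 * a * d ^ 2 - 3 * a ^ 2 + 4 * b * d) : ℝ) = d ^ 6 * g4 := by
      exact_mod_cast hg4
    rw [haR, hrR, hbR] at this
    rw [eq_div_iff (by positivity)]
    apply mul_left_cancel₀ (pow_ne_zero 4 hdR.ne')
    linear_combination -16 * this
  have hdne := hdR.ne'
  have hσne := hσ.ne'
  obtain ⟨m, n, hmn, hroot⟩ := quartic_root (d ^ 2) (4 * r + 2 * d) g2 g3 g4
    (d * σ) ((l - s) * σ) (((l - s) ^ 2 - 4 * ω) * σ / (4 * d))
    (d / σ) ((l + s) / σ) (((l + s) ^ 2 + 4 * τ) / (4 * d * σ)) (s ^ 2 + τ - ω) (4 * τ * ω) d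
    (by push_cast; field_simp)
    (by push_cast; rw [hrR]; field_simp; ring)
    (by rw [hg2R]; field_simp; linear_combination 8 * e1)
    (by rw [hg3R]; field_simp; linear_combination (8 * l) * e1 + 8 * e2)
    (by rw [hg4R]; field_simp; linear_combination 64 * l ^ 2 * e1 + 128 * l * e2 - 16 * e3)
    (by positivity)
    (by rw [← hσ2]; field_simp; ring)
    (by rw [← hσ2]; field_simp; ring)
    (by field_simp; ring)
    k1 k2 n1 n2 hI hJ rfl
  refine ⟨d ^ 2 * m + r * n, n, ?_, ?_⟩
  · by_contra hcon
    push Not at hcon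
    obtain ⟨y1, y2⟩ := hcon
    rw [y2] at y1
    have : m = 0 := by simpa [hd0] using y1
    rcases hmn with h | h
    · exact h this
    · exact h y2
  · have : qev 1 (2 * d) (-(d ^ 2 + 6 * a)) (8 * b - 2 * a * d - 2 * d ^ 3)
        (9 * d ^ 4 - 2 * a * d ^ 2 - 3 * a ^ 2 + 4 * b * d) (d ^ 2 * m + r * n) n
        = d ^ 6 * qev (d ^ 2) (4 * r + 2 * d) g2 g3 g4 m n := by
      unfold qev
      linear_combination d ^ 4 * m ^ 2 * n ^ 2 * hg2 + d ^ 2 * m * n ^ 3 * hg3 + n ^ 4 * hg4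
    rw [this, hroot, mul_zero]

theorem rat_triple (x z : ℚ) (h : z ^ 2 = 4 * x ^ 3 + 5 * x ^ 2 - 8 * x - 28) :
    ∃ a b d : ℤ, 0 < d ∧ IsCoprime a d ∧
      b ^ 2 + a * b * d = a ^ 3 + a ^ 2 * d ^ 2 - 2 * a * d ^ 4 - 7 * d ^ 6 ∧
      x * d ^ 2 = a := by
  obtain ⟨A, hA⟩ : ∃ A : ℤ, A = (4 * x).num := ⟨_, rfl⟩
  obtain ⟨D, hD⟩ : ∃ D : ℤ, D = ((4 * x).den : ℤ) := ⟨_, rfl⟩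
  have hDpos : 0 < D := by rw [hD]; exact_mod_cast (4 * x).den_pos
  have hcop : IsCoprime A D := by
    rw [hA, hD, Int.isCoprime_iff_gcd_eq_one]
    exact (4 * x).reduced
  have hDQ : (D : ℚ) ≠ 0 := by exact_mod_cast hDpos.ne'
  have hx : x = A / (4 * D) := by
    have : 4 * x = A / D := by
      rw [hA, hD]; push_cast; exact (Rat.num_div_den (4 * x)).symm
    field_simp at this ⊢
    linarith
  obtain ⟨N, hN⟩ : ∃ N : ℤ, N = A ^ 3 + 5 * A ^ 2 * D - 32 * A * D ^ 2 - 448 * D ^ 3 := ⟨_, rfl⟩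
  have hsq : IsSquare (((D * N : ℤ)) : ℚ) := by
    refine ⟨4 * z * D ^ 2, ?_⟩
    rw [hx] at h
    field_simp at h
    rw [hN]
    push_cast
    linear_combination (-1 : ℚ) * D * h
  rw [Rat.isSquare_intCast_iff] at hsq
  obtain ⟨c, hc⟩ := hsq
  have hcopN : IsCoprime D N := by
    have h1 : IsCoprime D (A ^ 3) := hcop.symm.pow_right
    have : N = A ^ 3 + D * (5 * A ^ 2 - 32 * A * D - 448 * D ^ 2) := by rw [hN]; ring
    rw [this]
    exact h1.add_mul_left_right _
  obtain ⟨δ₀, hδ₀⟩ := Int.sq_of_isCoprime hcopN (show D * N = c ^ 2 by rw [hc]; ring)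
  have hδ₁ : D = δ₀ ^ 2 := by
    rcases hδ₀ with h | h
    · exact h
    · nlinarith [sq_nonneg δ₀]
  obtain ⟨δ, hδ⟩ : ∃ δ, δ = |δ₀| := ⟨_, rfl⟩
  have hDδ : D = δ ^ 2 := by rw [hδ, sq_abs, hδ₁]
  have hδ0 : 0 < δ := by
    rw [hδ, abs_pos]
    rintro rfl
    simp at hδ₁; omega
  have hNsq : ∃ C : ℤ, N = C ^ 2 := by
    have : δ ^ 2 ∣ c ^ 2 := ⟨N, by rw [← hDδ, hc]; ring⟩
    rw [Int.pow_dvd_pow_iff (by norm_num)] at this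
    obtain ⟨C, hC⟩ := this
    refine ⟨C, mul_left_cancel₀ hDpos.ne' ?_⟩
    rw [hc, hC, hDδ]; ring
  obtain ⟨C, hC⟩ := hNsq
  rw [hN, hDδ] at hC
  have hcopδ : IsCoprime A δ := by
    rw [hDδ] at hcop
    exact (IsCoprime.pow_right_iff (by norm_num)).mp hcop
  have hδQ : (δ : ℚ) ≠ 0 := by exact_mod_cast hδ0.ne'
  have hDδQ : (D : ℚ) = δ ^ 2 := by exact_mod_cast hDδ
  rcases Int.even_or_odd' A with ⟨A', hA' | hA'⟩
  · -- A even
    have hδodd : ∃ t, δ = 2 * t + 1 := by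
      rcases Int.even_or_odd' δ with ⟨t, ht | ht⟩
      · exfalso
        obtain ⟨u, v, huv⟩ := hcopδ
        rw [hA', ht] at huv
        have : 2 * (u * A' + v * t) = 1 := by linear_combination huv
        omega
      · exact ⟨t, ht⟩
    obtain ⟨t, ht⟩ := hδodd
    have hCe : ∃ C', C = 2 * C' := by
      rcases Int.even_or_odd' C with ⟨s, hs | hs⟩
      · exact ⟨s, hs⟩
      · exfalso
        rw [hA', hs] at hC
        have : 2 * (4 * A' ^ 3 + 10 * A' ^ 2 * δ ^ 2 - 32 * A' * δ ^ 4 - 224 * δ ^ 6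
          - 2 * s ^ 2 - 2 * s) = 1 := by linear_combination hC
        omega
    obtain ⟨C', hC'⟩ := hCe
    have hC2 : C' ^ 2 = 2 * A' ^ 3 + 5 * A' ^ 2 * δ ^ 2 - 16 * A' * δ ^ 4 - 112 * δ ^ 6 := by
      rw [hA', hC'] at hC
      apply mul_left_cancel₀ (show (4 : ℤ) ≠ 0 by norm_num)
      linear_combination -hC
    rcases Int.even_or_odd' A' with ⟨a, ha | ha⟩
    · have hCe2 : ∃ c', C' = 2 * c' := by
        rcases Int.even_or_odd' C' with ⟨s, hs | hs⟩
        · exact ⟨s, hs⟩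
        · exfalso
          rw [ha, hs] at hC2
          have : 2 * (8 * a ^ 3 + 10 * a ^ 2 * δ ^ 2 - 16 * a * δ ^ 4 - 56 * δ ^ 6
            - 2 * s ^ 2 - 2 * s) = 1 := by linear_combination -hC2
          omega
      obtain ⟨c', hc'⟩ := hCe2
      have hC3 : c' ^ 2 = 4 * a ^ 3 + 5 * a ^ 2 * δ ^ 2 - 8 * a * δ ^ 4 - 28 * δ ^ 6 := by
        rw [ha, hc'] at hC2
        apply mul_left_cancel₀ (show (4 : ℤ) ≠ 0 by norm_num)
        linear_combination hC2
      have hpar : ∃ b, c' = 2 * b + a * δ := by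
        rcases Int.even_or_odd' (c' - a * δ) with ⟨b, hb | hb⟩
        · exact ⟨b, by linarith⟩
        · exfalso
          have hcb : c' = 2 * b + 1 + a * δ := by linarith
          rw [hcb] at hC3
          have : 2 * (2 * a ^ 3 + 2 * a ^ 2 * δ ^ 2 - 4 * a * δ ^ 4 - 14 * δ ^ 6
            - 2 * b ^ 2 - 2 * b - a * δ * (2 * b + 1)) = 1 := by linear_combination -hC3
          omega
      obtain ⟨b, hb⟩ := hpar
      refine ⟨a, b, δ, hδ0, ?_, ?_, ?_⟩
      · rw [hA', ha] at hcopδ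
        exact (hcopδ.of_mul_left_right).of_mul_left_right
      · rw [hb] at hC3
        apply mul_left_cancel₀ (show (4 : ℤ) ≠ 0 by norm_num)
        linear_combination hC3
      · rw [hx, hDδQ, hA', ha]
        push_cast
        field_simp
        ring
    · exfalso
      have key : ∀ s t C : ZMod 8, C ^ 2 ≠ 2 * (2 * s + 1) ^ 3 + 5 * (2 * s + 1) ^ 2 * (2 * t + 1) ^ 2 := by
        decide
      apply key a t C'
      have := congrArg (Int.cast : ℤ → ZMod 8) hC2
      rw [ha, ht] at this
      push_cast at this
      rw [this]
      have h16 : (16 : ZMod 8) = 0 := by decide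
      have h112 : (112 : ZMod 8) = 0 := by decide
      rw [h16, h112]
      ring
  · -- A odd
    refine ⟨A, C - A * δ, 2 * δ, by omega, ?_, ?_, ?_⟩
    · refine IsCoprime.mul_right ⟨1, -A', by rw [hA']; ring⟩ hcopδ
    · linear_combination -hC
    · rw [hx, hDδQ]
      push_cast
      field_simp
      try ring

theorem rat_halve (a b d : ℤ) (hd : 0 < d) (hcop : IsCoprime a d)
    (hE : b ^ 2 + a * b * d = a ^ 3 + a ^ 2 * d ^ 2 - 2 * a * d ^ 4 - 7 * d ^ 6) :
    ∃ x z : ℚ, z ^ 2 = 4 * x ^ 3 + 5 * x ^ 2 - 8 * x - 28 ∧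
      (a : ℚ) * (4 * x ^ 3 + 5 * x ^ 2 - 8 * x - 28) = d ^ 2 * (x ^ 4 + 4 * x ^ 2 + 56 * x + 39) := by
  obtain ⟨M, Y, hne, hroot⟩ := halving a b d hd hcop hE
  have hY : Y ≠ 0 := by
    rintro rfl
    have : M = 0 := by simpa [qev] using hroot
    simp [this] at hne
  have hdQ : (d : ℚ) ≠ 0 := by exact_mod_cast hd.ne'
  have hYQ : (Y : ℚ) ≠ 0 := by exact_mod_cast hY
  obtain ⟨X, hX⟩ : ∃ X : ℚ, X = a / d ^ 2 := ⟨_, rfl⟩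
  obtain ⟨Z, hZ⟩ : ∃ Z : ℚ, Z = (2 * b + a * d) / d ^ 3 := ⟨_, rfl⟩
  obtain ⟨l, hl⟩ : ∃ l : ℚ, l = 2 * M / (d * Y) + 1 := ⟨_, rfl⟩
  have haR : (a : ℚ) = X * d ^ 2 := by rw [hX]; field_simp
  have hbR : (b : ℚ) = (Z - X) * d ^ 3 / 2 := by rw [hX, hZ]; field_simp; ring
  have hMR : (M : ℚ) = (l - 1) * (d * Y) / 2 := by rw [hl]; field_simp; ring
  have hER : (b : ℚ) ^ 2 + a * b * d = a ^ 3 + a ^ 2 * d ^ 2 - 2 * a * d ^ 4 - 7 * d ^ 6 := by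
    exact_mod_cast hE
  have hF : Z ^ 2 = 4 * X ^ 3 + 5 * X ^ 2 - 8 * X - 28 := by
    rw [haR, hbR] at hER
    apply mul_left_cancel₀ (pow_ne_zero 6 hdQ)
    linear_combination 4 * hER
  have hG : l ^ 4 - (24 * X + 10) * l ^ 2 + 32 * Z * l + (-48 * X ^ 2 - 40 * X + 153) = 0 := by
    unfold qev at hroot
    have hr : ((1 * M ^ 4 + (2 * d) * M ^ 3 * Y + (-(d ^ 2 + 6 * a)) * M ^ 2 * Y ^ 2
      + (8 * b - 2 * a * d - 2 * d ^ 3) * M * Y ^ 3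
      + (9 * d ^ 4 - 2 * a * d ^ 2 - 3 * a ^ 2 + 4 * b * d) * Y ^ 4 : ℤ) : ℚ) = 0 := by
      exact_mod_cast hroot
    push_cast at hr
    rw [haR, hbR, hMR] at hr
    apply mul_left_cancel₀ (mul_ne_zero (pow_ne_zero 4 hdQ) (pow_ne_zero 4 hYQ))
    linear_combination 16 * hr
  obtain ⟨x, hx⟩ : ∃ x : ℚ, x = (l ^ 2 - 4 * X - 5) / 8 := ⟨_, rfl⟩
  obtain ⟨z, hz⟩ : ∃ z : ℚ, z = Z + l * (x - X) := ⟨_, rfl⟩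
  have h1 : z ^ 2 = 4 * x ^ 3 + 5 * x ^ 2 - 8 * x - 28 := by
    rw [hz, hx]
    linear_combination hF + ((l ^ 2 - 4 * X - 5) / 8 - X) / 16 * hG
  have h2 : 12 * x ^ 2 + 10 * x - 8 = 2 * l * z := by
    rw [hz, hx]
    linear_combination (-1 / 16) * hG
  have h3 : X = l ^ 2 / 4 - 2 * x - 5 / 4 := by rw [hx]; ring
  refine ⟨x, z, h1, ?_⟩
  rw [haR]
  have h4 : X * (4 * x ^ 3 + 5 * x ^ 2 - 8 * x - 28) = x ^ 4 + 4 * x ^ 2 + 56 * x + 39 := by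
    rw [← h1, h3]
    linear_combination (-(12 * x ^ 2 + 10 * x - 8 + 2 * l * z) / 16) * h2 + (- 2 * x - 5 / 4) * h1
  linear_combination (d : ℚ) ^ 2 * h4

theorem pow_dvd_den (k : ℕ) : ∀ a b d : ℤ, 0 < d → IsCoprime a d →
    b ^ 2 + a * b * d = a ^ 3 + a ^ 2 * d ^ 2 - 2 * a * d ^ 4 - 7 * d ^ 6 → (2 : ℤ) ^ k ∣ d := by
  induction k with
  | zero => intro a b d _ _ _; simp
  | succ k ih =>
    intro a b d hd hcop hE
    obtain ⟨x, z, hxz, hrel⟩ := rat_halve a b d hd hcop hE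
    obtain ⟨a', b', d', hd', hcop', hE', hx'⟩ := rat_triple x z hxz
    have hdvd := ih a' b' d' hd' hcop' hE'
    have hdQ : (d' : ℚ) ≠ 0 := by exact_mod_cast hd'.ne'
    have hxe : x = a' / d' ^ 2 := by rw [← hx']; field_simp
    have hrel2 : a * (d' ^ 2 * (2 * b' + a' * d') ^ 2)
        = d ^ 2 * (a' ^ 4 + 4 * a' ^ 2 * d' ^ 4 + 56 * a' * d' ^ 6 + 39 * d' ^ 8) := by
      have e1 : (a : ℚ) * (d' ^ 2 * (4 * a' ^ 3 + 5 * a' ^ 2 * d' ^ 2 - 8 * a' * d' ^ 4 - 28 * d' ^ 6))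
          = d ^ 2 * (a' ^ 4 + 4 * a' ^ 2 * d' ^ 4 + 56 * a' * d' ^ 6 + 39 * d' ^ 8) := by
        rw [← hx']
        linear_combination (d' : ℚ) ^ 8 * hrel
      have e2 : a * (d' ^ 2 * (4 * a' ^ 3 + 5 * a' ^ 2 * d' ^ 2 - 8 * a' * d' ^ 4 - 28 * d' ^ 6))
          = d ^ 2 * (a' ^ 4 + 4 * a' ^ 2 * d' ^ 4 + 56 * a' * d' ^ 6 + 39 * d' ^ 8) := by
        exact_mod_cast e1
      rw [← e2]
      linear_combination 4 * a * d' ^ 2 * hE'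
    -- parity
    have hpar : (∃ s, a' * d' = 2 * s) ∧ ∃ s, a' ^ 4 + 39 * d' ^ 8 = 2 * s + 1 := by
      rcases Int.even_or_odd' a' with ⟨s, hs | hs⟩ <;> rcases Int.even_or_odd' d' with ⟨t, ht | ht⟩
      · exfalso
        obtain ⟨u, v, huv⟩ := hcop'
        rw [hs, ht] at huv
        have : 2 * (u * s + v * t) = 1 := by linear_combination huv
        omega
      · refine ⟨⟨s * d', by rw [hs]; ring⟩, ?_⟩
        have h1 : Odd (a' ^ 4 + 39 * d' ^ 8) := by
          have : Odd d' := ⟨t, ht⟩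
          have h2 : Even (a' ^ 4) := by rw [hs]; exact ⟨8 * s ^ 4, by ring⟩
          exact h2.add_odd (Odd.mul (by decide) this.pow)
        exact h1
      · refine ⟨⟨a' * t, by rw [ht]; ring⟩, ?_⟩
        have h1 : Odd (a' ^ 4 + 39 * d' ^ 8) := by
          have : Odd a' := ⟨s, hs⟩
          have h2 : Even (39 * d' ^ 8) := by rw [ht]; exact ⟨39 * 128 * t ^ 8, by ring⟩
          exact this.pow.add_even h2
        exact h1
      · exfalso
        have key : ∀ b : ZMod 2, b ^ 2 + 1 * b * 1 ≠ 1 ^ 3 + 1 ^ 2 * 1 ^ 2 - 2 * 1 * 1 ^ 4 - 7 * 1 ^ 6 := by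
          decide
        apply key b'
        have := congrArg (Int.cast : ℤ → ZMod 2) hE'
        rw [hs, ht] at this
        push_cast at this
        have h20 : (2 : ZMod 2) = 0 := by decide
        simp only [h20, zero_mul, zero_add] at this ⊢
        exact this
    obtain ⟨⟨s, hs⟩, ⟨t, ht⟩⟩ := hpar
    obtain ⟨f, hf⟩ := hdvd
    have hcop2 : IsCoprime (((2 : ℤ) ^ (k + 1)) ^ 2)
        (a' ^ 4 + 4 * a' ^ 2 * d' ^ 4 + 56 * a' * d' ^ 6 + 39 * d' ^ 8) := by
      rw [← pow_mul]
      apply IsCoprime.pow_left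
      refine ⟨-(t + 2 * a' ^ 2 * d' ^ 4 + 28 * a' * d' ^ 6), 1, ?_⟩
      linear_combination ht
    have hdiv : ((2 : ℤ) ^ (k + 1)) ^ 2 ∣ d ^ 2 *
        (a' ^ 4 + 4 * a' ^ 2 * d' ^ 4 + 56 * a' * d' ^ 6 + 39 * d' ^ 8) := by
      rw [← hrel2, hs]
      refine ⟨a * f ^ 2 * (b' + s) ^ 2, ?_⟩
      rw [hf, pow_succ]
      ring
    have := hcop2.dvd_of_dvd_mul_right hdiv
    exact (Int.pow_dvd_pow_iff (by norm_num)).mp this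

theorem no_rat_point (x z : ℚ) : z ^ 2 ≠ 4 * x ^ 3 + 5 * x ^ 2 - 8 * x - 28 := by
  intro h
  obtain ⟨a, b, d, hd, hcop, hE, -⟩ := rat_triple x z h
  have h1 := pow_dvd_den d.toNat a b d hd hcop hE
  have h2 := Int.le_of_dvd hd h1
  have h3 : (d.toNat : ℤ) < 2 ^ d.toNat := by exact_mod_cast Nat.lt_two_pow_self
  rw [Int.toNat_of_nonneg hd.le] at h3
  omega



/-- Let `K` be a quadratic field (a field with a `ℚ`-algebra structure which is
2-dimensional over `ℚ`). If `u, v, w ∈ K` satisfy `v² + v = u³ - u² - 7u + 10`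
and `w² = -(4u³ + 7u² - 6u + 19)` (so `(u,v,w)` is a quadratic point on the
affine model of `X_ns(11)`), then `u` is rational. -/
theorem quadratic_points_Xns11_x_rational
    (K : Type*) [Field K] [Algebra ℚ K] (hK : Module.finrank ℚ K = 2)
    (u v w : K)
    (h1 : v ^ 2 + v = u ^ 3 - u ^ 2 - 7 * u + 10)
    (h2 : w ^ 2 = -(4 * u ^ 3 + 7 * u ^ 2 - 6 * u + 19)) :
    u ∈ Set.range (algebraMap ℚ K) := by
  by_contra hu
  have : FiniteDimensional ℚ K := Module.finite_of_finrank_pos (by rw [hK]; norm_num)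
  have hli : LinearIndependent ℚ ![(1 : K), u] := by
    rw [LinearIndependent.pair_iff]
    intro s t hst
    have ht : t = 0 := by
      by_contra ht
      apply hu
      refine ⟨-s / t, ?_⟩
      have htK : (algebraMap ℚ K t) ≠ 0 := (map_ne_zero (algebraMap ℚ K)).mpr ht
      rw [map_div₀, map_neg, div_eq_iff htK]
      rw [Algebra.smul_def, Algebra.smul_def] at hst
      linear_combination -hst
    subst ht
    refine ⟨?_, rfl⟩
    simpa using hst
  have hspan : ∀ y : K, ∃ s t : ℚ, y = algebraMap ℚ K s + algebraMap ℚ K t * u := by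
    intro y
    have htop : Submodule.span ℚ (Set.range ![(1 : K), u]) = ⊤ :=
      hli.span_eq_top_of_card_eq_finrank' (by simp [hK])
    have hy : y ∈ Submodule.span ℚ (Set.range ![(1 : K), u]) := by rw [htop]; trivial
    rw [Matrix.range_cons, Matrix.range_cons, Matrix.range_empty, Set.union_empty,
      Set.singleton_union, Submodule.mem_span_pair] at hy
    obtain ⟨s, t, h⟩ := hy
    refine ⟨s, t, ?_⟩
    rw [← h, Algebra.smul_def, Algebra.smul_def, mul_one]
  have hzero : ∀ s t : ℚ, algebraMap ℚ K s + algebraMap ℚ K t * u = 0 → s = 0 ∧ t = 0 := by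
    intro s t h
    rw [LinearIndependent.pair_iff] at hli
    apply hli s t
    rw [Algebra.smul_def, Algebra.smul_def, mul_one, h]
  obtain ⟨α, β, hw⟩ := hspan w
  obtain ⟨P, Q, hu2⟩ := hspan (u ^ 2)
  obtain ⟨r0, r1⟩ := hzero (α ^ 2 + β ^ 2 * P + (4 * P * Q + 7 * P + 19))
    (2 * α * β + β ^ 2 * Q + (4 * (P + Q ^ 2) + 7 * Q - 6)) (by
      simp only [map_add, map_mul, map_pow, map_sub, map_ofNat]
      rw [hw] at h2
      linear_combination h2 - (algebraMap ℚ K β ^ 2 + 4 * u + 4 * algebraMap ℚ K Q + 7) * hu2)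
  apply no_rat_point (-(-(7 + β ^ 2) / 4 - Q) - 1) (α + β * (-(7 + β ^ 2) / 4 - Q))
  linear_combination r0 + (-(7 + β ^ 2) / 4 - Q) * r1
end

section
/- The elliptic curve E : t^2 = -(4x^3 + 7x^2 - 6x + 19) has no affine rational points: there do not exist u, w ∈ ℚ with w^2 = -(4u^3 + 7u^2 - 6u + 19). (Equivalently, the Mordell–Weil group E(ℚ) consists only of the point at infinity.) -/
/-- Three rationals can be put over a common denominator, primitively at `2`. -/
lemma exists_primitive_aux (N : ℕ) : ∀ n R0 R1 R2 : ℤ, n ≠ 0 → n.natAbs ≤ N →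
    ∃ m S0 S1 S2 : ℤ, m ≠ 0 ∧ ¬ (2 ∣ S0 ∧ 2 ∣ S1 ∧ 2 ∣ S2 ∧ 2 ∣ m) ∧
      R0 * m = S0 * n ∧ R1 * m = S1 * n ∧ R2 * m = S2 * n := by
  induction N with
  | zero => intro n R0 R1 R2 hn h; omega
  | succ N ih =>
    intro n R0 R1 R2 hn h
    by_cases hd : 2 ∣ R0 ∧ 2 ∣ R1 ∧ 2 ∣ R2 ∧ 2 ∣ n
    · obtain ⟨⟨a, rfl⟩, ⟨b, rfl⟩, ⟨c, rfl⟩, ⟨d, rfl⟩⟩ := hd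
      obtain ⟨m, S0, S1, S2, hm, hp, h0, h1, h2⟩ := ih d a b c (by omega) (by omega)
      exact ⟨m, S0, S1, S2, hm, hp, by linear_combination 2 * h0,
        by linear_combination 2 * h1, by linear_combination 2 * h2⟩
    · exact ⟨n, R0, R1, R2, hn, hd, rfl, rfl, rfl⟩

lemma exists_primitive (r0 r1 r2 : ℚ) :
    ∃ m S0 S1 S2 : ℤ, m ≠ 0 ∧ ¬ (2 ∣ S0 ∧ 2 ∣ S1 ∧ 2 ∣ S2 ∧ 2 ∣ m) ∧
      r0 = S0 / m ∧ r1 = S1 / m ∧ r2 = S2 / m := by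
  have hn : ((r0.den * r1.den * r2.den : ℕ) : ℤ) ≠ 0 := by
    have := r0.den_nz; have := r1.den_nz; have := r2.den_nz
    positivity
  obtain ⟨m, S0, S1, S2, hm, hp, h0, h1, h2⟩ := exists_primitive_aux _
    ((r0.den * r1.den * r2.den : ℕ) : ℤ) (r0.num * r1.den * r2.den) (r1.num * r0.den * r2.den)
    (r2.num * r0.den * r1.den) hn le_rfl
  refine ⟨m, S0, S1, S2, hm, hp, ?_, ?_, ?_⟩
  all_goals
    have hm' : (m : ℚ) ≠ 0 := by exact_mod_cast hm
    have d0 : (r0.den : ℚ) ≠ 0 := by exact_mod_cast r0.den_nz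
    have d1 : (r1.den : ℚ) ≠ 0 := by exact_mod_cast r1.den_nz
    have d2 : (r2.den : ℚ) ≠ 0 := by exact_mod_cast r2.den_nz
    rw [eq_div_iff hm']
  · have := congrArg (Int.cast : ℤ → ℚ) h0
    push_cast at this
    rw [← Rat.num_div_den r0]
    field_simp
    apply mul_right_cancel₀ (mul_ne_zero d1 d2)
    linear_combination this
  · have := congrArg (Int.cast : ℤ → ℚ) h1
    push_cast at this
    rw [← Rat.num_div_den r1]
    field_simp
    apply mul_right_cancel₀ (mul_ne_zero d0 d2)
    linear_combination this
  · have := congrArg (Int.cast : ℤ → ℚ) h2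
    push_cast at this
    rw [← Rat.num_div_den r2]
    field_simp
    apply mul_right_cancel₀ (mul_ne_zero d0 d1)
    linear_combination this

lemma even_of_zmod4 {a : ℤ} (h : (2 : ZMod 4) * (a : ZMod 4) = 0) : 2 ∣ a := by
  have : ((2 * a : ℤ) : ZMod 4) = 0 := by push_cast; exact h
  rw [ZMod.intCast_zmod_eq_zero_iff_dvd] at this
  omega

lemma even_of_zmod8 {a : ℤ} (h : (4 : ZMod 8) * (a : ZMod 8) = 0) : 2 ∣ a := by
  have : ((4 * a : ℤ) : ZMod 8) = 0 := by push_cast; exact h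
  rw [ZMod.intCast_zmod_eq_zero_iff_dvd] at this
  omega

lemma dec_eps : ∀ a b c n : ZMod 8,
    -a^2 - 14*b^2 + 122*c^2 + 26*a*b - 28*a*c - 80*b*c = -2*n^2 →
    -3*a^2 + 11*b^2 - 15*c^2 + 4*a*b + 22*a*c - 50*b*c = -3*n^2 →
    4*a = 0 ∧ 4*b = 0 ∧ 4*c = 0 ∧ 4*n = 0 := by
  decide +kernel

lemma dec_one : ∀ a b c n : ZMod 8,
    a*b + 3*c^2 - 4*b*c + n^2 = 0 →
    b^2 - 3*c^2 + 2*a*c - 2*b*c = -3*n^2 → 4*a = 0 →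
    4*b = 0 ∧ 4*c = 0 ∧ 4*n = 0 := by
  decide +kernel

lemma dec_gp : ∀ a b c n : ZMod 4,
    -5*a^2 + 26*b^2 - 80*c^2 - 4*a*b + 52*a*c - 56*b*c = -2*n^2 →
    a^2 + 4*b^2 - 50*c^2 - 12*a*b + 8*a*c + 44*b*c = -3*n^2 →
    2*a = 0 ∧ 2*b = 0 ∧ 2*c = 0 ∧ 2*n = 0 := by
  decide +kernel

lemma dec_epsgp : ∀ a b c n : ZMod 4,
    -81*a^2 + 294*b^2 - 384*c^2 + 112*a*b + 588*a*c - 1360*b*c = -2*n^2 →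
    -5*a^2 + 132*b^2 - 842*c^2 - 152*a*b + 264*a*c + 324*b*c = -3*n^2 →
    2*a = 0 ∧ 2*b = 0 ∧ 2*c = 0 ∧ 2*n = 0 := by
  decide +kernel

lemma dec_sq : ∀ a b c n : ZMod 4,
    a^2 + 4*b*c - 2*c^2 = n^2 →
    2*a*b + 6*c^2 - 8*b*c = -n^2 →
    b^2 - 3*c^2 + 2*a*c - 2*b*c = -3*n^2 →
    2*a = 0 ∧ 2*b = 0 ∧ 2*c = 0 ∧ 2*n = 0 := by
  decide +kernel

/-- No point in the class of `ε`. -/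
lemma no_eps (a b c : ℚ)
    (h1 : -a^2 - 14*b^2 + 122*c^2 + 26*a*b - 28*a*c - 80*b*c = -2)
    (h2 : -3*a^2 + 11*b^2 - 15*c^2 + 4*a*b + 22*a*c - 50*b*c = -3) : False := by
  obtain ⟨n, A, B, C, hn, hp, rfl, rfl, rfl⟩ := exists_primitive a b c
  have hn' : (n : ℚ) ≠ 0 := by exact_mod_cast hn
  field_simp at h1 h2
  have e1 : -A^2 - 14*B^2 + 122*C^2 + 26*A*B - 28*A*C - 80*B*C = -2*n^2 := by
    have : (-A^2 - 14*B^2 + 122*C^2 + 26*A*B - 28*A*C - 80*B*C : ℚ) = -2*n^2 := by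
      linear_combination h1
    exact_mod_cast this
  have e2 : -3*A^2 + 11*B^2 - 15*C^2 + 4*A*B + 22*A*C - 50*B*C = -3*n^2 := by
    have : (-3*A^2 + 11*B^2 - 15*C^2 + 4*A*B + 22*A*C - 50*B*C : ℚ) = -3*n^2 := by
      linear_combination h2
    exact_mod_cast this
  have f1 := congrArg (Int.cast : ℤ → ZMod 8) e1
  have f2 := congrArg (Int.cast : ℤ → ZMod 8) e2
  push_cast at f1 f2
  obtain ⟨k1, k2, k3, k4⟩ := dec_eps _ _ _ _ f1 f2
  exact hp ⟨even_of_zmod8 k1, even_of_zmod8 k2, even_of_zmod8 k3, even_of_zmod8 k4⟩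

lemma no_gp (a b c : ℚ)
    (h1 : -5*a^2 + 26*b^2 - 80*c^2 - 4*a*b + 52*a*c - 56*b*c = -2)
    (h2 : a^2 + 4*b^2 - 50*c^2 - 12*a*b + 8*a*c + 44*b*c = -3) : False := by
  obtain ⟨n, A, B, C, hn, hp, rfl, rfl, rfl⟩ := exists_primitive a b c
  have hn' : (n : ℚ) ≠ 0 := by exact_mod_cast hn
  field_simp at h1 h2
  have e1 : -5*A^2 + 26*B^2 - 80*C^2 - 4*A*B + 52*A*C - 56*B*C = -2*n^2 := by
    have : (-5*A^2 + 26*B^2 - 80*C^2 - 4*A*B + 52*A*C - 56*B*C : ℚ) = -2*n^2 := by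
      linear_combination h1
    exact_mod_cast this
  have e2 : A^2 + 4*B^2 - 50*C^2 - 12*A*B + 8*A*C + 44*B*C = -3*n^2 := by
    have : (A^2 + 4*B^2 - 50*C^2 - 12*A*B + 8*A*C + 44*B*C : ℚ) = -3*n^2 := by
      linear_combination h2
    exact_mod_cast this
  have f1 := congrArg (Int.cast : ℤ → ZMod 4) e1
  have f2 := congrArg (Int.cast : ℤ → ZMod 4) e2
  push_cast at f1 f2
  obtain ⟨k1, k2, k3, k4⟩ := dec_gp _ _ _ _ f1 f2
  exact hp ⟨even_of_zmod4 k1, even_of_zmod4 k2, even_of_zmod4 k3, even_of_zmod4 k4⟩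

lemma no_epsgp (a b c : ℚ)
    (h1 : -81*a^2 + 294*b^2 - 384*c^2 + 112*a*b + 588*a*c - 1360*b*c = -2)
    (h2 : -5*a^2 + 132*b^2 - 842*c^2 - 152*a*b + 264*a*c + 324*b*c = -3) : False := by
  obtain ⟨n, A, B, C, hn, hp, rfl, rfl, rfl⟩ := exists_primitive a b c
  have hn' : (n : ℚ) ≠ 0 := by exact_mod_cast hn
  field_simp at h1 h2
  have e1 : -81*A^2 + 294*B^2 - 384*C^2 + 112*A*B + 588*A*C - 1360*B*C = -2*n^2 := by
    have : (-81*A^2 + 294*B^2 - 384*C^2 + 112*A*B + 588*A*C - 1360*B*C : ℚ) = -2*n^2 := by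
      linear_combination h1
    exact_mod_cast this
  have e2 : -5*A^2 + 132*B^2 - 842*C^2 - 152*A*B + 264*A*C + 324*B*C = -3*n^2 := by
    have : (-5*A^2 + 132*B^2 - 842*C^2 - 152*A*B + 264*A*C + 324*B*C : ℚ) = -3*n^2 := by
      linear_combination h2
    exact_mod_cast this
  have f1 := congrArg (Int.cast : ℤ → ZMod 4) e1
  have f2 := congrArg (Int.cast : ℤ → ZMod 4) e2
  push_cast at f1 f2
  obtain ⟨k1, k2, k3, k4⟩ := dec_epsgp _ _ _ _ f1 f2
  exact hp ⟨even_of_zmod4 k1, even_of_zmod4 k2, even_of_zmod4 k3, even_of_zmod4 k4⟩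

/-- `ε` is not a square. -/
lemma no_sq (a b c : ℚ)
    (h0 : a^2 + 4*b*c - 2*c^2 = 1)
    (h1 : 2*a*b + 6*c^2 - 8*b*c = -1)
    (h2 : b^2 - 3*c^2 + 2*a*c - 2*b*c = -3) : False := by
  obtain ⟨n, A, B, C, hn, hp, rfl, rfl, rfl⟩ := exists_primitive a b c
  have hn' : (n : ℚ) ≠ 0 := by exact_mod_cast hn
  field_simp at h0 h1 h2
  have e0 : A^2 + 4*B*C - 2*C^2 = n^2 := by
    have : (A^2 + 4*B*C - 2*C^2 : ℚ) = n^2 := by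
      linear_combination h0
    exact_mod_cast this
  have e1 : 2*A*B + 6*C^2 - 8*B*C = -n^2 := by
    have : (2*A*B + 6*C^2 - 8*B*C : ℚ) = -n^2 := by
      linear_combination h1
    exact_mod_cast this
  have e2 : B^2 - 3*C^2 + 2*A*C - 2*B*C = -3*n^2 := by
    have : (B^2 - 3*C^2 + 2*A*C - 2*B*C : ℚ) = -3*n^2 := by
      linear_combination h2
    exact_mod_cast this
  have f0 := congrArg (Int.cast : ℤ → ZMod 4) e0
  have f1 := congrArg (Int.cast : ℤ → ZMod 4) e1
  have f2 := congrArg (Int.cast : ℤ → ZMod 4) e2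
  push_cast at f0 f1 f2
  obtain ⟨k1, k2, k3, k4⟩ := dec_sq _ _ _ _ f0 f1 f2
  exact hp ⟨even_of_zmod4 k1, even_of_zmod4 k2, even_of_zmod4 k3, even_of_zmod4 k4⟩

/-- From `Y = N / M` with `N` odd and `k ∣ M` a power of two, `Y` has odd numerator. -/
lemma num_odd_of_eq (Y : ℚ) (N M : ℤ) (hN : ¬ 2 ∣ N) (h : Y * M = N) : ¬ 2 ∣ Y.num := by
  intro hd
  have h' : Y.num * M = N * Y.den := by
    have d : (Y.den : ℚ) ≠ 0 := by exact_mod_cast Y.den_nz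
    rw [← Rat.num_div_den Y] at h
    field_simp at h
    have h3 : (Y.num * M : ℚ) = N * Y.den := by linear_combination h
    exact_mod_cast h3
  have h2 : (2 : ℤ) ∣ N * Y.den := h' ▸ Dvd.dvd.mul_right hd M
  have h3 : (2 : ℤ) ∣ Y.den := by
    rcases Int.prime_two.dvd_or_dvd h2 with h | h
    · exact absurd h hN
    · exact h
  have hc := Y.reduced
  have : 2 ∣ Nat.gcd Y.num.natAbs Y.den := Nat.dvd_gcd (by omega) (by omega)
  rw [hc] at this
  omega

/-- In the trivial class, `Y` has odd numerator. -/
lemma one_odd (Y a b c : ℚ)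
    (h0 : a^2 + 4*b*c - 2*c^2 = Y - 4)
    (h1 : 2*a*b + 6*c^2 - 8*b*c = -2)
    (h2 : b^2 - 3*c^2 + 2*a*c - 2*b*c = -3) : ¬ 2 ∣ Y.num := by
  obtain ⟨n, A, B, C, hn, hp, rfl, rfl, rfl⟩ := exists_primitive a b c
  have hn' : (n : ℚ) ≠ 0 := by exact_mod_cast hn
  apply num_odd_of_eq Y (A^2 + 4*B*C - 2*C^2 + 4*n^2) (n^2)
  · intro hd
    have hA : 2 ∣ A := by
      have : (2 : ℤ) ∣ A ^ 2 := by
        have : A^2 = (A^2 + 4*B*C - 2*C^2 + 4*n^2) - 2 * (2*B*C - C^2 + 2*n^2) := by ring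
        rw [this]
        exact dvd_sub hd (dvd_mul_right _ _)
      exact Int.prime_two.dvd_of_dvd_pow this
    field_simp at h1 h2
    have e1 : A*B + 3*C^2 - 4*B*C + n^2 = 0 := by
      have : (A*B + 3*C^2 - 4*B*C + n^2 : ℚ) = 0 := by
        linear_combination h1 / 2
      exact_mod_cast this
    have e2 : B^2 - 3*C^2 + 2*A*C - 2*B*C = -3*n^2 := by
      have : (B^2 - 3*C^2 + 2*A*C - 2*B*C : ℚ) = -3*n^2 := by
        linear_combination h2
      exact_mod_cast this
    have f1 := congrArg (Int.cast : ℤ → ZMod 8) e1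
    have f2 := congrArg (Int.cast : ℤ → ZMod 8) e2
    push_cast at f1 f2
    have f3 : (4 : ZMod 8) * (A : ZMod 8) = 0 := by
      have : ((4 * A : ℤ) : ZMod 8) = 0 := by
        rw [ZMod.intCast_zmod_eq_zero_iff_dvd]; omega
      push_cast at this; exact this
    obtain ⟨k2, k3, k4⟩ := dec_one _ _ _ _ f1 f2 f3
    exact hp ⟨hA, even_of_zmod8 k2, even_of_zmod8 k3, even_of_zmod8 k4⟩
  · have hY : Y = ((A:ℚ)/n)^2 + 4*((B:ℚ)/n)*(C/n) - 2*(C/n)^2 + 4 := by linear_combination -h0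
    push_cast
    rw [hY]
    field_simp

/-- In the trivial class, the point is a double. -/
lemma one_halve (Y a b c : ℚ)
    (h0 : a^2 + 4*b*c - 2*c^2 = Y - 4)
    (h1 : 2*a*b + 6*c^2 - 8*b*c = -2)
    (h2 : b^2 - 3*c^2 + 2*a*c - 2*b*c = -3) :
    ∃ x w : ℚ, w^2 = x^3 + 11*x^2 - 484 ∧
      Y * (4 * (x^3 + 11*x^2 - 484)) = x^4 + 3872*x + 21296 := by
  -- change of basis to `1, θ, θ²`
  obtain ⟨t0, t1, t2, rfl, rfl, rfl⟩ : ∃ t0 t1 t2 : ℚ, a = t0 + 4*t1 + 22*t2 ∧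
      b = 2*t1 + 22*t2 ∧ c = 3*t1 - 11*t2 :=
    ⟨a - 4 * ((b + 2*c)/8) - 22 * ((3*b-2*c)/88), (b + 2*c)/8, (3*b-2*c)/88, by ring, by ring,
      by ring⟩
  have e1 : 2*t0*t1 + 484*t2^2 = -1 := by
    linear_combination (1/8) * h1 + (1/4)*h2
  have e2 : t1^2 + 2*t0*t2 - 22*t1*t2 + 121*t2^2 = 0 := by
    linear_combination (3/88) * h1 - (1/44)*h2
  have e0 : t0^2 + 968*t1*t2 - 5324*t2^2 = Y := by
    linear_combination h0 - 4*e1 - 22*e2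
  have ht : t2 ≠ 0 := by
    rintro rfl
    have : t1 = 0 := by
      have : t1^2 = 0 := by linear_combination e2
      exact pow_eq_zero_iff (two_ne_zero) |>.1 this
    subst this
    norm_num at e1
  set p : ℚ := 11 - t1/t2 with hp
  have ht1 : t1 = (11 - p) * t2 := by rw [hp]; field_simp; ring
  clear_value p
  subst ht1
  have ht0 : t0 = -p^2 * t2 / 2 := by
    apply mul_left_cancel₀ ht
    linear_combination e2 / 2
  subst ht0
  have hF : t2^2 * (-p^3 + 11*p^2 - 484) = 1 := by linear_combination -e1
  refine ⟨-p, -t2 * (-p^3 + 11*p^2 - 484), ?_, ?_⟩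
  · linear_combination (-p^3 + 11*p^2 - 484) * hF
  · rw [← e0]
    linear_combination (p^4 - 3872*p + 21296) * hF

/-- If every rational point is in the trivial class (hence a double with odd numerator), there are
no rational points: the denominators would be divisible by every power of two. -/
lemma no_points_of_halving
    (H : ∀ Y y : ℚ, y^2 = Y^3 + 11*Y^2 - 484 → ¬ 2 ∣ Y.num ∧
      ∃ x w : ℚ, w^2 = x^3 + 11*x^2 - 484 ∧
      Y * (4 * (x^3 + 11*x^2 - 484)) = x^4 + 3872*x + 21296) (n : ℕ) :
    ∀ Y y : ℚ, y^2 = Y^3 + 11*Y^2 - 484 → 2^n ∣ (Y.den : ℤ) := by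
  induction n with
  | zero => intro Y y _; simp
  | succ n ih =>
    intro Y y hY
    obtain ⟨-, x, w, hx, hd⟩ := H Y y hY
    obtain ⟨hodd, -⟩ := H x w hx
    obtain ⟨k, hk⟩ := ih x w hx
    have h' : Y.num * (4 * x.den * (x.num^3 + 11*x.num^2*x.den - 484 * x.den^3)) =
        (x.num^4 + 3872 * x.num * x.den^3 + 21296 * x.den^4) * Y.den := by
      have d : (Y.den : ℚ) ≠ 0 := by exact_mod_cast Y.den_nz
      have d' : (x.den : ℚ) ≠ 0 := by exact_mod_cast x.den_nz
      rw [← Rat.num_div_den Y, ← Rat.num_div_den x] at hd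
      field_simp at hd
      have : (Y.num * (4 * x.den * (x.num^3 + 11*x.num^2*x.den - 484 * x.den^3)) : ℚ) =
        (x.num^4 + 3872 * x.num * x.den^3 + 21296 * x.den^4) * Y.den := by linear_combination hd
      exact_mod_cast this
    have h2 : (2^(n+1) : ℤ) ∣
        (x.num^4 + 3872 * x.num * x.den^3 + 21296 * x.den^4) * Y.den := by
      rw [← h']
      apply Dvd.dvd.mul_left
      apply Dvd.dvd.mul_right
      rw [hk, pow_succ]
      exact ⟨2 * k, by ring⟩
    refine IsCoprime.dvd_of_dvd_mul_left ?_ h2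
    apply IsCoprime.pow_left
    rw [Int.prime_two.coprime_iff_not_dvd]
    intro h3
    apply hodd
    apply Int.prime_two.dvd_of_dvd_pow (n := 4)
    have : x.num^4 = (x.num^4 + 3872 * x.num * x.den^3 + 21296 * x.den^4) -
      2 * (1936 * x.num * x.den^3 + 10648 * x.den^4) := by ring
    rw [this]
    exact dvd_sub h3 (dvd_mul_right _ _)

lemma no_points_of_halving'
    (H : ∀ Y y : ℚ, y^2 = Y^3 + 11*Y^2 - 484 → ¬ 2 ∣ Y.num ∧
      ∃ x w : ℚ, w^2 = x^3 + 11*x^2 - 484 ∧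
      Y * (4 * (x^3 + 11*x^2 - 484)) = x^4 + 3872*x + 21296)
    (Y y : ℚ) (hY : y^2 = Y^3 + 11*Y^2 - 484) : False := by
  have h := no_points_of_halving H Y.den Y y hY
  have h1 : 2^Y.den ∣ Y.den := by exact_mod_cast h
  have h2 := Nat.le_of_dvd Y.den_pos h1
  exact absurd h2 (not_le.2 Nat.lt_two_pow_self)
open Module NumberField

/-- A cubic number field generated by a root `g` of `T³ + T² + 4T - 2`. -/
structure CubicData (K : Type) [Field K] [NumberField K] where
  B : Basis (Fin 3) ℚ K
  g : K
  h0 : B 0 = 1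
  h1 : B 1 = g
  h2 : B 2 = g ^ 2
  hg : g ^ 3 = 2 - 4 * g - g ^ 2

namespace CubicData
variable {K : Type} [Field K] [NumberField K]

lemma expand (D : CubicData K) (α : K) : ∃ a b c : ℚ, α = a + b * D.g + c * D.g ^ 2 := by
  refine ⟨D.B.repr α 0, D.B.repr α 1, D.B.repr α 2, ?_⟩
  conv_lhs => rw [← D.B.sum_repr α]
  simp [Fin.sum_univ_three, D.h0, D.h1, D.h2, Rat.smul_def]

lemma repr_eq (D : CubicData K) (a b c : ℚ) :
    ⇑(D.B.repr ((a : K) + b * D.g + c * D.g ^ 2)) = ![a, b, c] := by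
  have : (a : K) + b * D.g + c * D.g ^ 2 = ∑ i, (![a, b, c] i) • D.B i := by
    simp [Fin.sum_univ_three, D.h0, D.h1, D.h2, Rat.smul_def]
  rw [this]
  exact D.B.repr_sum_self _

lemma ext_coeff (D : CubicData K) {a b c a' b' c' : ℚ}
    (h : (a : K) + b * D.g + c * D.g ^ 2 = a' + b' * D.g + c' * D.g ^ 2) :
    a = a' ∧ b = b' ∧ c = c' := by
  have h1 := D.repr_eq a b c
  rw [h, D.repr_eq a' b' c'] at h1
  have e0 := congrFun h1 0
  have e1 := congrFun h1 1
  have e2 := congrFun h1 2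
  simp at e0 e1 e2
  exact ⟨e0.symm, e1.symm, e2.symm⟩

lemma leftMul (D : CubicData K) (a b c : ℚ) :
    Algebra.leftMulMatrix D.B ((a : K) + b * D.g + c * D.g ^ 2) =
      !![a, 2*c, 2*(b-c); b, a-4*c, 2*c-4*(b-c); c, b-c, a-3*c-b] := by
  have e0 : ((a : K) + b * D.g + c * D.g ^ 2) * D.B 0 = (a : ℚ) + (b : ℚ) * D.g + (c:ℚ) * D.g ^ 2 := by
    rw [D.h0]; ring
  have e1 : ((a : K) + b * D.g + c * D.g ^ 2) * D.B 1 =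
      ((2*c : ℚ) : K) + ((a - 4*c : ℚ) : K) * D.g + ((b-c : ℚ) : K) * D.g ^ 2 := by
    rw [D.h1]; push_cast; linear_combination (c : K) * D.hg
  have e2 : ((a : K) + b * D.g + c * D.g ^ 2) * D.B 2 =
      ((2*(b-c) : ℚ) : K) + ((2*c-4*(b-c) : ℚ) : K) * D.g + ((a-3*c-b : ℚ) : K) * D.g ^ 2 := by
    rw [D.h2]; push_cast; linear_combination ((c : K) * D.g + b - c) * D.hg
  ext i j
  rw [Algebra.leftMulMatrix_eq_repr_mul]
  fin_cases j
  · simp only [Fin.zero_eta]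
    rw [e0, repr_eq]
    fin_cases i <;> simp
  · simp only [Fin.mk_one]
    rw [e1, repr_eq]
    fin_cases i <;> simp
  · simp only [Fin.reduceFinMk]
    rw [e2, repr_eq]
    fin_cases i <;> simp

lemma norm_eq (D : CubicData K) (a b c : ℚ) :
    Algebra.norm ℚ ((a : K) + b * D.g + c * D.g ^ 2) =
      a * ((a-4*c)*(a-3*c-b) - (2*c-4*(b-c))*(b-c)) - 2*c*(b*(a-3*c-b) - (2*c-4*(b-c))*c)
        + 2*(b-c)*(b*(b-c) - (a-4*c)*c) := by
  rw [Algebra.norm_eq_matrix_det D.B, D.leftMul, Matrix.det_fin_three]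
  simp
  ring

lemma trace_eq (D : CubicData K) (a b c : ℚ) :
    Algebra.trace ℚ K ((a : K) + b * D.g + c * D.g ^ 2) = 3*a - b - 7*c := by
  rw [Algebra.trace_eq_matrix_trace D.B, D.leftMul, Matrix.trace_fin_three]
  simp
  ring

lemma discr_B (D : CubicData K) : Algebra.discr ℚ D.B = -484 := by
  have t : ∀ (a b c : ℚ) (x : K), x = a + b * D.g + c * D.g ^ 2 →
      Algebra.trace ℚ K x = 3*a - b - 7*c := by
    rintro a b c x rfl
    exact D.trace_eq a b c
  have hg := D.hg
  have t00 := t 1 0 0 (D.B 0 * D.B 0) (by rw [D.h0]; push_cast; ring)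
  have t01 := t 0 1 0 (D.B 0 * D.B 1) (by rw [D.h0, D.h1]; push_cast; ring)
  have t02 := t 0 0 1 (D.B 0 * D.B 2) (by rw [D.h0, D.h2]; push_cast; ring)
  have t10 := t 0 1 0 (D.B 1 * D.B 0) (by rw [D.h0, D.h1]; push_cast; ring)
  have t11 := t 0 0 1 (D.B 1 * D.B 1) (by rw [D.h1]; push_cast; ring)
  have t12 := t 2 (-4) (-1) (D.B 1 * D.B 2) (by
    rw [D.h1, D.h2]; push_cast; linear_combination hg)
  have t20 := t 0 0 1 (D.B 2 * D.B 0) (by rw [D.h0, D.h2]; push_cast; ring)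
  have t21 := t 2 (-4) (-1) (D.B 2 * D.B 1) (by
    rw [D.h1, D.h2]; push_cast; linear_combination hg)
  have t22 := t (-2) 6 (-3) (D.B 2 * D.B 2) (by
    rw [D.h2]; push_cast; linear_combination (D.g - 1) * hg)
  rw [Algebra.discr_def, Matrix.det_fin_three]
  simp only [Algebra.traceMatrix_apply, Algebra.traceForm_apply, t00, t01, t02, t10, t11, t12,
    t20, t21, t22]
  norm_num

lemma finrank_eq (D : CubicData K) : Module.finrank ℚ K = 3 := by
  simpa using Module.finrank_eq_card_basis D.B


lemma discr_facts (D : CubicData K) : discr K < 0 ∧ |discr K| ≤ 484 := by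
  have hg := D.hg
  have hIntegral : IsIntegral ℤ D.g := by
    refine ⟨Polynomial.X ^ 3 + Polynomial.X ^ 2 + 4 * Polynomial.X - 2, ?_, ?_⟩
    · monicity!
    · simp; linear_combination hg
  have hB : ∀ i, IsIntegral ℤ (D.B i) := by
    intro i
    fin_cases i
    · simp [D.h0, isIntegral_one]
    · simpa [D.h1] using hIntegral
    · simpa [D.h2] using hIntegral.pow 2
  let e : Free.ChooseBasisIndex ℤ (𝓞 K) ≃ Fin 3 := (integralBasis K).indexEquiv D.B
  let b := (integralBasis K).reindex e
  have hdet : ∃ m : ℤ, (b.toMatrix D.B).det = m := by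
    have : IsIntegral ℤ (b.toMatrix D.B).det := by
      apply IsIntegral.det
      intro i j
      have hj := hB j
      have : b.toMatrix D.B i j = ((RingOfIntegers.basis K).repr ⟨D.B j, hj⟩ (e.symm i) : ℤ) := by
        rw [Basis.toMatrix_apply, Basis.repr_reindex_apply]
        exact integralBasis_repr_apply K ⟨D.B j, hj⟩ (e.symm i)
      rw [this]
      exact isIntegral_algebraMap
    obtain ⟨m, hm⟩ := IsIntegrallyClosed.isIntegral_iff.1 this
    exact ⟨m, hm.symm⟩
  obtain ⟨m, hm⟩ := hdet
  have key : (-484 : ℚ) = m ^ 2 * discr K := by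
    rw [← D.discr_B, ← hm, coe_discr]
    have := Algebra.discr_of_matrix_vecMul (A := ℚ) (⇑b) (b.toMatrix D.B)
    rw [Basis.toMatrix_map_vecMul] at this
    rw [this]
    congr 1
    simp only [b, Basis.coe_reindex]
    exact Algebra.discr_reindex _ _ _
  have key' : (-484 : ℤ) = m ^ 2 * discr K := by exact_mod_cast key
  have hm0 : 0 < m ^ 2 := by
    rcases eq_or_ne m 0 with rfl | h
    · norm_num at key'
    · positivity
  have hneg : discr K < 0 := by
    by_contra h
    push Not at h
    have := mul_nonneg hm0.le h
    omega
  refine ⟨hneg, ?_⟩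
  rw [abs_of_neg hneg]
  nlinarith


lemma places (D : CubicData K) : InfinitePlace.nrComplexPlaces K = 1 ∧ InfinitePlace.nrRealPlaces K = 1 := by
  have h1 := InfinitePlace.card_add_two_mul_card_eq_rank K
  rw [D.finrank_eq] at h1
  have h2 := NumberField.sign_discr K
  rw [Int.sign_eq_neg_one_of_neg D.discr_facts.1] at h2
  have : InfinitePlace.nrComplexPlaces K ≠ 0 := by
    intro h
    rw [h] at h2
    norm_num at h2
  omega


lemma isIntegral_g (D : CubicData K) : IsIntegral ℤ D.g := by
  have hg := D.hg
  refine ⟨Polynomial.X ^ 3 + Polynomial.X ^ 2 + 4 * Polynomial.X - 2, ?_, ?_⟩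
  · monicity!
  · simp; linear_combination hg

/-- The generator as an algebraic integer. -/
noncomputable def G (D : CubicData K) : 𝓞 K := ⟨D.g, D.isIntegral_g⟩

lemma coe_G (D : CubicData K) : algebraMap (𝓞 K) K D.G = D.g := rfl

lemma hG (D : CubicData K) : D.G ^ 3 = 2 - 4 * D.G - D.G ^ 2 := by
  apply RingOfIntegers.ext
  have h := D.hg
  change algebraMap (𝓞 K) K (D.G ^ 3) = algebraMap (𝓞 K) K (2 - 4 * D.G - D.G ^ 2)
  simp only [map_sub, map_mul, map_pow, map_ofNat, coe_G]
  exact h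

lemma normZ (D : CubicData K) (a b c : ℤ) :
    Algebra.norm ℤ ((a : 𝓞 K) + b * D.G + c * D.G ^ 2) =
      a * ((a-4*c)*(a-3*c-b) - (2*c-4*(b-c))*(b-c)) - 2*c*(b*(a-3*c-b) - (2*c-4*(b-c))*c)
        + 2*(b-c)*(b*(b-c) - (a-4*c)*c) := by
  have h := D.norm_eq a b c
  have h2 := Algebra.coe_norm_int ((a : 𝓞 K) + (b : 𝓞 K) * D.G + (c : 𝓞 K) * D.G ^ 2 : 𝓞 K)
  have h3 : (((a : 𝓞 K) + b * D.G + c * D.G ^ 2 : 𝓞 K) : K) =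
      ((a : ℚ) : K) + ((b : ℚ) : K) * D.g + ((c : ℚ) : K) * D.g ^ 2 := by
    change algebraMap (𝓞 K) K _ = _
    simp only [map_add, map_mul, map_pow, map_intCast, coe_G, Rat.cast_intCast]
  rw [h3, h] at h2
  exact_mod_cast h2

lemma prime_of_norm {x : 𝓞 K} {p : ℕ} (hp : p.Prime) (h : (Algebra.norm ℤ x).natAbs = p) :
    Prime x := by
  have h1 : Ideal.absNorm (Ideal.span {x}) = p := by
    rw [Ideal.absNorm_span_singleton, h]
  have h2 : (Ideal.span {x}).IsPrime := by
    apply Ideal.isPrime_of_irreducible_absNorm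
    rw [h1]
    exact hp
  have hx : x ≠ 0 := by
    rintro rfl
    simp at h
    exact hp.ne_zero h.symm
  exact (Ideal.span_singleton_prime hx).1 h2

/-- The unramified prime above `2`. -/
noncomputable def P1 (D : CubicData K) : 𝓞 K := -1 + 2 * D.G + D.G ^ 2
/-- The prime above `3` of degree one. -/
noncomputable def P3 (D : CubicData K) : 𝓞 K := 1 - 2 * D.G
/-- The prime above `11`. -/
noncomputable def P11 (D : CubicData K) : 𝓞 K := 1 - D.G - D.G ^ 2
/-- A unit. -/
noncomputable def E (D : CubicData K) : 𝓞 K := 1 - D.G - 3 * D.G ^ 2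

lemma norm_G (D : CubicData K) : Algebra.norm ℤ D.G = 2 := by
  have := D.normZ 0 1 0
  norm_num at this
  exact this

lemma norm_P1 (D : CubicData K) : Algebra.norm ℤ D.P1 = 2 := by
  have := D.normZ (-1) 2 1
  norm_num at this
  rw [P1, this]

lemma norm_P3 (D : CubicData K) : Algebra.norm ℤ D.P3 = 3 := by
  have := D.normZ 1 (-2) 0
  norm_num at this
  rw [P3, sub_eq_add_neg, this]

lemma norm_P11 (D : CubicData K) : Algebra.norm ℤ D.P11 = 11 := by
  have := D.normZ 1 (-1) (-1)
  norm_num at this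
  rw [P11, sub_eq_add_neg, sub_eq_add_neg, this]

lemma norm_E (D : CubicData K) : Algebra.norm ℤ D.E = 1 := by
  have := D.normZ 1 (-1) (-3)
  norm_num at this
  rw [E, sub_eq_add_neg, sub_eq_add_neg, this]

lemma prime_G (D : CubicData K) : Prime D.G := prime_of_norm Nat.prime_two (by rw [norm_G]; rfl)
lemma prime_P1 (D : CubicData K) : Prime D.P1 := prime_of_norm Nat.prime_two (by rw [norm_P1]; rfl)
lemma prime_P3 (D : CubicData K) : Prime D.P3 := prime_of_norm Nat.prime_three (by rw [norm_P3]; rfl)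
lemma prime_P11 (D : CubicData K) : Prime D.P11 :=
  prime_of_norm (by norm_num : Nat.Prime 11) (by rw [norm_P11]; rfl)

lemma isUnit_E (D : CubicData K) : IsUnit D.E :=
  IsUnit.of_mul_eq_one (171 + 53 * D.G + 37 * D.G ^ 2)
    (by rw [E]; linear_combination (-111 * D.G - 85) * D.hG)

lemma two_eq (D : CubicData K) : 2 * D.E = D.G ^ 2 * D.P1 := by
  rw [E, P1]
  linear_combination (-(D.G + 1)) * D.hG

lemma eq_span_of_mem {I : Ideal (𝓞 K)} (hI : I.IsPrime) {x : 𝓞 K} (hx : Prime x) (h : x ∈ I) :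
    Submodule.IsPrincipal I := by
  have h1 : (Ideal.span {x}).IsPrime := (Ideal.span_singleton_prime hx.ne_zero).2 hx
  have h2 : (Ideal.span {x}).IsMaximal := h1.isMaximal (by simpa using hx.ne_zero)
  have h3 : Ideal.span {x} = I :=
    h2.eq_of_le hI.ne_top (by rwa [Ideal.span_singleton_le_iff_mem])
  rw [← h3]
  exact ⟨⟨x, rfl⟩⟩

lemma principal_of_two_mem (D : CubicData K) {I : Ideal (𝓞 K)} (hI : I.IsPrime)
    (h : (2 : 𝓞 K) ∈ I) : Submodule.IsPrincipal I := by
  have h1 : D.G ^ 2 * D.P1 ∈ I := by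
    rw [← two_eq]
    exact I.mul_mem_right _ h
  rcases hI.mem_or_mem h1 with h2 | h2
  · exact eq_span_of_mem hI D.prime_G (hI.mem_of_pow_mem _ h2)
  · exact eq_span_of_mem hI D.prime_P1 h2

lemma pow_sub_mem {I : Ideal (𝓞 K)} (hI : I.IsPrime) {p : ℕ} (hp : p ≠ 0)
    (h : Ideal.absNorm I = p) (x : 𝓞 K) : x ^ p - x ∈ I := by
  have hc : Nat.card (𝓞 K ⧸ I) = p := by
    rw [← h, Ideal.absNorm_apply, Submodule.cardQuot_apply]
  have : Finite (𝓞 K ⧸ I) := Nat.finite_of_card_ne_zero (by omega)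
  have : Fintype (𝓞 K ⧸ I) := Fintype.ofFinite _
  have hI0 : I ≠ ⊥ := by
    rintro rfl
    simp at h
    omega
  have : I.IsMaximal := hI.isMaximal hI0
  let : Field (𝓞 K ⧸ I) := Ideal.Quotient.field I
  have h2 := FiniteField.pow_card (Ideal.Quotient.mk I x)
  rw [← Nat.card_eq_fintype_card, hc] at h2
  rw [← Ideal.Quotient.eq_zero_iff_mem, map_sub, map_pow, h2, sub_self]

lemma isPID (D : CubicData K) : IsPrincipalIdealRing (𝓞 K) := by
  apply RingOfIntegers.isPrincipalIdealRing_of_isPrincipal_of_norm_le_of_isPrime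
  rintro ⟨I, hI0⟩ hI hle
  simp only at hI hle ⊢
  rw [D.places.1, D.finrank_eq] at hle
  have hI6 : Ideal.absNorm I ≤ 6 := by
    have h1 : √|(discr K : ℝ)| ≤ 22 := by
      apply Real.sqrt_le_iff.2 ⟨by norm_num, ?_⟩
      have := D.discr_facts.2
      have : ((|discr K| : ℤ) : ℝ) ≤ 484 := by exact_mod_cast this
      push_cast at this
      linarith
    have h2 : (4 / Real.pi) ≤ 4 / 3.14 := by
      apply div_le_div_of_nonneg_left <;> linarith [Real.pi_gt_d2]
    have h0 : 0 < 4 / Real.pi := by positivity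
    have h3 : (Ideal.absNorm I : ℝ) ≤ 4 / 3.14 * (6 / 27 * 22) := by
      refine hle.trans ?_
      rw [pow_one]
      norm_num [Nat.factorial]
      norm_num at h2
      have hs := Real.sqrt_nonneg |(discr K : ℝ)|
      nlinarith
    have h4 : (Ideal.absNorm I : ℝ) < 7 := lt_of_le_of_lt h3 (by norm_num)
    have : Ideal.absNorm I < 7 := by exact_mod_cast h4
    omega
  have hmem := Ideal.absNorm_mem I
  have hG := D.hG
  obtain ⟨n, hn⟩ : ∃ n, n = Ideal.absNorm I := ⟨_, rfl⟩
  have hfer := fun hp => pow_sub_mem hI (p := n) hp hn.symm D.G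
  rw [← hn] at hmem hI6
  have hpos : n ≠ 0 := by
    rw [hn]
    exact Ideal.absNorm_ne_zero_of_nonZeroDivisors ⟨I, hI0⟩
  have key3 : (3 : 𝓞 K) ∈ I → n ∣ 27 := by
    intro h3
    have h4 : I ∣ Ideal.span {(3 : 𝓞 K)} := by
      rw [Ideal.dvd_iff_le, Ideal.span_singleton_le_iff_mem]; exact h3
    have h5 := map_dvd Ideal.absNorm h4
    rw [Ideal.absNorm_span_singleton] at h5
    have h6 := D.normZ 3 0 0
    norm_num at h6
    rw [h6] at h5
    rw [hn]
    exact h5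
  interval_cases n
  · exact absurd rfl hpos
  · exact absurd (by simpa using hmem) ((Ideal.ne_top_iff_one I).1 hI.ne_top)
  · exact D.principal_of_two_mem hI (by simpa using hmem)
  · have h3 : (3 : 𝓞 K) ∈ I := by simpa using hmem
    have h4 := hfer (by norm_num)
    have h5 : (D.G + 1) ^ 2 ∈ I := by
      have : (D.G + 1) ^ 2 = -(D.G ^ 3 - D.G) + 3 * (1 - D.G) := by
        linear_combination hG
      rw [this]
      exact I.add_mem (I.neg_mem h4) (I.mul_mem_right _ h3)
    have h6 := hI.mem_of_pow_mem _ h5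
    apply eq_span_of_mem hI D.prime_P3
    have : D.P3 = (D.G + 1) - 3 * D.G + 0 := by rw [P3]; ring
    rw [this, add_zero]
    exact I.sub_mem h6 (I.mul_mem_right _ h3)
  · apply D.principal_of_two_mem hI
    have h4 : (2 : 𝓞 K) ^ 2 ∈ I := by
      have : (2 : 𝓞 K) ^ 2 = ((4 : ℕ) : 𝓞 K) := by norm_num
      rw [this]; exact hmem
    exact hI.mem_of_pow_mem _ h4
  · exfalso
    have h5 : (5 : 𝓞 K) ∈ I := by simpa using hmem
    have h4 := hfer (by norm_num)
    apply (Ideal.ne_top_iff_one I).1 hI.ne_top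
    have : (1 : 𝓞 K) = (D.G ^ 5 - D.G) * (-1 - 2 * D.G ^ 2) - 5 * (1 - 9 * D.G + 15 * D.G ^ 2) := by
      linear_combination (2 * D.G ^ 4 - 2 * D.G ^ 3 - 5 * D.G ^ 2 + 17 * D.G - 3) * hG
    rw [this]
    exact I.sub_mem (I.mul_mem_right _ h4) (I.mul_mem_right _ h5)
  · rcases hI.mem_or_mem (show (2 : 𝓞 K) * 3 ∈ I by
      have : (2 : 𝓞 K) * 3 = ((6 : ℕ) : 𝓞 K) := by norm_num
      rw [this]; exact hmem) with h | h
    · exact D.principal_of_two_mem hI h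
    · have := key3 h
      norm_num at this

end CubicData

namespace CubicData
variable {K : Type} [Field K] [NumberField K]

lemma E_ne_sq (D : CubicData K) (v : 𝓞 K) : D.E ≠ v ^ 2 := by
  intro h
  obtain ⟨a, b, c, habc⟩ := D.expand (algebraMap (𝓞 K) K v)
  have h1 := congrArg (algebraMap (𝓞 K) K) h
  rw [E] at h1
  simp only [map_sub, map_mul, map_pow, map_ofNat, map_one, coe_G, habc] at h1
  have h2 : ((1 : ℚ) : K) + ((-1 : ℚ) : K) * D.g + ((-3 : ℚ) : K) * D.g ^ 2 =
      ((a^2 + 4*b*c - 2*c^2 : ℚ) : K) + ((2*a*b + 6*c^2 - 8*b*c : ℚ) : K) * D.g +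
        ((b^2 - 3*c^2 + 2*a*c - 2*b*c : ℚ) : K) * D.g ^ 2 := by
    push_cast
    linear_combination h1 + (2*(b:K)*c + (c:K)^2*D.g - (c:K)^2) * D.hg
  obtain ⟨e0, e1, e2⟩ := D.ext_coeff h2
  exact no_sq a b c e0.symm e1.symm e2.symm

lemma unit_norm_sq (v : (𝓞 K)ˣ) : (Algebra.norm ℤ (v : 𝓞 K)) ^ 2 = 1 := by
  have h : IsUnit (Algebra.norm ℤ (v : 𝓞 K)) := v.isUnit.map _
  rcases Int.isUnit_iff.1 h with h | h <;> rw [h] <;> norm_num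

lemma norm_neg_one' (D : CubicData K) : Algebra.norm ℤ (-1 : 𝓞 K) = -1 := by
  have := D.normZ (-1) 0 0
  norm_num at this
  exact this

lemma E_ne_neg_sq (D : CubicData K) (v : (𝓞 K)ˣ) : D.E ≠ - (v : 𝓞 K) ^ 2 := by
  intro h
  have h1 := congrArg (Algebra.norm ℤ) h
  rw [D.norm_E, neg_eq_neg_one_mul, map_mul, map_pow, unit_norm_sq, D.norm_neg_one'] at h1
  norm_num at h1

lemma exists_gen (D : CubicData K) : ∃ η : (𝓞 K)ˣ, ∀ u : (𝓞 K)ˣ, ∃ k : ℤ,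
    u = η ^ k ∨ u = - η ^ k := by
  have hr : Units.rank K = 1 := by
    rw [Units.rank, InfinitePlace.card_eq_nrRealPlaces_add_nrComplexPlaces, D.places.1, D.places.2]
  have hodd : Odd (Module.finrank ℚ K) := by rw [D.finrank_eq]; decide
  have hlt : 0 < Units.rank K := by omega
  refine ⟨Units.fundSystem K ⟨0, hlt⟩, fun u => ?_⟩
  obtain ⟨⟨ζ, f⟩, h, -⟩ := Units.exist_unique_eq_mul_prod K u
  simp only at h
  have huniv : (Finset.univ : Finset (Fin (Units.rank K))) = {⟨0, hlt⟩} := by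
    ext i
    simp only [Finset.mem_univ, Finset.mem_singleton, true_iff]
    apply Fin.ext
    have := i.2
    simp only
    omega
  rw [huniv, Finset.prod_singleton] at h
  refine ⟨f ⟨0, hlt⟩, ?_⟩
  rcases Units.torsion_eq_one_or_neg_one_of_odd_finrank hodd ζ with h1 | h1
  · left; rw [h, h1, one_mul]
  · right; rw [h, h1, neg_one_mul]

lemma unit_class (D : CubicData K) (u : (𝓞 K)ˣ) : ∃ (v : (𝓞 K)ˣ) (l : ℕ) (e : ℤ),
    l < 2 ∧ (e = 1 ∨ e = -1) ∧ (u : 𝓞 K) = (e : 𝓞 K) * D.E ^ l * (v : 𝓞 K) ^ 2 := by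
  obtain ⟨η, hη⟩ := D.exists_gen
  obtain ⟨ε, hε⟩ := D.isUnit_E
  obtain ⟨m, hm⟩ := hη ε
  have hmodd : Odd m := by
    rw [← Int.not_even_iff_odd]
    rintro ⟨r, rfl⟩
    rw [← two_mul, mul_comm, zpow_mul] at hm
    rcases hm with hm | hm
    · apply D.E_ne_sq ((η ^ r : (𝓞 K)ˣ) : 𝓞 K)
      rw [← hε, hm]
      norm_cast
    · apply D.E_ne_neg_sq (η ^ r)
      rw [← hε, hm]
      norm_cast
  obtain ⟨r, rfl⟩ := hmodd
  obtain ⟨k, hk⟩ := hη u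
  rcases Int.even_or_odd' k with ⟨q, rfl | rfl⟩
  · have e1 : η ^ (2 * q) = (η ^ q) ^ 2 := by rw [mul_comm, zpow_mul]; norm_cast
    rw [e1] at hk
    rcases hk with hk | hk
    · exact ⟨η ^ q, 0, 1, by norm_num, Or.inl rfl, by rw [hk]; simp⟩
    · exact ⟨η ^ q, 0, -1, by norm_num, Or.inr rfl, by rw [hk]; simp⟩
  · have e1 : η ^ (2 * q + 1) = η ^ (2 * r + 1) * (η ^ (q - r)) ^ 2 := by
      rw [← zpow_natCast (η ^ (q - r)), ← zpow_mul, ← zpow_add]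
      congr 1
      push_cast
      ring
    have e2 : ∃ e : ℤ, (e = 1 ∨ e = -1) ∧
        ((η ^ (2 * r + 1) : (𝓞 K)ˣ) : 𝓞 K) = (e : 𝓞 K) * D.E := by
      rw [← hε]
      rcases hm with hm | hm
      · exact ⟨1, Or.inl rfl, by rw [hm]; simp⟩
      · exact ⟨-1, Or.inr rfl, by rw [hm]; simp⟩
    obtain ⟨e, he, e2⟩ := e2
    rcases hk with hk | hk
    · refine ⟨η ^ (q - r), 1, e, by norm_num, he, ?_⟩
      rw [hk, e1, Units.val_mul, e2, Units.val_pow_eq_pow_val, pow_one]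
    · refine ⟨η ^ (q - r), 1, -e, by norm_num, by omega, ?_⟩
      rw [hk, e1, Units.val_neg, Units.val_mul, e2, Units.val_pow_eq_pow_val, pow_one]
      push_cast
      ring

/-- Squarefree decomposition in a unique factorization domain. -/
lemma exists_sqfree_mul_sq {R : Type} [CommRing R] [IsDomain R] [UniqueFactorizationMonoid R]
    (x : R) (hx : x ≠ 0) : ∃ d s : R, Squarefree d ∧ x = d * s ^ 2 := by
  revert hx
  induction x using UniqueFactorizationMonoid.induction_on_prime with
  | h₁ => intro h; exact absurd rfl h
  | h₂ x h => intro _; exact ⟨x, 1, h.squarefree, by ring⟩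
  | h₃ a p ha hp ih =>
    intro _
    obtain ⟨d, s, hd, rfl⟩ := ih ha
    by_cases hpd : p ∣ d
    · obtain ⟨d', rfl⟩ := hpd
      exact ⟨d', p * s, hd.of_mul_right, by ring⟩
    · refine ⟨p * d, s, ?_, by ring⟩
      rw [squarefree_mul_iff]
      exact ⟨(hp.irreducible.isRelPrime_iff_not_dvd).2 hpd, hp.irreducible.squarefree, hd⟩

/-- Peel off one prime from a squarefree element. -/
lemma peel {R : Type} [CommRing R] [IsDomain R] {p d : R} (hp : Prime p)
    (hd : Squarefree d) : ∃ (i : ℕ) (d' : R), i < 2 ∧ d = p ^ i * d' ∧ ¬ p ∣ d' := by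
  by_cases h : p ∣ d
  · obtain ⟨d', rfl⟩ := h
    refine ⟨1, d', by norm_num, by ring, ?_⟩
    rintro ⟨d'', rfl⟩
    exact hp.not_isUnit (hd p ⟨d'', by ring⟩)
  · exact ⟨0, d, by norm_num, by ring, h⟩

/-- The root `θ`. -/
noncomputable def T (D : CubicData K) : 𝓞 K := 4 + 2 * D.G + 3 * D.G ^ 2

lemma hT (D : CubicData K) : D.T ^ 3 = 484 - 11 * D.T ^ 2 := by
  rw [T]
  linear_combination (122 + 108 * D.G + 27 * D.G ^ 2 + 27 * D.G ^ 3) * D.hG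

lemma eleven_eq (D : CubicData K) : (171 + 53 * D.G + 37 * D.G ^ 2) * D.P11 ^ 3 = 11 := by
  rw [P11]
  linear_combination (-80 + 70 * D.G + 161 * D.G ^ 2 - 55 * D.G ^ 3 - 127 * D.G ^ 4
    - 37 * D.G ^ 5) * D.hG

lemma bad_prime (D : CubicData K) {p : 𝓞 K} (hp : Prime p)
    (h : p ∣ D.T * (3 * D.T + 22)) : p ∣ D.G ∨ p ∣ D.P1 ∨ p ∣ D.P11 := by
  have h1 : p ∣ 2 ^ 6 * 11 ^ 2 := by
    rcases hp.dvd_or_dvd h with h | h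
    · have : (2 : 𝓞 K) ^ 6 * 11 ^ 2 = D.T * (16 * (D.T ^ 2 + 11 * D.T)) := by
        linear_combination (-16) * D.hT
      rw [this]
      exact h.mul_right _
    · have : (2 : 𝓞 K) ^ 6 * 11 ^ 2 = (3 * D.T + 22) * (9 * D.T ^ 2 + 33 * D.T - 242) := by
        linear_combination (-27) * D.hT
      rw [this]
      exact h.mul_right _
  rcases hp.dvd_or_dvd h1 with h | h
  · have h2 : p ∣ D.G ^ 2 * D.P1 := by
      rw [← two_eq]
      exact (hp.dvd_of_dvd_pow h).mul_right _
    rcases hp.dvd_or_dvd h2 with h3 | h3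
    · exact Or.inl (hp.dvd_of_dvd_pow h3)
    · exact Or.inr (Or.inl h3)
  · have h2 := hp.dvd_of_dvd_pow h
    rw [← D.eleven_eq] at h2
    have h3 : p ∣ D.P11 ^ 3 := by
      rcases hp.dvd_or_dvd h2 with h3 | h3
      · exfalso
        apply hp.not_isUnit
        refine isUnit_of_dvd_unit h3 ?_
        exact IsUnit.of_mul_eq_one D.E
          (by rw [E]; linear_combination (-111 * D.G - 85) * D.hG)
      · exact h3
    exact Or.inr (Or.inr (hp.dvd_of_dvd_pow h3))

lemma sqfree_class (D : CubicData K) {d : 𝓞 K} (hd : Squarefree d)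
    (h : ∀ p, Prime p → p ∣ d → p ∣ D.G ∨ p ∣ D.P1 ∨ p ∣ D.P11) :
    ∃ (u : (𝓞 K)ˣ) (i j k : ℕ), i < 2 ∧ j < 2 ∧ k < 2 ∧
      d = D.G ^ i * D.P1 ^ j * D.P11 ^ k * u := by
  have := D.isPID
  obtain ⟨i, d1, hi, rfl, h1⟩ := peel D.prime_G hd
  obtain ⟨j, d2, hj, rfl, h2⟩ := peel D.prime_P1 hd.of_mul_right
  obtain ⟨k, d3, hk, rfl, h3⟩ := peel D.prime_P11 hd.of_mul_right.of_mul_right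
  have hd3 : d3 ≠ 0 := by
    rintro rfl
    exact h3 (dvd_zero _)
  have hu : IsUnit d3 := by
    by_contra hu
    obtain ⟨p, hp, hpd⟩ := WfDvdMonoid.exists_irreducible_factor hu hd3
    have hp' : Prime p := UniqueFactorizationMonoid.irreducible_iff_prime.1 hp
    have ass : ∀ q : 𝓞 K, Prime q → p ∣ q → q ∣ d3 := by
      intro q hq hpq
      exact ((hp'.associated_of_dvd hq hpq).symm.dvd).trans hpd
    rcases h p hp' (((hpd.mul_left _).mul_left _).mul_left _) with hq | hq | hq
    · exact h1 (((ass _ D.prime_G hq).mul_left _).mul_left _)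
    · exact h2 ((ass _ D.prime_P1 hq).mul_left _)
    · exact h3 (ass _ D.prime_P11 hq)
  obtain ⟨u, rfl⟩ := hu
  exact ⟨u, i, j, k, hi, hj, hk, by ring⟩

end CubicData

namespace CubicData
variable {K : Type} [Field K] [NumberField K]

lemma norm_beta (D : CubicData K) (a b : ℤ) :
    Algebra.norm ℤ ((b : 𝓞 K) * (a - D.T * b)) = b ^ 3 * (a^3 + 11*a^2*b - 484*b^3) := by
  have h := D.normZ (b * a - 4 * b^2) (-2*b^2) (-3*b^2)
  have e : (b : 𝓞 K) * (a - D.T * b) = ((b * a - 4 * b^2 : ℤ) : 𝓞 K) +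
      ((-2*b^2 : ℤ) : 𝓞 K) * D.G + ((-3*b^2 : ℤ) : 𝓞 K) * D.G ^ 2 := by
    rw [T]; push_cast; ring
  rw [e, h]
  ring

lemma beta_ne_zero (D : CubicData K) (a b : ℤ) (hb : b ≠ 0) :
    (b : 𝓞 K) * (a - D.T * b) ≠ 0 := by
  intro h
  have h1 := congrArg (algebraMap (𝓞 K) K) h
  rw [T] at h1
  simp only [map_sub, map_mul, map_add, map_pow, map_ofNat, map_intCast, map_zero, coe_G] at h1
  have h2 : ((b * a - 4 * b^2 : ℚ) : K) + ((-2*b^2 : ℚ) : K) * D.g + ((-3*b^2 : ℚ) : K) * D.g ^ 2 =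
      ((0 : ℚ) : K) + ((0 : ℚ) : K) * D.g + ((0 : ℚ) : K) * D.g ^ 2 := by
    push_cast
    linear_combination h1
  obtain ⟨-, e1, -⟩ := D.ext_coeff h2
  have : (b : ℚ) ≠ 0 := by exact_mod_cast hb
  apply this
  have : (b : ℚ) ^ 2 = 0 := by linarith
  exact pow_eq_zero_iff (two_ne_zero) |>.1 this

lemma factor (D : CubicData K) (a b c : ℤ) (hab : IsCoprime a b) (hb : b ≠ 0)
    (hc : c ^ 2 = b * (a^3 + 11*a^2*b - 484*b^3)) :
    ∃ (S : 𝓞 K) (i j k l : ℕ) (e : ℤ), i < 2 ∧ j < 2 ∧ k < 2 ∧ l < 2 ∧ (e = 1 ∨ e = -1) ∧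
      (b : 𝓞 K) * (a - D.T * b) = e * D.E ^ l * D.G ^ i * D.P1 ^ j * D.P11 ^ k * S ^ 2 := by
  have := D.isPID
  have hβ0 := D.beta_ne_zero a b hb
  obtain ⟨d, s, hd, hβ⟩ := exists_sqfree_mul_sq _ hβ0
  have hs0 : s ≠ 0 := by
    rintro rfl
    apply hβ0
    rw [hβ]; ring
  have hd0 : d ≠ 0 := by
    rintro rfl
    apply hβ0
    rw [hβ]; ring
  obtain ⟨γ, hγ⟩ : ∃ γ : 𝓞 K, γ = a^2 + (11 + D.T)*a*b + (D.T^2 + 11*D.T)*b^2 := ⟨_, rfl⟩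
  have hc' : (c : 𝓞 K) ^ 2 = b * (a^3 + 11*a^2*b - 484*b^3) := by
    have := congrArg (Int.cast : ℤ → 𝓞 K) hc
    push_cast at this
    exact this
  have hβγ : (c : 𝓞 K) ^ 2 = d * s ^ 2 * γ := by
    rw [← hβ, hγ, hc']
    linear_combination (b : 𝓞 K) ^ 4 * D.hT
  have hsc : s ∣ (c : 𝓞 K) := by
    have : s ^ 2 ∣ (c : 𝓞 K) ^ 2 := ⟨d * γ, by rw [hβγ]; ring⟩
    exact (IsIntegrallyClosed.pow_dvd_pow_iff two_ne_zero).1 this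
  obtain ⟨t, ht⟩ := hsc
  have hdt : d * γ = t ^ 2 := by
    have h1 : s ^ 2 * (d * γ) = s ^ 2 * t ^ 2 := by
      rw [ht] at hβγ
      linear_combination -hβγ
    exact mul_left_cancel₀ (pow_ne_zero 2 hs0) h1
  have hdγ : d ∣ γ := by
    have h1 : d ∣ t := (hd.dvd_pow_iff_dvd two_ne_zero).1 ⟨γ, hdt.symm⟩
    obtain ⟨r, rfl⟩ := h1
    refine ⟨r ^ 2, mul_left_cancel₀ hd0 ?_⟩
    rw [hdt]; ring
  have hprime : ∀ p, Prime p → p ∣ d → p ∣ D.G ∨ p ∣ D.P1 ∨ p ∣ D.P11 := by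
    intro p hp hpd
    have hpγ := hpd.trans hdγ
    have hpβ : p ∣ (b : 𝓞 K) * (a - D.T * b) := by
      rw [hβ]; exact hpd.mul_right _
    have hpb : ¬ p ∣ (b : 𝓞 K) := by
      intro hpb
      have h1 : p ∣ (a : 𝓞 K) ^ 2 := by
        have : (a : 𝓞 K) ^ 2 = γ - b * ((11 + D.T)*a + (D.T^2 + 11*D.T)*b) := by
          rw [hγ]; ring
        rw [this]
        exact dvd_sub hpγ (hpb.mul_right _)
      have hpa := hp.dvd_of_dvd_pow h1
      obtain ⟨x, y, hxy⟩ := hab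
      have h2 : (x : 𝓞 K) * a + y * b = 1 := by exact_mod_cast congrArg (Int.cast : ℤ → 𝓞 K) hxy
      apply hp.not_isUnit
      apply isUnit_of_dvd_one
      rw [← h2]
      exact dvd_add (hpa.mul_left _) (hpb.mul_left _)
    have h3 : p ∣ (a : 𝓞 K) - D.T * b := (hp.dvd_or_dvd hpβ).resolve_left hpb
    have h4 : p ∣ (D.T * (3 * D.T + 22)) * (b : 𝓞 K) ^ 2 := by
      have : (D.T * (3 * D.T + 22)) * (b : 𝓞 K) ^ 2 =
          γ - (a - D.T * b) * (a + (11 + 2 * D.T) * b) := by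
        rw [hγ]; ring
      rw [this]
      exact dvd_sub hpγ (h3.mul_right _)
    refine D.bad_prime hp ((hp.dvd_or_dvd h4).resolve_right ?_)
    exact fun h => hpb (hp.dvd_of_dvd_pow h)
  obtain ⟨u, i, j, k, hi, hj, hk, hdu⟩ := D.sqfree_class hd hprime
  obtain ⟨v, l, e, hl, he, hu⟩ := D.unit_class u
  refine ⟨v * s, i, j, k, l, e, hi, hj, hk, hl, he, ?_⟩
  rw [hβ, hdu, hu]
  ring

lemma isSquare_of (x m n : ℤ) (hm : m ≠ 0) (h : x ^ 2 = n * m ^ 2) : IsSquare n := by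
  have h1 : m ∣ x := by
    rw [← Int.pow_dvd_pow_iff two_ne_zero]
    exact ⟨n, by rw [h]; ring⟩
  obtain ⟨r, rfl⟩ := h1
  refine ⟨r, mul_left_cancel₀ (pow_ne_zero 2 hm) ?_⟩
  linear_combination -h

lemma norm_int (D : CubicData K) (e : ℤ) : Algebra.norm ℤ (e : 𝓞 K) = e ^ 3 := by
  have := D.normZ e 0 0
  simp only [Int.cast_zero, zero_mul, add_zero] at this
  rw [this]
  ring

lemma factor' (D : CubicData K) (a b c : ℤ) (hab : IsCoprime a b) (hb : b ≠ 0)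
    (hc : c ^ 2 = b * (a^3 + 11*a^2*b - 484*b^3)) :
    ∃ S : 𝓞 K, (b : 𝓞 K) * (a - D.T * b) = S ^ 2 ∨
      (b : 𝓞 K) * (a - D.T * b) = D.E * S ^ 2 ∨
      (b : 𝓞 K) * (a - D.T * b) = D.G * D.P1 * S ^ 2 ∨
      (b : 𝓞 K) * (a - D.T * b) = D.E * (D.G * D.P1) * S ^ 2 := by
  obtain ⟨S, i, j, k, l, e, hi, hj, hk, hl, he, h⟩ := D.factor a b c hab hb hc
  refine ⟨S, ?_⟩
  have hS : Algebra.norm ℤ S ≠ 0 := by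
    rw [Algebra.norm_ne_zero_iff]
    rintro rfl
    apply D.beta_ne_zero a b hb
    rw [h]; ring
  have hN := congrArg (Algebra.norm ℤ) h
  rw [D.norm_beta] at hN
  simp only [map_mul, map_pow, D.norm_E, D.norm_G, D.norm_P1, D.norm_P11, D.norm_int] at hN
  have hsq : IsSquare (e ^ 3 * 1 ^ l * 2 ^ i * 2 ^ j * 11 ^ k : ℤ) := by
    apply isSquare_of (b * c) _ _ hS
    rw [← hN]
    linear_combination b ^ 2 * hc
  clear hN hS hc
  have key : e = 1 ∧ i = j ∧ k = 0 := by
    clear h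
    rw [one_pow] at hsq
    interval_cases i <;> interval_cases j <;> interval_cases k <;> rcases he with rfl | rfl <;>
      (revert hsq; decide +kernel)
  obtain ⟨rfl, rfl, rfl⟩ := key
  interval_cases i <;> interval_cases l
  · left; rw [h]; push_cast; ring
  · right; left; rw [h]; push_cast; ring
  · right; right; left; rw [h]; push_cast; ring
  · right; right; right; rw [h]; push_cast; ring

lemma descent (D : CubicData K) (Y y : ℚ) (hY : y^2 = Y^3 + 11*Y^2 - 484) :
    ∃ α : K, ((Y : K) - (4 + 2 * D.g + 3 * D.g ^ 2) = α ^ 2 ∨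
      (Y : K) - (4 + 2 * D.g + 3 * D.g ^ 2) = (1 - D.g - 3 * D.g ^ 2) * α ^ 2 ∨
      (Y : K) - (4 + 2 * D.g + 3 * D.g ^ 2) = (2 - 5 * D.g + D.g ^ 2) * α ^ 2 ∨
      (Y : K) - (4 + 2 * D.g + 3 * D.g ^ 2) = (36 - 81 * D.g - 5 * D.g ^ 2) * α ^ 2) := by
  obtain ⟨a, ha⟩ : ∃ a, a = Y.num := ⟨_, rfl⟩
  obtain ⟨b, hbd⟩ : ∃ b : ℤ, b = Y.den := ⟨_, rfl⟩
  have hb : b ≠ 0 := by rw [hbd]; exact_mod_cast Y.den_ne_zero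
  have hbQ : (b : ℚ) ≠ 0 := by exact_mod_cast hb
  have hab : IsCoprime a b := by
    rw [ha, hbd, Int.isCoprime_iff_gcd_eq_one]
    exact Y.reduced
  have hYab : Y = a / b := by
    rw [ha, hbd]
    exact_mod_cast (Rat.num_div_den Y).symm
  have hsq : (y * b ^ 2) ^ 2 = ((b * (a^3 + 11*a^2*b - 484*b^3) : ℤ) : ℚ) := by
    have e : (a : ℚ) = Y * b := by rw [hYab]; field_simp
    push_cast
    rw [e]
    linear_combination (b : ℚ) ^ 4 * hY
  obtain ⟨c, hc⟩ : IsSquare (b * (a^3 + 11*a^2*b - 484*b^3) : ℤ) := by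
    rw [← Rat.isSquare_intCast_iff, ← hsq]
    exact ⟨_, sq _⟩
  obtain ⟨S, hS⟩ := D.factor' a b c hab hb (by rw [hc]; ring)
  have hbK : (b : K) ≠ 0 := by exact_mod_cast hb
  have eY : (Y : K) = a / b := by rw [hYab]; push_cast; rfl
  have hconv : ∀ d : 𝓞 K, (b : 𝓞 K) * (a - D.T * b) = d * S ^ 2 →
      (Y : K) - (4 + 2 * D.g + 3 * D.g ^ 2) =
        algebraMap (𝓞 K) K d * (algebraMap (𝓞 K) K S / b) ^ 2 := by
    intro d hd
    have h1 := congrArg (algebraMap (𝓞 K) K) hd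
    rw [T] at h1
    simp only [map_sub, map_mul, map_add, map_pow, map_ofNat, map_intCast, coe_G] at h1
    rw [eY]
    field_simp
    linear_combination h1
  refine ⟨algebraMap (𝓞 K) K S / b, ?_⟩
  rcases hS with h | h | h | h
  · left
    rw [hconv 1 (by rw [h, one_mul]), map_one, one_mul]
  · right; left
    rw [hconv _ h, E]
    simp only [map_sub, map_mul, map_pow, map_ofNat, map_one, coe_G]
  · right; right; left
    rw [hconv _ h]
    congr 1
    rw [P1]
    simp only [map_add, map_neg, map_mul, map_pow, map_ofNat, map_one, coe_G]
    linear_combination D.hg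
  · right; right; right
    rw [hconv _ h]
    congr 1
    rw [P1, E]
    simp only [map_add, map_sub, map_neg, map_mul, map_pow, map_ofNat, map_one, coe_G]
    linear_combination (18 - 4 * D.g - 3 * D.g ^ 2) * D.hg

lemma final (D : CubicData K) (Y y : ℚ) (hY : y^2 = Y^3 + 11*Y^2 - 484) : False := by
  refine no_points_of_halving' ?_ Y y hY
  clear hY Y y
  intro Y y hY
  obtain ⟨α, h⟩ := D.descent Y y hY
  obtain ⟨a, b, c, rfl⟩ := D.expand α
  have hg := D.hg
  rcases h with h | h | h | h
  · have h2 : ((a^2 + 4*b*c - 2*c^2 : ℚ) : K) + ((2*a*b + 6*c^2 - 8*b*c : ℚ) : K) * D.g +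
        ((b^2 - 3*c^2 + 2*a*c - 2*b*c : ℚ) : K) * D.g ^ 2 =
        ((Y - 4 : ℚ) : K) + ((-2 : ℚ) : K) * D.g + ((-3 : ℚ) : K) * D.g ^ 2 := by
      push_cast
      linear_combination -h - (2*(b:K)*c + (c:K)^2*D.g - (c:K)^2) * hg
    obtain ⟨e0, e1, e2⟩ := D.ext_coeff h2
    exact ⟨one_odd Y a b c e0 e1 e2, one_halve Y a b c e0 e1 e2⟩
  · exfalso
    have h2 : (((1)*(a^2 + 4*b*c - 2*c^2) + 2*((-1)*(b^2 - 3*c^2 + 2*a*c - 2*b*c) + (-3)*(2*a*b + 6*c^2 - 8*b*c) - (-3)*(b^2 - 3*c^2 + 2*a*c - 2*b*c)) : ℚ) : K) +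
        ((-a^2 - 14*b^2 + 122*c^2 + 26*a*b - 28*a*c - 80*b*c : ℚ) : K) * D.g +
        ((-3*a^2 + 11*b^2 - 15*c^2 + 4*a*b + 22*a*c - 50*b*c : ℚ) : K) * D.g ^ 2 =
        ((Y - 4 : ℚ) : K) + ((-2 : ℚ) : K) * D.g + ((-3 : ℚ) : K) * D.g ^ 2 := by
      push_cast
      linear_combination -h - (((1) + (-1)*D.g + (-3)*D.g^2) * (2*(b:K)*(c:K) + (c:K)^2*D.g - (c:K)^2) + ((-3)*((b:K)^2 - 3*(c:K)^2 + 2*(a:K)*(c:K) - 2*(b:K)*(c:K))*D.g + ((-1)*((b:K)^2 - 3*(c:K)^2 + 2*(a:K)*(c:K) - 2*(b:K)*(c:K)) + (-3)*(2*(a:K)*(b:K) + 6*(c:K)^2 - 8*(b:K)*(c:K)) - (-3)*((b:K)^2 - 3*(c:K)^2 + 2*(a:K)*(c:K) - 2*(b:K)*(c:K))))) * hg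
    obtain ⟨-, e1, e2⟩ := D.ext_coeff h2
    exact no_eps a b c e1 e2
  · exfalso
    have h2 : (((2)*(a^2 + 4*b*c - 2*c^2) + 2*((-5)*(b^2 - 3*c^2 + 2*a*c - 2*b*c) + (1)*(2*a*b + 6*c^2 - 8*b*c) - (1)*(b^2 - 3*c^2 + 2*a*c - 2*b*c)) : ℚ) : K) +
        ((-5*a^2 + 26*b^2 - 80*c^2 - 4*a*b + 52*a*c - 56*b*c : ℚ) : K) * D.g +
        ((a^2 + 4*b^2 - 50*c^2 - 12*a*b + 8*a*c + 44*b*c : ℚ) : K) * D.g ^ 2 =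
        ((Y - 4 : ℚ) : K) + ((-2 : ℚ) : K) * D.g + ((-3 : ℚ) : K) * D.g ^ 2 := by
      push_cast
      linear_combination -h - (((2) + (-5)*D.g + (1)*D.g^2) * (2*(b:K)*(c:K) + (c:K)^2*D.g - (c:K)^2) + ((1)*((b:K)^2 - 3*(c:K)^2 + 2*(a:K)*(c:K) - 2*(b:K)*(c:K))*D.g + ((-5)*((b:K)^2 - 3*(c:K)^2 + 2*(a:K)*(c:K) - 2*(b:K)*(c:K)) + (1)*(2*(a:K)*(b:K) + 6*(c:K)^2 - 8*(b:K)*(c:K)) - (1)*((b:K)^2 - 3*(c:K)^2 + 2*(a:K)*(c:K) - 2*(b:K)*(c:K))))) * hg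
    obtain ⟨-, e1, e2⟩ := D.ext_coeff h2
    exact no_gp a b c e1 e2
  · exfalso
    have h2 : (((36)*(a^2 + 4*b*c - 2*c^2) + 2*((-81)*(b^2 - 3*c^2 + 2*a*c - 2*b*c) + (-5)*(2*a*b + 6*c^2 - 8*b*c) - (-5)*(b^2 - 3*c^2 + 2*a*c - 2*b*c)) : ℚ) : K) +
        ((-81*a^2 + 294*b^2 - 384*c^2 + 112*a*b + 588*a*c - 1360*b*c : ℚ) : K) * D.g +
        ((-5*a^2 + 132*b^2 - 842*c^2 - 152*a*b + 264*a*c + 324*b*c : ℚ) : K) * D.g ^ 2 =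
        ((Y - 4 : ℚ) : K) + ((-2 : ℚ) : K) * D.g + ((-3 : ℚ) : K) * D.g ^ 2 := by
      push_cast
      linear_combination -h - (((36) + (-81)*D.g + (-5)*D.g^2) * (2*(b:K)*(c:K) + (c:K)^2*D.g - (c:K)^2) + ((-5)*((b:K)^2 - 3*(c:K)^2 + 2*(a:K)*(c:K) - 2*(b:K)*(c:K))*D.g + ((-81)*((b:K)^2 - 3*(c:K)^2 + 2*(a:K)*(c:K) - 2*(b:K)*(c:K)) + (-5)*(2*(a:K)*(b:K) + 6*(c:K)^2 - 8*(b:K)*(c:K)) - (-5)*((b:K)^2 - 3*(c:K)^2 + 2*(a:K)*(c:K) - 2*(b:K)*(c:K))))) * hg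
    obtain ⟨-, e1, e2⟩ := D.ext_coeff h2
    exact no_epsgp a b c e1 e2

end CubicData

open Polynomial in
/-- The defining cubic. -/
noncomputable def cubicPoly : ℚ[X] := X ^ 3 + X ^ 2 + 4 * X - 2

open Polynomial in
lemma cubicPoly_monic : cubicPoly.Monic := by
  rw [cubicPoly]; monicity!

open Polynomial in
lemma cubicPoly_natDegree : cubicPoly.natDegree = 3 := by
  rw [cubicPoly]; compute_degree!

open Polynomial in
lemma cubicPoly_irreducible : Irreducible cubicPoly := by
  rw [Polynomial.irreducible_iff_roots_eq_zero_of_degree_le_three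
    (by rw [cubicPoly_natDegree]; norm_num) (by rw [cubicPoly_natDegree])]
  rw [Multiset.eq_zero_iff_forall_notMem]
  intro r hr
  have h0 : r ^ 3 + r ^ 2 + 4 * r - 2 = 0 := by
    have := (Polynomial.mem_roots'.1 hr).2
    simpa [cubicPoly, IsRoot] using this
  have hIntegral : IsIntegral ℤ r := by
    refine ⟨X ^ 3 + X ^ 2 + 4 * X - 2, ?_, ?_⟩
    · monicity!
    · simp; linear_combination h0
  obtain ⟨m, rfl⟩ := IsIntegrallyClosed.isIntegral_iff.1 hIntegral
  have h1 : m ^ 3 + m ^ 2 + 4 * m - 2 = 0 := by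
    have : (m : ℚ) ^ 3 + (m : ℚ) ^ 2 + 4 * (m : ℚ) - 2 = 0 := by simpa using h0
    exact_mod_cast this
  rcases le_or_gt m 0 with h | h
  · nlinarith [sq_nonneg m, sq_nonneg (m + 1)]
  · nlinarith [sq_nonneg m, pow_pos h 3, pow_pos h 2]

instance cubicPoly_fact : Fact (Irreducible cubicPoly) := ⟨cubicPoly_irreducible⟩

instance cubicField_numberField : NumberField (AdjoinRoot cubicPoly) where
  to_charZero := inferInstance
  to_finiteDimensional := by
    have h := (AdjoinRoot.powerBasis cubicPoly_irreducible.ne_zero).finite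
    convert h

lemma exists_cubicData : Nonempty (CubicData (AdjoinRoot cubicPoly)) := by
  have hdim : (AdjoinRoot.powerBasis cubicPoly_irreducible.ne_zero).dim = 3 := by
    rw [AdjoinRoot.powerBasis_dim, cubicPoly_natDegree]
  let B := (AdjoinRoot.powerBasis cubicPoly_irreducible.ne_zero).basis.reindex (finCongr hdim)
  have hB : ∀ i, B i = AdjoinRoot.root cubicPoly ^ (i : ℕ) := by
    intro i
    simp [B]
  have hg : AdjoinRoot.root cubicPoly ^ 3 =
      2 - 4 * AdjoinRoot.root cubicPoly - AdjoinRoot.root cubicPoly ^ 2 := by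
    have h : AdjoinRoot.mk cubicPoly
        (Polynomial.X ^ 3 + Polynomial.X ^ 2 + 4 * Polynomial.X - 2) = 0 := AdjoinRoot.mk_self
    simp only [map_sub, map_add, map_mul, map_pow, map_ofNat, AdjoinRoot.mk_X] at h
    linear_combination h
  exact ⟨⟨B, AdjoinRoot.root cubicPoly, by simp [hB], by simp [hB], by simp [hB], hg⟩⟩

/-- The elliptic curve `E : t² = -(4x³ + 7x² - 6x + 19)` (of conductor 121) has
no affine rational points: there are no `u, w ∈ ℚ` with
`w² = -(4u³ + 7u² - 6u + 19)`. Equivalently, `E(ℚ)` consists only of the point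
at infinity. -/
theorem elliptic_curve_121_no_affine_rational_points :
    ¬ ∃ u w : ℚ, w ^ 2 = -(4 * u ^ 3 + 7 * u ^ 2 - 6 * u + 19) := by
  rintro ⟨u, w, h⟩
  obtain ⟨D⟩ := exists_cubicData
  exact D.final (-4 * u - 6) (4 * w) (by linear_combination 16 * h)
end

section
/- The genus 2 hyperelliptic curve H : r^2 = -(4s^3 - 4s^2 - 28s + 41)(4s^3 + 7s^2 - 6s + 19) has no affine rational points: there do not exist r, s ∈ ℚ with r^2 = -(4s^3 - 4s^2 - 28s + 41)(4s^3 + 7s^2 - 6s + 19). (Since the two points at infinity of H are (±4i : 1 : 0), which are not rational, H(ℚ) = ∅.) -/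
namespace HNoPts
open NumberField Module

/-- The data of a cubic number field generated by `u` with `u^3 + 2u^2 - 2 = 0`. -/
structure Trib (K : Type) [Field K] [NumberField K] where
  u : K
  hu : u ^ 3 = 2 - 2 * u ^ 2
  b : Basis (Fin 3) ℚ K
  b0 : b 0 = 1
  b1 : b 1 = u
  b2 : b 2 = u ^ 2

section
open scoped Matrix
variable {K : Type} [Field K] [NumberField K] (T : Trib K)

theorem Trib.finrank (T : Trib K) : finrank ℚ K = 3 := by
  simpa using Module.finrank_eq_card_basis T.b

theorem Trib.repr (x y w : ℚ) :
    ⇑(T.b.repr ((x : K) + y * T.u + w * T.u ^ 2)) = ![x, y, w] := by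
  have : ((x : K) + y * T.u + w * T.u ^ 2) = ∑ i, (![x, y, w] i) • T.b i := by
    simp [Fin.sum_univ_three, T.b0, T.b1, T.b2, Algebra.smul_def]
  rw [this, Basis.repr_sum_self]

theorem Trib.exists_coord (z : K) : ∃ x y w : ℚ, z = (x : K) + y * T.u + w * T.u ^ 2 := by
  refine ⟨T.b.repr z 0, T.b.repr z 1, T.b.repr z 2, ?_⟩
  conv_lhs => rw [← T.b.sum_repr z]
  simp [Fin.sum_univ_three, T.b0, T.b1, T.b2, Algebra.smul_def]

theorem Trib.indep {x y w x' y' w' : ℚ}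
    (h : (x : K) + y * T.u + w * T.u ^ 2 = (x' : K) + y' * T.u + w' * T.u ^ 2) :
    x = x' ∧ y = y' ∧ w = w' := by
  have h1 := T.repr x y w
  rw [h, T.repr] at h1
  have e0 := congrFun h1 0
  have e1 := congrFun h1 1
  have e2 := congrFun h1 2
  simp at e0 e1 e2
  exact ⟨e0.symm, e1.symm, e2.symm⟩

theorem Trib.trace (x y w : ℚ) :
    Algebra.trace ℚ K ((x : K) + y * T.u + w * T.u ^ 2) = 3 * x - 2 * y + 4 * w := by
  rw [Algebra.trace_eq_matrix_trace T.b, Matrix.trace, Fin.sum_univ_three]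
  simp only [Matrix.diag_apply, Algebra.leftMulMatrix_eq_repr_mul, T.b0, T.b1, T.b2]
  have e0 : ((x : K) + y * T.u + w * T.u ^ 2) * 1 = (x : K) + y * T.u + w * T.u ^ 2 := by ring
  have e1 : ((x : K) + y * T.u + w * T.u ^ 2) * T.u =
      ((2 * w : ℚ) : K) + (x : ℚ) * T.u + (y - 2 * w : ℚ) * T.u ^ 2 := by
    push_cast
    linear_combination (w : K) * T.hu
  have e2 : ((x : K) + y * T.u + w * T.u ^ 2) * T.u ^ 2 =
      ((2 * y - 4 * w : ℚ) : K) + (2 * w : ℚ) * T.u + (x - 2 * y + 4 * w : ℚ) * T.u ^ 2 := by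
    push_cast
    linear_combination ((y : K) + w * T.u - 2 * w) * T.hu
  rw [e0, e1, e2, T.repr, T.repr, T.repr]
  simp
  ring

theorem Trib.discr_basis : Algebra.discr ℚ T.b = -44 := by
  have t0 : Algebra.trace ℚ K 1 = 3 := by simpa using T.trace 1 0 0
  have t1 : Algebra.trace ℚ K T.u = -2 := by simpa using T.trace 0 1 0
  have t2 : Algebra.trace ℚ K (T.u ^ 2) = 4 := by simpa using T.trace 0 0 1
  have t3 : Algebra.trace ℚ K (T.u ^ 3) = -2 := by
    have := T.trace 2 0 (-2)
    rw [T.hu]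
    convert this using 2
    · push_cast; ring
    · norm_num
  have t4 : Algebra.trace ℚ K (T.u ^ 4) = 0 := by
    have := T.trace (-4) 2 4
    have e : T.u ^ 4 = ((-4 : ℚ) : K) + (2 : ℚ) * T.u + (4 : ℚ) * T.u ^ 2 := by
      push_cast
      linear_combination (T.u - 2) * T.hu
    rw [e, this]
    norm_num
  rw [Algebra.discr_def, Matrix.det_fin_three]
  simp only [Algebra.traceMatrix_apply, Algebra.traceForm_apply, T.b0, T.b1, T.b2]
  have a1 : T.u * T.u = T.u ^ 2 := by ring
  have a2 : T.u * T.u ^ 2 = T.u ^ 3 := by ring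
  have a3 : T.u ^ 2 * T.u = T.u ^ 3 := by ring
  have a4 : T.u ^ 2 * T.u ^ 2 = T.u ^ 4 := by ring
  simp only [one_mul, mul_one, a1, a2, a3, a4, t0, t1, t2, t3, t4]
  norm_num

theorem Trib.u_int : IsIntegral ℤ T.u := by
  refine ⟨Polynomial.X ^ 3 + (2 * Polynomial.X ^ 2 - 2), ?_, ?_⟩
  · apply Polynomial.monic_X_pow_add
    compute_degree!
  · simp [T.hu]

theorem Trib.index : ∃ P : Matrix (Fin 3) (Fin 3) ℤ, ∃ e : Free.ChooseBasisIndex ℤ (𝓞 K) ≃ Fin 3,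
    (∀ j, T.b j = ∑ i, (P i j : K) * ((RingOfIntegers.basis K).reindex e i : 𝓞 K)) ∧
    P.det ^ 2 * discr K = -44 := by
  classical
  have hc : Fintype.card (Free.ChooseBasisIndex ℤ (𝓞 K)) = Fintype.card (Fin 3) := by
    rw [← Module.finrank_eq_card_chooseBasisIndex, RingOfIntegers.rank, T.finrank]; simp
  let e := Fintype.equivOfCardEq hc
  let B := (RingOfIntegers.basis K).reindex e
  have hint : ∀ j, IsIntegral ℤ (T.b j) := by
    intro j
    fin_cases j
    · simpa [T.b0] using isIntegral_one
    · simpa [T.b1] using T.u_int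
    · simpa [T.b2] using T.u_int.pow 2
  let t : Fin 3 → 𝓞 K := fun j => ⟨T.b j, hint j⟩
  have ht : ∀ j, (t j : K) = T.b j := fun j => rfl
  let P : Matrix (Fin 3) (Fin 3) ℤ := B.toMatrix t
  refine ⟨P, e, ?_, ?_⟩
  · intro j
    have : t j = ∑ i, P i j • B i := (B.sum_toMatrix_smul_self t j).symm
    rw [← ht, this]
    simp [B]
  · let Q : Matrix (Fin 3) (Fin 3) ℚ := P.map (Int.cast : ℤ → ℚ)
    let c : Fin 3 → K := fun i => (B i : K)
    have hc1 : c = ⇑(integralBasis K) ∘ e.symm := by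
      funext i
      simp [c, B]
    have h1 : c ᵥ* Q.map (algebraMap ℚ K) = T.b := by
      funext j
      have : t j = ∑ i, P i j • B i := (B.sum_toMatrix_smul_self t j).symm
      rw [← ht, this]
      simp [Matrix.vecMul, dotProduct, Q, c, mul_comm]
    have h2 := Algebra.discr_of_matrix_vecMul (A := ℚ) c Q
    rw [h1, T.discr_basis, hc1, Algebra.discr_reindex ℚ (integralBasis K) e, ← coe_discr] at h2
    have h3 : Q.det = (P.det : ℚ) := by
      rw [Int.cast_det]
    rw [h3] at h2
    exact_mod_cast h2.symm

theorem Trib.nrComplex (T : Trib K) : InfinitePlace.nrComplexPlaces K = 1 := by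
  obtain ⟨P, e, -, h⟩ := T.index
  have h1 := InfinitePlace.card_add_two_mul_card_eq_rank K
  rw [T.finrank] at h1
  have hs := sign_discr K
  have hneg : discr K < 0 := by
    by_contra hcon
    push Not at hcon
    nlinarith [sq_nonneg P.det, mul_nonneg (sq_nonneg P.det) hcon]
  rw [Int.sign_eq_neg_one_of_neg hneg] at hs
  have h2 : InfinitePlace.nrComplexPlaces K ≠ 0 := by
    intro h0
    rw [h0] at hs
    norm_num at hs
  omega

theorem Trib.rank_one (T : Trib K) : Units.rank K = 1 := by
  have h1 := InfinitePlace.card_add_two_mul_card_eq_rank K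
  rw [T.finrank, T.nrComplex] at h1
  rw [Units.rank, InfinitePlace.card_eq_nrRealPlaces_add_nrComplexPlaces, T.nrComplex]
  omega

theorem Trib.pid (T : Trib K) : IsPrincipalIdealRing (𝓞 K) := by
  obtain ⟨P, e, -, h⟩ := T.index
  apply RingOfIntegers.isPrincipalIdealRing_of_abs_discr_lt
  rw [T.finrank, T.nrComplex]
  have hd : |discr K| ≤ 44 := by
    have h1 : P.det ≠ 0 := by
      intro h0
      rw [h0] at h
      norm_num at h
    have h2 : 1 ≤ P.det ^ 2 := by
      have := sq_pos_of_ne_zero h1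
      omega
    have h3 : P.det ^ 2 * |discr K| = 44 := by
      rw [← abs_of_nonneg (sq_nonneg P.det), ← abs_mul, h]
      norm_num
    nlinarith [abs_nonneg (discr K)]
  have hd' : ((|discr K| : ℤ) : ℝ) ≤ 44 := by exact_mod_cast hd
  have hpi := Real.pi_gt_three
  refine lt_of_le_of_lt hd' ?_
  norm_num [Nat.factorial]
  nlinarith

theorem Trib.index_unit : ∃ P : Matrix (Fin 3) (Fin 3) ℤ,
    ∃ e : Free.ChooseBasisIndex ℤ (𝓞 K) ≃ Fin 3,
    (∀ j, T.b j = ∑ i, (P i j : K) * ((RingOfIntegers.basis K).reindex e i : 𝓞 K)) ∧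
    IsUnit P.det := by
  obtain ⟨P, e, hP, h⟩ := T.index
  refine ⟨P, e, hP, ?_⟩
  have hM := abs_discr_ge' K
  rw [T.finrank, T.nrComplex] at hM
  have hpi := Real.pi_gt_three
  have h12 : (11 : ℝ) < ((|discr K| : ℤ) : ℝ) := by
    refine lt_of_lt_of_le ?_ hM
    rw [lt_div_iff₀ (by positivity)]
    norm_num [Nat.factorial]
    have h43 : 4 / Real.pi < 4 / 3 := by gcongr
    have h0 : 0 < 4 / Real.pi := by positivity
    nlinarith
  have h13 : 12 ≤ |discr K| := by
    have : (11 : ℤ) < |discr K| := by exact_mod_cast h12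
    omega
  have h3 : P.det ^ 2 * |discr K| = 44 := by
    rw [← abs_of_nonneg (sq_nonneg P.det), ← abs_mul, h]
    norm_num
  have h4 : P.det ^ 2 < 4 := by nlinarith
  have h5 : P.det < 2 := by nlinarith
  have h6 : -2 < P.det := by nlinarith
  have h7 : P.det ≠ 0 := by
    intro h0
    rw [h0] at h
    norm_num at h
  rw [Int.isUnit_iff]
  omega

/-- the generator as an algebraic integer -/
def Trib.U : 𝓞 K := ⟨T.u, T.u_int⟩

theorem Trib.coeU : ((T.U : 𝓞 K) : K) = T.u := rfl

theorem Trib.hU : T.U ^ 3 = 2 - 2 * T.U ^ 2 := by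
  apply RingOfIntegers.ext
  have h2 : ((2 : 𝓞 K) : K) = 2 := map_ofNat (algebraMap (𝓞 K) K) 2
  simp only [map_sub, map_mul, map_pow, T.coeU, h2]
  exact T.hu

theorem Trib.coord (z : 𝓞 K) : ∃ x y w : ℤ, z = (x : 𝓞 K) + y * T.U + w * T.U ^ 2 := by
  obtain ⟨P, e, hP, hdet⟩ := T.index_unit
  let B := (RingOfIntegers.basis K).reindex e
  let t : Fin 3 → 𝓞 K := ![1, T.U, T.U ^ 2]
  have ht : ∀ j, t j = ∑ i, (P i j : 𝓞 K) * B i := by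
    intro j
    apply RingOfIntegers.ext
    have h1 := hP j
    have h2 : ((t j : 𝓞 K) : K) = T.b j := by
      fin_cases j <;> simp [t, T.b0, T.b1, T.b2, T.coeU]
    rw [h2, h1]
    simp [B]
  have hB : ∀ i, B i = ∑ j, (P⁻¹ j i : 𝓞 K) * t j := by
    intro i
    have h1 : P * P⁻¹ = 1 := Matrix.mul_nonsing_inv P hdet
    have h2 : ∀ k, ∑ j, P k j * P⁻¹ j i = if k = i then 1 else 0 := by
      intro k
      have := congrFun (congrFun h1 k) i
      rwa [Matrix.mul_apply, Matrix.one_apply] at this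
    calc B i = ∑ k, ((if k = i then 1 else 0 : ℤ) : 𝓞 K) * B k := by simp
      _ = ∑ k, ((∑ j, P k j * P⁻¹ j i : ℤ) : 𝓞 K) * B k := by simp_rw [h2]
      _ = ∑ j, (P⁻¹ j i : 𝓞 K) * t j := by
        simp_rw [ht, Finset.mul_sum]
        rw [Finset.sum_comm]
        refine Finset.sum_congr rfl fun k _ => ?_
        push_cast
        rw [Finset.sum_mul]
        refine Finset.sum_congr rfl fun j _ => ?_
        ring
  have hz : z = ∑ i, B.repr z i • B i := (B.sum_repr z).symm
  refine ⟨∑ i, B.repr z i * P⁻¹ 0 i, ∑ i, B.repr z i * P⁻¹ 1 i, ∑ i, B.repr z i * P⁻¹ 2 i, ?_⟩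
  conv_lhs => rw [hz]
  simp only [zsmul_eq_mul, Fin.sum_univ_three]
  rw [hB 0, hB 1, hB 2]
  simp only [Fin.sum_univ_three, t]
  push_cast
  simp
  ring

theorem Trib.indepZ {x y w x' y' w' : ℤ}
    (h : (x : 𝓞 K) + y * T.U + w * T.U ^ 2 = (x' : 𝓞 K) + y' * T.U + w' * T.U ^ 2) :
    x = x' ∧ y = y' ∧ w = w' := by
  have h1 := congrArg (algebraMap (𝓞 K) K) h
  simp only [map_add, map_mul, map_pow, map_intCast] at h1
  have h2 := T.indep (x := x) (y := y) (w := w) (x' := x') (y' := y') (w' := w')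
    (by push_cast; exact h1)
  exact_mod_cast h2

theorem Trib.sq_coord (x y w : ℤ) : ((x : 𝓞 K) + y * T.U + w * T.U ^ 2) ^ 2 =
    ((x ^ 2 + 4 * y * w - 4 * w ^ 2 : ℤ) : 𝓞 K) + (2 * x * y + 2 * w ^ 2 : ℤ) * T.U
      + (y ^ 2 + 2 * x * w - 4 * y * w + 4 * w ^ 2 : ℤ) * T.U ^ 2 := by
  push_cast
  linear_combination ((2 : 𝓞 K) * y * w + w ^ 2 * (T.U - 2)) * T.hU

theorem Trib.eta_mul_coord (p q r : ℤ) : (1 + T.U) * ((p : 𝓞 K) + q * T.U + r * T.U ^ 2) =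
    ((p + 2 * r : ℤ) : 𝓞 K) + (p + q : ℤ) * T.U + (q - r : ℤ) * T.U ^ 2 := by
  push_cast
  linear_combination (r : 𝓞 K) * T.hU

/-- the fundamental unit `1 + u` -/
def Trib.eta : (𝓞 K)ˣ where
  val := 1 + T.U
  inv := T.U ^ 2 + T.U - 1
  val_inv := by linear_combination T.hU
  inv_val := by linear_combination T.hU

theorem Trib.eta_val : (T.eta : 𝓞 K) = 1 + T.U := rfl

theorem Trib.eta_not_sq (v : 𝓞 K) : (1 + T.U) ≠ v ^ 2 := by
  intro h
  obtain ⟨x, y, w, rfl⟩ := T.coord v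
  rw [T.sq_coord] at h
  have h' : ((1 : ℤ) : 𝓞 K) + (1 : ℤ) * T.U + (0 : ℤ) * T.U ^ 2 =
      ((x ^ 2 + 4 * y * w - 4 * w ^ 2 : ℤ) : 𝓞 K) + (2 * x * y + 2 * w ^ 2 : ℤ) * T.U
      + (y ^ 2 + 2 * x * w - 4 * y * w + 4 * w ^ 2 : ℤ) * T.U ^ 2 := by
    push_cast at h ⊢
    linear_combination h
  obtain ⟨h0, h1, h2⟩ := T.indepZ h'
  have key : ((x + 6 * y + 36 * w) ^ 2 : ZMod 11) = 7 := by
    have e0 := congrArg (Int.cast : ℤ → ZMod 11) h0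
    have e1 := congrArg (Int.cast : ℤ → ZMod 11) h1
    have e2 := congrArg (Int.cast : ℤ → ZMod 11) h2
    push_cast at e0 e1 e2
    have h11 : (11 : ZMod 11) = 0 := by decide
    linear_combination -e0 - 6 * e1 - 36 * e2 + (52 * y * w + 104 * w ^ 2) * h11
  generalize ((x : ZMod 11) + 6 * y + 36 * w) = m at key
  revert m
  decide

theorem Trib.eta_not_neg_sq (v : 𝓞 K) : (1 + T.U) ≠ -v ^ 2 := by
  intro h
  obtain ⟨x, y, w, rfl⟩ := T.coord v
  rw [T.sq_coord] at h
  have h' : ((-1 : ℤ) : 𝓞 K) + (-1 : ℤ) * T.U + (0 : ℤ) * T.U ^ 2 =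
      ((x ^ 2 + 4 * y * w - 4 * w ^ 2 : ℤ) : 𝓞 K) + (2 * x * y + 2 * w ^ 2 : ℤ) * T.U
      + (y ^ 2 + 2 * x * w - 4 * y * w + 4 * w ^ 2 : ℤ) * T.U ^ 2 := by
    push_cast at h ⊢
    linear_combination -h
  obtain ⟨h0, h1, h2⟩ := T.indepZ h'
  have key : ((x + 8 * y + 64 * w) ^ 2 : ZMod 11) = 2 := by
    have e0 := congrArg (Int.cast : ℤ → ZMod 11) h0
    have e1 := congrArg (Int.cast : ℤ → ZMod 11) h1
    have e2 := congrArg (Int.cast : ℤ → ZMod 11) h2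
    push_cast at e0 e1 e2
    have h11 : (11 : ZMod 11) = 0 := by decide
    linear_combination -e0 - 8 * e1 - 64 * e2 + (116 * y * w + 348 * w ^ 2 - 1) * h11
  generalize ((x : ZMod 11) + 8 * y + 64 * w) = m at key
  revert m
  decide

theorem Trib.exists_fund (T : Trib K) :
    ∃ ε : (𝓞 K)ˣ, ∀ v : (𝓞 K)ˣ, ∃ n : ℤ, v = ε ^ n ∨ v = -ε ^ n := by
  have hr := T.rank_one
  let i0 : Fin (Units.rank K) := ⟨0, by rw [hr]; norm_num⟩
  have : Subsingleton (Fin (Units.rank K)) := by rw [hr]; infer_instance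
  refine ⟨Units.fundSystem K i0, fun v => ?_⟩
  obtain ⟨⟨ζ, f⟩, h, -⟩ := Units.exist_unique_eq_mul_prod K v
  refine ⟨f i0, ?_⟩
  simp only at h
  rw [Fintype.prod_subsingleton _ i0] at h
  rcases Units.torsion_eq_one_or_neg_one_of_odd_finrank (by rw [T.finrank]; decide) ζ with h1 | h1
  · left; rw [h, h1]; simp
  · right; rw [h, h1]; simp

theorem Trib.units (v : (𝓞 K)ˣ) : ∃ z : 𝓞 K, (v : 𝓞 K) = z ^ 2 ∨ (v : 𝓞 K) = -z ^ 2 ∨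
    (v : 𝓞 K) = (1 + T.U) * z ^ 2 ∨ (v : 𝓞 K) = -((1 + T.U) * z ^ 2) := by
  obtain ⟨ε, hε⟩ := T.exists_fund
  obtain ⟨m, hm⟩ := hε T.eta
  have hodd : Odd m := by
    rw [← Int.not_even_iff_odd]
    rintro ⟨k, rfl⟩
    have hs : ε ^ (k + k) = (ε ^ k) ^ 2 := by rw [zpow_add, sq]
    rw [hs] at hm
    rcases hm with hm | hm
    · exact T.eta_not_sq ((ε ^ k : (𝓞 K)ˣ) : 𝓞 K) (by rw [← T.eta_val, hm]; simp)
    · exact T.eta_not_neg_sq ((ε ^ k : (𝓞 K)ˣ) : 𝓞 K) (by rw [← T.eta_val, hm]; simp)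
  obtain ⟨n, hn⟩ := hε v
  rcases Int.even_or_odd n with ⟨k, rfl⟩ | hno
  · have hs : ε ^ (k + k) = (ε ^ k) ^ 2 := by rw [zpow_add, sq]
    rw [hs] at hn
    refine ⟨((ε ^ k : (𝓞 K)ˣ) : 𝓞 K), ?_⟩
    rcases hn with hn | hn
    · left; rw [hn]; simp
    · right; left; rw [hn]; simp
  · obtain ⟨k, hk⟩ := hno.sub_odd hodd
    have hs : ε ^ n = ε ^ m * (ε ^ k) ^ 2 := by
      rw [sq, ← zpow_add, ← zpow_add]; congr 1; omega
    refine ⟨((ε ^ k : (𝓞 K)ˣ) : 𝓞 K), ?_⟩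
    rw [hs] at hn
    rw [← T.eta_val]
    rcases hm with hm | hm <;> rcases hn with hn | hn <;> rw [hm, hn] <;> simp


theorem int_dvd_absurd {R : Type*} [CommRing R] {p : R} (hp : ¬ IsUnit p) {m n : ℤ}
    (hmn : IsCoprime m n) (hm : p ∣ (m : R)) (hn : p ∣ (n : R)) : False := by
  obtain ⟨x, y, h⟩ := hmn
  apply hp
  apply isUnit_of_dvd_one
  have : (1 : R) = x * m + y * n := by
    have h' := congrArg (Int.cast : ℤ → R) h
    push_cast at h'
    exact h'.symm
  rw [this]
  exact dvd_add (Dvd.dvd.mul_left hm _) (Dvd.dvd.mul_left hn _)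

/-- Common prime divisors of `b - ξ c` and its cofactor lie over `2`. -/
theorem Trib.prime_dvd_two {b c : ℤ} (hbc : IsCoprime b c) (h11 : IsCoprime b 11)
    {X p : 𝓞 K} (hX : X ^ 3 + 12 * X ^ 2 + 44 * X + 44 = 0) (hp : Prime p)
    (hA : p ∣ (b : 𝓞 K) - X * c)
    (hA' : p ∣ (b : 𝓞 K) ^ 2 + (12 + X) * b * c + (44 + 12 * X + X ^ 2) * c ^ 2) :
    p ∣ 2 ∧ ¬ p ∣ (c : 𝓞 K) := by
  have hc : ¬ p ∣ (c : 𝓞 K) := by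
    intro hc
    have hb : p ∣ (b : 𝓞 K) := by
      have := dvd_add hA (Dvd.dvd.mul_left hc X)
      simpa using this
    exact int_dvd_absurd hp.not_isUnit hbc hb hc
  refine ⟨?_, hc⟩
  have h1 : p ∣ (c : 𝓞 K) ^ 2 * (3 * X ^ 2 + 24 * X + 44) := by
    have := dvd_sub hA' (Dvd.dvd.mul_left hA ((b : 𝓞 K) + (12 + 2 * X) * c))
    convert this using 1
    ring
  have h2 : p ∣ 3 * X ^ 2 + 24 * X + 44 :=
    (hp.dvd_or_dvd h1).resolve_left fun h => hc (hp.dvd_of_dvd_pow h)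
  have h3 : p ∣ (2 : 𝓞 K) ^ 4 * 11 := by
    have := Dvd.dvd.mul_right h2 (-176 - 156 * X - 24 * X ^ 2)
    convert this using 1
    linear_combination (180 + 72 * X) * hX
  rcases hp.dvd_or_dvd h3 with h4 | h4
  · exact hp.dvd_of_dvd_pow h4
  · exfalso
    have h4' : p ∣ ((11 : ℤ) : 𝓞 K) := by exact_mod_cast h4
    have h5 : p ∣ X ^ 2 * (X + 1) := by
      have := Dvd.dvd.mul_right h4 (-(X ^ 2 + 4 * X + 4))
      convert this using 1
      linear_combination hX
    rcases hp.dvd_or_dvd h5 with h6 | h6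
    · have h7 : p ∣ X := hp.dvd_of_dvd_pow h6
      have hb : p ∣ (b : 𝓞 K) := by
        have := dvd_add hA (Dvd.dvd.mul_right h7 (c : 𝓞 K))
        simpa using this
      exact int_dvd_absurd hp.not_isUnit h11 hb h4'
    · have h8 : p ∣ ((23 : ℤ) : 𝓞 K) := by
        have := dvd_sub h2 (Dvd.dvd.mul_right h6 (3 * X + 21))
        convert this using 1
        push_cast
        ring
      exact int_dvd_absurd hp.not_isUnit (by norm_num : IsCoprime (23 : ℤ) 11) h8 h4'

theorem Trib.heart_unit {b c t : ℤ} (hbc : IsCoprime b c) (h11 : IsCoprime b 11)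
    (hpar : Odd b ∨ 4 ∣ b)
    (hF : b ^ 3 + 12 * b ^ 2 * c + 44 * b * c ^ 2 + 44 * c ^ 3 = t ^ 2) (ht : t ≠ 0) :
    ∃ (v : (𝓞 K)ˣ) (z : 𝓞 K), (b : 𝓞 K) - (-4 + 2 * T.U + T.U ^ 2) * c = v * z ^ 2 := by
  have := T.pid
  have hU := T.hU
  obtain ⟨X, hXdef⟩ : ∃ X : 𝓞 K, X = -4 + 2 * T.U + T.U ^ 2 := ⟨_, rfl⟩
  have hX : X ^ 3 + 12 * X ^ 2 + 44 * X + 44 = 0 := by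
    rw [hXdef]
    linear_combination (T.U ^ 3 + 4 * T.U ^ 2 + 4 * T.U + 2) * hU
  rw [← hXdef]
  have hFK : (b : 𝓞 K) ^ 3 + 12 * b ^ 2 * c + 44 * b * c ^ 2 + 44 * c ^ 3 = t ^ 2 := by
    exact_mod_cast congrArg (Int.cast : ℤ → 𝓞 K) hF
  have hprod : ((b : 𝓞 K) - X * c) *
      ((b : 𝓞 K) ^ 2 + (12 + X) * b * c + (44 + 12 * X + X ^ 2) * c ^ 2) = (t : 𝓞 K) ^ 2 := by
    linear_combination hFK - (c : 𝓞 K) ^ 3 * hX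
  have htK : (t : 𝓞 K) ^ 2 ≠ 0 := by
    apply pow_ne_zero
    exact_mod_cast ht
  have hA'0 : ((b : 𝓞 K) ^ 2 + (12 + X) * b * c + (44 + 12 * X + X ^ 2) * c ^ 2) ≠ 0 := by
    intro h0
    rw [h0, mul_zero] at hprod
    exact htK hprod.symm
  rcases hpar with hodd | ⟨d, hd⟩
  · have hcop : IsCoprime ((b : 𝓞 K) - X * c)
        ((b : 𝓞 K) ^ 2 + (12 + X) * b * c + (44 + 12 * X + X ^ 2) * c ^ 2) := by
      apply isCoprime_of_prime_dvd (fun h => hA'0 h.2)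
      intro p hp hA hA'
      obtain ⟨h2, -⟩ := Trib.prime_dvd_two hbc h11 hX hp hA hA'
      have ht : p ∣ ((t ^ 2 : ℤ) : 𝓞 K) := by
        push_cast
        rw [← hprod]
        exact Dvd.dvd.mul_right hA _
      have h2' : p ∣ ((2 : ℤ) : 𝓞 K) := by exact_mod_cast h2
      refine int_dvd_absurd hp.not_isUnit ?_ ht h2'
      rw [← hF]
      obtain ⟨k, rfl⟩ := hodd
      exact ⟨1, -(4 * k ^ 3 + 6 * k ^ 2 + 3 * k + 6 * (2 * k + 1) ^ 2 * c
        + 22 * (2 * k + 1) * c ^ 2 + 22 * c ^ 3), by ring⟩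
    obtain ⟨z, v, hz⟩ := exists_associated_pow_of_mul_eq_pow' hcop hprod
    exact ⟨v, z, by rw [← hz]; ring⟩
  · subst hd
    have hdK : ((4 * d : ℤ) : 𝓞 K) = 4 * d := by push_cast; ring
    rw [hdK] at hprod hA'0 ⊢
    obtain ⟨s, hs⟩ : ∃ s, t = 2 * s := by
      have : Even (t ^ 2) := by
        rw [← hF]
        exact ⟨32 * d ^ 3 + 96 * d ^ 2 * c + 88 * d * c ^ 2 + 22 * c ^ 3, by ring⟩
      have h2 : Even t := by
        rw [Int.even_pow] at this
        exact this.1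
      obtain ⟨s, hs⟩ := h2
      exact ⟨s, by omega⟩
    have hAfac : 4 * (d : 𝓞 K) - X * c =
        T.U ^ 2 * (2 * (T.U + 2) * d - (T.U ^ 2 - 3) * c) := by
      rw [hXdef]
      linear_combination (-(2 : 𝓞 K) * d + T.U * c - 2 * c) * hU
    have hU0 : T.U ≠ 0 := by
      intro h0
      rw [h0] at hU
      norm_num at hU
    have hA'1 := hA'0
    rw [hAfac, hs] at hprod
    obtain ⟨A', hA'def⟩ : ∃ A' : 𝓞 K, A' = (4 * (d : 𝓞 K)) ^ 2 + (12 + X) * (4 * (d : 𝓞 K)) * c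
      + (44 + 12 * X + X ^ 2) * c ^ 2 := ⟨_, rfl⟩
    obtain ⟨A1, hA1def⟩ : ∃ A1 : 𝓞 K, A1 = 2 * (T.U + 2) * d - (T.U ^ 2 - 3) * c := ⟨_, rfl⟩
    rw [← hA'def, ← hA1def] at hprod
    rw [← hA'def] at hA'1
    have hprod2 : A1 * A' = (T.U * (T.U + 2) * s) ^ 2 := by
      apply mul_left_cancel₀ (pow_ne_zero 2 hU0)
      push_cast at hprod
      linear_combination hprod - (s : 𝓞 K) ^ 2 * (T.U ^ 3 + 2 * T.U ^ 2 + 2) * hU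
    have hcop : IsCoprime A1 A' := by
      apply isCoprime_of_prime_dvd (fun h => hA'1 h.2)
      intro p hp hA hA'
      obtain ⟨h2, hnc⟩ := Trib.prime_dvd_two hbc h11 hX hp
        (by rw [hdK, hAfac, ← hA1def]; exact Dvd.dvd.mul_left hA _)
        (by rw [hdK, ← hA'def]; exact hA')
      have hpU : p ∣ T.U := by
        apply hp.dvd_of_dvd_pow (n := 3)
        rw [hU]
        exact dvd_sub h2 (Dvd.dvd.mul_right h2 _)
      apply hnc
      have e : (c : 𝓞 K) = A1 - 2 * ((T.U + 2) * d) + T.U * (T.U * c) - 2 * c := by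
        rw [hA1def]; ring
      rw [e]
      exact dvd_sub (dvd_add (dvd_sub hA (Dvd.dvd.mul_right h2 _)) (Dvd.dvd.mul_right hpU _))
        (Dvd.dvd.mul_right h2 _)
    obtain ⟨z, v, hz⟩ := exists_associated_pow_of_mul_eq_pow' hcop hprod2
    exact ⟨v, T.U * z, by rw [hAfac, ← hA1def, ← hz]; ring⟩

/-- Coordinates of the square root after descent. -/
theorem Trib.heart {b c t : ℤ} (T : Trib K) (hbc : IsCoprime b c) (h11 : IsCoprime b 11)
    (hpar : Odd b ∨ 4 ∣ b)
    (hF : b ^ 3 + 12 * b ^ 2 * c + 44 * b * c ^ 2 + 44 * c ^ 3 = t ^ 2) (ht : t ≠ 0) :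
    ∃ q0 q1 q2 x y w : ℤ, q0 = x ^ 2 + 4 * y * w - 4 * w ^ 2 ∧ q1 = 2 * x * y + 2 * w ^ 2 ∧
      q2 = y ^ 2 + 2 * x * w - 4 * y * w + 4 * w ^ 2 ∧ ∃ e : ℤ, (e = 1 ∨ e = -1) ∧
      ((b + 4 * c = e * q0 ∧ -2 * c = e * q1 ∧ -c = e * q2) ∨
       (b + 4 * c = e * (q0 + 2 * q2) ∧ -2 * c = e * (q0 + q1) ∧ -c = e * (q1 - q2))) := by
  obtain ⟨v, z, hz⟩ := T.heart_unit hbc h11 hpar hF ht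
  obtain ⟨z', hz'⟩ := T.units v
  obtain ⟨x, y, w, hx⟩ := T.coord (z' * z)
  have hsq := T.sq_coord x y w
  rw [← hx] at hsq
  refine ⟨_, _, _, x, y, w, rfl, rfl, rfl, ?_⟩
  generalize x ^ 2 + 4 * y * w - 4 * w ^ 2 = q0 at *
  generalize 2 * x * y + 2 * w ^ 2 = q1 at *
  generalize y ^ 2 + 2 * x * w - 4 * y * w + 4 * w ^ 2 = q2 at *
  have heta := T.eta_mul_coord q0 q1 q2
  rw [← hsq] at heta
  push_cast at heta
  rcases hz' with h | h | h | h
  · refine ⟨1, Or.inl rfl, Or.inl ?_⟩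
    apply T.indepZ
    push_cast
    linear_combination hz + z ^ 2 * h + hsq
  · refine ⟨-1, Or.inr rfl, Or.inl ?_⟩
    apply T.indepZ
    push_cast
    linear_combination hz + z ^ 2 * h - hsq
  · refine ⟨1, Or.inl rfl, Or.inr ?_⟩
    apply T.indepZ
    push_cast
    linear_combination hz + z ^ 2 * h + heta
  · refine ⟨-1, Or.inr rfl, Or.inr ?_⟩
    apply T.indepZ
    push_cast
    linear_combination hz + z ^ 2 * h - heta

end

/-- norm form of the cubic order -/
def nf (x y w : ℤ) : ℤ :=
  x * (x * (x - 2 * y + 4 * w) - (y - 2 * w) * (2 * w))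
  - y * (2 * w * (x - 2 * y + 4 * w) - (y - 2 * w) * (2 * y - 4 * w))
  + w * (2 * w * (2 * w) - x * (2 * y - 4 * w))

theorem nf_neg (x y w : ℤ) : nf (-x) (-y) (-w) = -nf x y w := by
  unfold nf; ring

theorem nf_eta (p q r : ℤ) : nf (p + 2 * r) (p + q) (q - r) = nf p q r := by
  unfold nf; ring

theorem nf_sq (x y w : ℤ) : nf (x ^ 2 + 4 * y * w - 4 * w ^ 2) (2 * x * y + 2 * w ^ 2)
    (y ^ 2 + 2 * x * w - 4 * y * w + 4 * w ^ 2) = nf x y w ^ 2 := by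
  unfold nf; ring

theorem nf_A (b c : ℤ) : nf (b + 4 * c) (-2 * c) (-c) =
    b ^ 3 + 12 * b ^ 2 * c + 44 * b * c ^ 2 + 44 * c ^ 3 := by
  unfold nf; ring

theorem mod_eleven : ∀ b v m : ZMod 11, b = m ^ 2 → -3 * b ^ 3 = v ^ 2 → b = 0 := by
  decide

theorem mod_four : ∀ x y w v : ZMod 4, ∀ q0 q1 q2 b c : ZMod 4,
    q0 = x ^ 2 + 4 * y * w - 4 * w ^ 2 → q1 = 2 * x * y + 2 * w ^ 2 →
    q2 = y ^ 2 + 2 * x * w - 4 * y * w + 4 * w ^ 2 → c = q2 - q1 → b = q0 + 2 * q2 - 4 * c →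
    -2 * c = q0 + q1 → -(3 * b ^ 3 + 22 * b ^ 2 * c + 55 * b * c ^ 2 + 44 * c ^ 3) = v ^ 2 →
    2 * b = 0 ∧ 2 * c = 0 := by
  intro x y w v q0 q1 q2 b c h0 h1 h2 hc hb
  subst h0 h1 h2
  subst hc
  subst hb
  revert x y w v
  decide

theorem core {K : Type} [Field K] [NumberField K] (T : Trib K) {b c t v : ℤ}
    (hbc : IsCoprime b c) (h11 : IsCoprime b 11) (hpar : Odd b ∨ 4 ∣ b)
    (hF : b ^ 3 + 12 * b ^ 2 * c + 44 * b * c ^ 2 + 44 * c ^ 3 = t ^ 2) (ht : t ≠ 0)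
    (hG : -(3 * b ^ 3 + 22 * b ^ 2 * c + 55 * b * c ^ 2 + 44 * c ^ 3) = v ^ 2) : False := by
  obtain ⟨q0, q1, q2, x, y, w, h0, h1, h2, e, he, h⟩ := T.heart hbc h11 hpar hF ht
  have hn := nf_sq x y w
  rw [← h0, ← h1, ← h2] at hn
  have hA := nf_A b c
  rw [hF] at hA
  have he1 : e = 1 := by
    rcases he with he | rfl
    · exact he
    · exfalso
      have hN : t ^ 2 = -nf x y w ^ 2 := by
        rcases h with ⟨a1, a2, a3⟩ | ⟨a1, a2, a3⟩
        · rw [← hA, a1, a2, a3, neg_one_mul, neg_one_mul, neg_one_mul, nf_neg, hn]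
        · rw [← hA, a1, a2, a3, neg_one_mul, neg_one_mul, neg_one_mul, nf_neg, nf_eta, hn]
      have : 0 < t ^ 2 := by positivity
      nlinarith [sq_nonneg (nf x y w)]
  subst he1
  simp only [one_mul] at h
  rcases h with ⟨a1, a2, a3⟩ | ⟨a1, a2, a3⟩
  · have hb0 : (b : ZMod 11) = 0 := by
      apply mod_eleven b v (x + 6 * y + 36 * w)
      · have hz : b = (x + 6 * y + 36 * w) ^ 2 + 11 * (4 * c - 52 * 0 - (52 * y * w + 104 * w ^ 2)
            - 0) := by
          subst h0 h1 h2
          linear_combination a1 + 6 * a2 + 36 * a3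
        have := congrArg (Int.cast : ℤ → ZMod 11) hz
        push_cast at this
        have h11 : (11 : ZMod 11) = 0 := by decide
        rw [this, h11, zero_mul, add_zero]
      · have := congrArg (Int.cast : ℤ → ZMod 11) hG
        push_cast at this
        have h11 : (11 : ZMod 11) = 0 := by decide
        linear_combination this + (2 * (b : ZMod 11) ^ 2 * c + 5 * b * c ^ 2 + 4 * c ^ 3) * h11
    rw [show (11 : ℕ) = 11 from rfl] at hb0
    have hd : (11 : ℤ) ∣ b := by exact_mod_cast (ZMod.intCast_zmod_eq_zero_iff_dvd b 11).1 hb0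
    have := h11.isUnit_of_dvd' hd dvd_rfl
    rw [Int.isUnit_iff] at this
    omega
  · have h4 := mod_four x y w v q0 q1 q2 b c
      (by rw [h0]; push_cast; ring) (by rw [h1]; push_cast; ring) (by rw [h2]; push_cast; ring)
      (by rw [show c = q2 - q1 by omega]; push_cast; ring)
      (by rw [show b = q0 + 2 * q2 - 4 * c by omega]; push_cast; ring)
      (by have := congrArg (Int.cast : ℤ → ZMod 4) a2; push_cast at this; exact this)
      (by have := congrArg (Int.cast : ℤ → ZMod 4) hG; push_cast at this; exact this)
    have hb : (4 : ℤ) ∣ 2 * b := by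
      have := h4.1
      exact_mod_cast (ZMod.intCast_zmod_eq_zero_iff_dvd (2 * b) 4).1 (by push_cast; exact this)
    have hc : (4 : ℤ) ∣ 2 * c := by
      have := h4.2
      exact_mod_cast (ZMod.intCast_zmod_eq_zero_iff_dvd (2 * c) 4).1 (by push_cast; exact this)
    have hb2 : (2 : ℤ) ∣ b := by omega
    have hc2 : (2 : ℤ) ∣ c := by omega
    have := hbc.isUnit_of_dvd' hb2 hc2
    rw [Int.isUnit_iff] at this
    omega

open Polynomial in
/-- the defining cubic -/
noncomputable def cub : ℤ[X] := X ^ 3 + (2 * X ^ 2 - 2)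

theorem cub_monic : cub.Monic := by
  apply Polynomial.monic_X_pow_add
  compute_degree!

theorem cub_deg : cub.natDegree = 3 := by
  unfold cub
  compute_degree!

theorem cub_irr : Irreducible cub := by
  have hp : (Ideal.span {(2 : ℤ)}).IsPrime := by
    rw [Ideal.span_singleton_prime (by norm_num)]
    exact Int.prime_two
  refine Polynomial.IsEisensteinAt.irreducible (𝓟 := Ideal.span {(2 : ℤ)}) ?_ hp
    cub_monic.isPrimitive (by rw [cub_deg]; norm_num)
  have hc : ∀ n, cub.coeff n = (if n = 3 then 1 else 0) + ((if n = 2 then 2 else 0)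
      - (if n = 0 then 2 else 0)) := by
    intro n
    have : cub = Polynomial.X ^ 3 + (Polynomial.C 2 * Polynomial.X ^ 2 - Polynomial.C 2) := by
      simp [cub]
    rw [this]
    simp only [Polynomial.coeff_add, Polynomial.coeff_sub, Polynomial.coeff_C_mul,
      Polynomial.coeff_X_pow, Polynomial.coeff_C]
    simp
  constructor
  · rw [cub_monic.leadingCoeff, Ideal.mem_span_singleton]
    norm_num
  · intro n hn
    rw [cub_deg] at hn
    rw [hc, Ideal.mem_span_singleton]
    interval_cases n <;> norm_num
  · rw [hc, Ideal.span_singleton_pow, Ideal.mem_span_singleton]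
    norm_num

/-- the defining cubic over the rationals -/
noncomputable def cubQ : Polynomial ℚ := cub.map (Int.castRingHom ℚ)

theorem cubQ_irr : Irreducible cubQ :=
  (Polynomial.Monic.irreducible_iff_irreducible_map_fraction_map (K := ℚ) cub_monic).1 cub_irr

theorem cubQ_deg : cubQ.natDegree = 3 := by
  unfold cubQ
  rw [cub_monic.natDegree_map, cub_deg]

theorem cubQ_ne : cubQ ≠ 0 := cubQ_irr.ne_zero

instance cubFact : Fact (Irreducible cubQ) := ⟨cubQ_irr⟩

instance : NumberField (AdjoinRoot cubQ) where
  to_charZero := charZero_of_injective_algebraMap (algebraMap ℚ (AdjoinRoot cubQ)).injective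
  to_finiteDimensional := (AdjoinRoot.powerBasis cubQ_ne).finite

/-- the cubic field of discriminant `-44` -/
noncomputable def theTrib : Trib (AdjoinRoot cubQ) where
  u := AdjoinRoot.root cubQ
  hu := by
    have e : Polynomial.X ^ 3 + (2 * Polynomial.X ^ 2 - 2) = cubQ := by
      simp [cubQ, cub]
    have h := (congrArg (AdjoinRoot.mk cubQ) e).trans AdjoinRoot.mk_self
    simp only [map_add, map_sub, map_mul, map_pow, AdjoinRoot.mk_X, map_ofNat] at h
    linear_combination h
  b := (AdjoinRoot.powerBasis cubQ_ne).basis.reindex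
    (finCongr (by rw [AdjoinRoot.powerBasis_dim, cubQ_deg]))
  b0 := by simp
  b1 := by simp
  b2 := by simp
theorem mod_eleven_ab : ∀ a b R : ZMod 11,
    -((4 * a ^ 3 - 4 * a ^ 2 * b - 28 * a * b ^ 2 + 41 * b ^ 3) *
      (4 * a ^ 3 + 7 * a ^ 2 * b - 6 * a * b ^ 2 + 19 * b ^ 3)) = R ^ 2 → a - 4 * b = 0 := by
  decide

/-- Coprime integers `f, g` with `f` nonzero and `-(f g)` a square. -/
theorem split_sq {f g k : ℤ} (hc : IsCoprime f g) (h : -(f * g) = k ^ 2) (hf : f ≠ 0) :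
    ∃ t v : ℤ, t ≠ 0 ∧ ((f = t ^ 2 ∧ -g = v ^ 2) ∨ (-f = t ^ 2 ∧ g = v ^ 2)) := by
  obtain ⟨t, ht⟩ := Int.sq_of_isCoprime (hc.neg_right) (by linear_combination h : f * -g = k ^ 2)
  obtain ⟨v, hv⟩ := Int.sq_of_isCoprime (hc.neg_right.symm)
    (by linear_combination h : -g * f = k ^ 2)
  have ht0 : t ≠ 0 := by
    rintro rfl
    apply hf
    rcases ht with ht | ht <;> simpa using ht
  have htp : 0 < t ^ 2 := by positivity
  have hv0 := sq_nonneg v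
  have hk0 := sq_nonneg k
  rcases ht with ht | ht <;> rcases hv with hv | hv
  · exact ⟨t, v, ht0, Or.inl ⟨ht, hv⟩⟩
  · refine ⟨t, 0, ht0, Or.inl ⟨ht, ?_⟩⟩
    have : t ^ 2 * v ^ 2 ≤ 0 := by
      rw [ht] at h
      nlinarith
    have : v ^ 2 = 0 := by nlinarith
    rw [hv, this]; norm_num
  · refine ⟨t, 0, ht0, Or.inr ⟨by rw [ht]; ring, ?_⟩⟩
    have : t ^ 2 * v ^ 2 ≤ 0 := by
      rw [ht] at h
      nlinarith
    have : v ^ 2 = 0 := by nlinarith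
    linear_combination -hv - this
  · exact ⟨t, v, ht0, Or.inr ⟨by rw [ht]; ring, by linear_combination -hv⟩⟩

theorem core2 {b c m k : ℤ} (hbc : IsCoprime b c) (h11 : IsCoprime b 11) (hpar : Odd b ∨ 4 ∣ b)
    (hm : m ≠ 0) {f g : ℤ}
    (hF : b ^ 3 + 12 * b ^ 2 * c + 44 * b * c ^ 2 + 44 * c ^ 3 = m ^ 2 * f)
    (hG : 3 * b ^ 3 + 22 * b ^ 2 * c + 55 * b * c ^ 2 + 44 * c ^ 3 = m ^ 2 * g)
    (hodd : Odd f) (hfg : -(f * g) = k ^ 2) : False := by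
  have hf0 : f ≠ 0 := by
    rintro rfl
    exact absurd hodd (by decide)
  have hcop : IsCoprime f g := by
    apply isCoprime_of_prime_dvd (fun h => hf0 h.1)
    intro p hp hpf hpg
    have h1 : p ∣ b ^ 3 + 12 * b ^ 2 * c + 44 * b * c ^ 2 + 44 * c ^ 3 := by
      rw [hF]; exact Dvd.dvd.mul_left hpf _
    have h2 : p ∣ 3 * b ^ 3 + 22 * b ^ 2 * c + 55 * b * c ^ 2 + 44 * c ^ 3 := by
      rw [hG]; exact Dvd.dvd.mul_left hpg _
    have hb : p ∣ b := by
      apply hp.dvd_of_dvd_pow (n := 5)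
      have := dvd_add (Dvd.dvd.mul_left h1 (-11 * b ^ 2 - 88 * b * c - 176 * c ^ 2))
        (Dvd.dvd.mul_left h2 (4 * b ^ 2 + 44 * b * c + 176 * c ^ 2))
      convert this using 1
      ring
    have h3 : p ∣ 2 ^ 2 * 11 * c ^ 3 := by
      have := dvd_sub h1 (Dvd.dvd.mul_right hb (b ^ 2 + 12 * b * c + 44 * c ^ 2))
      have e : (2 : ℤ) ^ 2 * 11 * c ^ 3 = b ^ 3 + 12 * b ^ 2 * c + 44 * b * c ^ 2 + 44 * c ^ 3
          - b * (b ^ 2 + 12 * b * c + 44 * c ^ 2) := by ring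
      rw [e]
      exact this
    rcases hp.dvd_or_dvd h3 with h4 | h4
    · rcases hp.dvd_or_dvd h4 with h5 | h5
      · have h6 : p ∣ 2 := hp.dvd_of_dvd_pow h5
        apply hp.not_isUnit
        apply isUnit_of_dvd_one
        obtain ⟨j, rfl⟩ := hodd
        have := dvd_sub hpf (Dvd.dvd.mul_right h6 j)
        simpa using this
      · exact hp.not_isUnit (h11.isUnit_of_dvd' hb h5)
    · exact hp.not_isUnit (hbc.isUnit_of_dvd' hb (hp.dvd_of_dvd_pow h4))
  obtain ⟨t, v, ht0, ⟨hf, hg⟩ | ⟨hf, hg⟩⟩ := split_sq hcop hfg hf0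
  · exact core theTrib hbc h11 hpar (t := m * t) (v := m * v)
      (by rw [hF, hf]; ring) (mul_ne_zero hm ht0) (by rw [hG]; linear_combination m ^ 2 * hg)
  · refine core theTrib (b := -b) (c := -c) hbc.neg_neg h11.neg_left ?_ (t := m * t) (v := m * v)
      (by linear_combination -hF + m ^ 2 * hf) (mul_ne_zero hm ht0)
      (by linear_combination hG + m ^ 2 * hg)
    rcases hpar with h | h
    · exact Or.inl h.neg
    · exact Or.inr (by rwa [dvd_neg])

theorem core3 {b c k : ℤ} (hbc : IsCoprime b c) (h11 : IsCoprime b 11)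
    (h : -((b ^ 3 + 12 * b ^ 2 * c + 44 * b * c ^ 2 + 44 * c ^ 3) *
      (3 * b ^ 3 + 22 * b ^ 2 * c + 55 * b * c ^ 2 + 44 * c ^ 3)) = k ^ 2) : False := by
  rcases Int.even_or_odd b with ⟨d, hd⟩ | hodd
  · have hco : Odd c := by
      rw [← Int.not_even_iff_odd]
      intro hce
      have := hbc.isUnit_of_dvd' (x := 2) ⟨d, by omega⟩ hce.two_dvd
      rw [Int.isUnit_iff] at this
      omega
    rcases Int.even_or_odd d with ⟨e, he⟩ | ⟨e, he⟩
    · have hb : b = 4 * e := by omega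
      subst hb
      have h4 : (4 : ℤ) ∣ k := by
        rw [← Int.pow_dvd_pow_iff (n := 2) (by norm_num), ← h]
        exact ⟨-((16 * e ^ 3 + 48 * e ^ 2 * c + 44 * e * c ^ 2 + 11 * c ^ 3) *
          (48 * e ^ 3 + 88 * e ^ 2 * c + 55 * e * c ^ 2 + 11 * c ^ 3)), by ring⟩
      obtain ⟨j, rfl⟩ := h4
      refine core2 hbc h11 (Or.inr ⟨e, rfl⟩) (m := 2) (by norm_num)
        (f := 16 * e ^ 3 + 48 * e ^ 2 * c + 44 * e * c ^ 2 + 11 * c ^ 3)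
        (g := 48 * e ^ 3 + 88 * e ^ 2 * c + 55 * e * c ^ 2 + 11 * c ^ 3) (k := j)
        (by ring) (by ring) ?_ ?_
      · obtain ⟨i, rfl⟩ := hco
        exact ⟨8 * e ^ 3 + 24 * e ^ 2 * (2 * i + 1) + 22 * e * (2 * i + 1) ^ 2
          + 44 * i ^ 3 + 66 * i ^ 2 + 33 * i + 5, by ring⟩
      · have h16 : (16 : ℤ) ≠ 0 := by norm_num
        apply mul_left_cancel₀ h16
        linear_combination h
    · exfalso
      have hb : b = 4 * e + 2 := by omega
      subst hb
      obtain ⟨i, rfl⟩ := hco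
      have := congrArg (Int.cast : ℤ → ZMod 16) h
      push_cast at this
      generalize (e : ZMod 16) = e' at this
      generalize (i : ZMod 16) = i' at this
      generalize (k : ZMod 16) = k' at this
      revert e' i' k'
      decide
  · refine core2 hbc h11 (Or.inl hodd) (m := 1) one_ne_zero (k := k)
      (by ring) (by ring) ?_ h
    obtain ⟨j, rfl⟩ := hodd
    exact ⟨4 * j ^ 3 + 6 * j ^ 2 + 3 * j + 6 * (2 * j + 1) ^ 2 * c
        + 22 * (2 * j + 1) * c ^ 2 + 22 * c ^ 3, by ring⟩

theorem core4 {a b R : ℤ} (hab : IsCoprime a b)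
    (h : -((4 * a ^ 3 - 4 * a ^ 2 * b - 28 * a * b ^ 2 + 41 * b ^ 3) *
      (4 * a ^ 3 + 7 * a ^ 2 * b - 6 * a * b ^ 2 + 19 * b ^ 3)) = R ^ 2) : False := by
  have h1 : (11 : ℤ) ∣ a - 4 * b := by
    have := congrArg (Int.cast : ℤ → ZMod 11) h
    push_cast at this
    have h2 := mod_eleven_ab _ _ _ this
    exact_mod_cast (ZMod.intCast_zmod_eq_zero_iff_dvd (a - 4 * b) 11).1 (by push_cast; exact h2)
  obtain ⟨c, hc⟩ := h1
  have ha : a = 4 * b + 11 * c := by omega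
  subst ha
  have hp : Prime (11 : ℤ) := by
    rw [Int.prime_iff_natAbs_prime]; norm_num
  have h11 : IsCoprime b 11 := by
    rw [isCoprime_comm, hp.coprime_iff_not_dvd]
    intro hb
    have ha : (11 : ℤ) ∣ 4 * b + 11 * c := by omega
    exact hp.not_isUnit (hab.isUnit_of_dvd' ha hb)
  have hbc : IsCoprime b c := by
    obtain ⟨x, y, e⟩ := hab
    exact ⟨4 * x + y, 11 * x, by linear_combination e⟩
  have hR : (121 : ℤ) ∣ R := by
    rw [← Int.pow_dvd_pow_iff (n := 2) (by norm_num), ← h]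
    exact ⟨-((b ^ 3 + 12 * b ^ 2 * c + 44 * b * c ^ 2 + 44 * c ^ 3) *
      (3 * b ^ 3 + 22 * b ^ 2 * c + 55 * b * c ^ 2 + 44 * c ^ 3)), by ring⟩
  obtain ⟨k, rfl⟩ := hR
  refine core3 hbc h11 (k := k) ?_
  have h0 : (121 ^ 2 : ℤ) ≠ 0 := by norm_num
  apply mul_left_cancel₀ h0
  linear_combination h

end HNoPts

/-- The genus 2 hyperelliptic curve
`H : r² = -(4s³ - 4s² - 28s + 41)(4s³ + 7s² - 6s + 19)` has no affine rational
points; since the two points at infinity of `H` are not rational, `H(ℚ) = ∅`. -/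
theorem hyperelliptic_H_no_affine_rational_points :
    ¬ ∃ r s : ℚ,
      r ^ 2 = -((4 * s ^ 3 - 4 * s ^ 2 - 28 * s + 41) *
        (4 * s ^ 3 + 7 * s ^ 2 - 6 * s + 19)) := by
  rintro ⟨r, s, h⟩
  have hd : (s.den : ℚ) ≠ 0 := by exact_mod_cast s.den_ne_zero
  have hs : (s.num : ℚ) = s * s.den := (Rat.mul_den_eq_num s).symm
  have hcop : IsCoprime s.num (s.den : ℤ) := Rat.isCoprime_num_den s
  obtain ⟨N, hN⟩ : ∃ N : ℤ, N = -((4 * s.num ^ 3 - 4 * s.num ^ 2 * s.den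
      - 28 * s.num * s.den ^ 2 + 41 * s.den ^ 3) *
      (4 * s.num ^ 3 + 7 * s.num ^ 2 * s.den - 6 * s.num * s.den ^ 2 + 19 * s.den ^ 3)) :=
    ⟨_, rfl⟩
  have hsq : IsSquare (N : ℚ) := by
    refine ⟨r * s.den ^ 3, ?_⟩
    rw [hN]
    push_cast
    rw [hs]
    linear_combination -(s.den : ℚ) ^ 6 * h
  rw [Rat.isSquare_intCast_iff] at hsq
  obtain ⟨R, hR⟩ := hsq
  exact HNoPts.core4 hcop (R := R) (by rw [← hN, hR]; ring)
end

section
/- Let K be a quadratic field, let u ∈ ℚ, and let v, w ∈ K with v not rational and w not rational, and suppose v^2 + v = u^3 - u^2 - 7u + 10 and w^2 = -(4u^3 + 7u^2 - 6u + 19) (where u is identified with its image in K). Then there exists r ∈ ℚ with r^2 = -(4u^3 - 4u^2 - 28u + 41)(4u^3 + 7u^2 - 6u + 19); that is, (r, u) is a rational point on the hyperelliptic curve H. -/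
/-- Let `K` be a quadratic field, `u ∈ ℚ`, and `v, w ∈ K` both irrational with
`v² + v = u³ - u² - 7u + 10` and `w² = -(4u³ + 7u² - 6u + 19)` (identifying `u`
with its image in `K`). Then there is `r ∈ ℚ` with
`r² = -(4u³ - 4u² - 28u + 41)(4u³ + 7u² - 6u + 19)`, i.e. `(r, u)` is a
rational point on the hyperelliptic curve `H`. -/
theorem discriminant_point_on_H
    (K : Type*) [Field K] [Algebra ℚ K] (hK : Module.finrank ℚ K = 2)
    (u : ℚ) (v w : K)
    (hv : v ∉ Set.range (algebraMap ℚ K))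
    (hw : w ∉ Set.range (algebraMap ℚ K))
    (h1 : v ^ 2 + v = algebraMap ℚ K (u ^ 3 - u ^ 2 - 7 * u + 10))
    (h2 : w ^ 2 = algebraMap ℚ K (-(4 * u ^ 3 + 7 * u ^ 2 - 6 * u + 19))) :
    ∃ r : ℚ, r ^ 2 = -((4 * u ^ 3 - 4 * u ^ 2 - 28 * u + 41) *
      (4 * u ^ 3 + 7 * u ^ 2 - 6 * u + 19)) := by
  have hfin : Module.Finite ℚ K := Module.finite_of_finrank_pos (by omega)
  have hdep : ¬ LinearIndependent ℚ ![1, w, 2 * v + 1] := by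
    intro h
    have h3 := h.fintype_card_le_finrank
    rw [hK] at h3
    simp at h3
  rw [Fintype.not_linearIndependent_iff] at hdep
  obtain ⟨g, hg, hne⟩ := hdep
  simp only [Fin.sum_univ_three, Matrix.cons_val_zero, Matrix.cons_val_one,
    Matrix.cons_val_two, Algebra.smul_def] at hg
  change algebraMap ℚ K (g 0) * 1 + algebraMap ℚ K (g 1) * w
    + algebraMap ℚ K (g 2) * (2 * v + 1) = 0 at hg
  have inj : Function.Injective (algebraMap ℚ K) := (algebraMap ℚ K).injective
  have hz : ∀ q : ℚ, algebraMap ℚ K q = 0 → q = 0 := fun q hq =>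
    (map_eq_zero (algebraMap ℚ K)).1 hq
  -- an element killed up to rationals by a nonzero rational is rational
  have key : ∀ (x : K), x ∉ Set.range (algebraMap ℚ K) → ∀ p q : ℚ,
      algebraMap ℚ K p + algebraMap ℚ K q * x = 0 → q = 0 := by
    intro x hx p q h
    by_contra hq
    apply hx
    have hq' : algebraMap ℚ K q ≠ 0 := fun h' => hq (hz q h')
    refine ⟨-p / q, ?_⟩
    rw [map_div₀, map_neg, div_eq_iff hq']
    linear_combination -h
  have hc2 : g 2 ≠ 0 := by
    intro h0
    rw [h0] at hg
    have e1 : g 1 = 0 := key w hw (g 0) (g 1) (by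
      rw [map_zero] at hg
      linear_combination hg)
    rw [e1] at hg
    have e0 : g 0 = 0 := hz _ (by simpa using hg)
    obtain ⟨i, hi⟩ := hne
    fin_cases i
    · exact hi e0
    · exact hi e1
    · exact hi h0
  have hc1 : g 1 ≠ 0 := by
    intro h0
    rw [h0] at hg
    have e : g 2 * 2 = 0 := key v hv (g 0 + g 2) (g 2 * 2) (by
      simp only [map_zero, map_add, map_mul, map_ofNat] at hg ⊢
      linear_combination hg)
    exact hc2 (by linarith)
  have hc0 : g 0 = 0 := by
    have e : 2 * g 0 * g 1 = 0 := key w hw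
      (g 0 ^ 2 + g 1 ^ 2 * (-(4 * u ^ 3 + 7 * u ^ 2 - 6 * u + 19))
        - g 2 ^ 2 * (4 * (u ^ 3 - u ^ 2 - 7 * u + 10) + 1)) _ (by
      rw [map_sub, map_add, map_mul _ (g 1 ^ 2), map_mul _ (g 2 ^ 2), ← h2, map_add _ (4 * _),
        map_mul _ 4, ← h1]
      simp only [map_pow, map_mul, map_ofNat, map_one]
      linear_combination (algebraMap ℚ K (g 0) * 1 + algebraMap ℚ K (g 1) * w
        - algebraMap ℚ K (g 2) * (2 * v + 1)) * hg)
    simpa [hc1] using e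
  have hsq : g 2 ^ 2 * (4 * (u ^ 3 - u ^ 2 - 7 * u + 10) + 1)
      = g 1 ^ 2 * (-(4 * u ^ 3 + 7 * u ^ 2 - 6 * u + 19)) := by
    apply inj
    rw [map_mul _ (g 1 ^ 2), map_mul _ (g 2 ^ 2), ← h2, map_add _ (4 * _), map_mul _ 4, ← h1]
    rw [hc0, map_zero] at hg
    simp only [map_pow, map_ofNat, map_one]
    linear_combination (algebraMap ℚ K (g 2) * (2 * v + 1) - algebraMap ℚ K (g 1) * w) * hg
  refine ⟨g 1 / g 2 * (4 * u ^ 3 + 7 * u ^ 2 - 6 * u + 19), ?_⟩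
  field_simp
  linear_combination (-(4 * u ^ 3 + 7 * u ^ 2 - 6 * u + 19)) * (-hsq)
end

section
/- Let A be an abelian group, let D_1, …, D_n ∈ A generate a subgroup G ≤ A of finite index, and let l be a prime such that A has no nonzero element x with l·x = 0. Let B_1, …, B_k be abelian groups and f_i : A → B_i group homomorphisms, and for each i let π_i : (ℤ/lℤ)^n → B_i/lB_i be the well-defined homomorphism sending (b_1, …, b_n) to b_1·[f_i(D_1)] + … + b_n·[f_i(D_n)], where [·] denotes the class in the quotient B_i/lB_i. If the intersection ⋂_{i=1}^k ker(π_i) is trivial, then l does not divide the index [A : G]. -/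
/-- **Saturation test.** Let `A` be an abelian group, `D₁, …, Dₙ ∈ A`
generators of a finite-index subgroup `G ≤ A`, and `l` a prime such that `A`
has no nonzero `l`-torsion. Let `B₁, …, B_k` be abelian groups with
homomorphisms `fᵢ : A → Bᵢ`, and let `πᵢ : (ℤ/lℤ)ⁿ → Bᵢ/lBᵢ` send
`(b₁, …, bₙ)` to `b₁·[fᵢ(D₁)] + … + bₙ·[fᵢ(Dₙ)]`. (Here membership of `b` in
`ker πᵢ` is expressed as: the lift `∑ⱼ bⱼ·fᵢ(Dⱼ)` lies in `l·Bᵢ`.) If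
`⋂ᵢ ker πᵢ = 0`, then `l` does not divide the index `[A : G]`. -/
theorem saturation_test
    {A : Type*} [AddCommGroup A] {n : ℕ} (D : Fin n → A)
    (G : AddSubgroup A) (hG : G = AddSubgroup.closure (Set.range D))
    (hfin : G.index ≠ 0)
    (l : ℕ) (hl : l.Prime) (htors : ∀ x : A, l • x = 0 → x = 0)
    {k : ℕ} (B : Fin k → Type*) [∀ i, AddCommGroup (B i)]
    (f : ∀ i, A →+ B i)
    (hker : ∀ b : Fin n → ZMod l,
      (∀ i, ∃ c : B i, ∑ j, ((b j).val : ℤ) • (f i (D j)) = (l : ℤ) • c) →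
      b = 0) :
    ¬ (l ∣ G.index) := by
  intro hdvd
  haveI : Fact l.Prime := ⟨hl⟩
  haveI : Finite (A ⧸ G) := Nat.finite_of_card_ne_zero hfin
  obtain ⟨x, hx⟩ := exists_prime_addOrderOf_dvd_card' (G := A ⧸ G) l hdvd
  obtain ⟨a, rfl⟩ := QuotientAddGroup.mk_surjective x
  have hmem : ∀ y : A, y ∈ G ↔ ∃ m : Fin n → ℤ, ∑ j, m j • D j = y := by
    intro y
    rw [← Submodule.mem_span_range_iff_exists_fun ℤ, hG, ← Submodule.span_int_eq_addSubgroupClosure]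
    rfl
  have hla : l • a ∈ G := by
    rw [← QuotientAddGroup.eq_zero_iff, QuotientAddGroup.mk_nsmul, ← hx]
    exact addOrderOf_nsmul_eq_zero _
  have ha : a ∉ G := by
    intro h
    rw [(QuotientAddGroup.eq_zero_iff a).2 h, addOrderOf_zero] at hx
    exact hl.one_lt.ne hx
  obtain ⟨m, hm⟩ := (hmem _).1 hla
  have hb := hker (fun j => (m j : ZMod l)) (by
    intro i
    refine ⟨f i a - ∑ j, (m j / (l : ℤ)) • f i (D j), ?_⟩
    have h1 : ∑ j, m j • f i (D j) = (l : ℤ) • f i a := by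
      have := congrArg (f i) hm
      simpa [map_sum] using this
    rw [smul_sub, ← h1, Finset.smul_sum, ← Finset.sum_sub_distrib]
    refine Finset.sum_congr rfl fun j _ => ?_
    rw [ZMod.val_intCast, smul_smul, ← sub_smul, Int.emod_def])
  have hd : ∀ j, ∃ q : ℤ, m j = l * q := fun j =>
    (ZMod.intCast_zmod_eq_zero_iff_dvd (m j) l).1 (congrFun hb j)
  choose q hq using hd
  apply ha
  rw [hmem]
  refine ⟨q, ?_⟩
  rw [eq_comm, ← sub_eq_zero]
  apply htors
  rw [smul_sub, ← hm, Finset.smul_sum, sub_eq_zero]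
  refine Finset.sum_congr rfl fun j _ => ?_
  rw [hq, mul_smul, natCast_zsmul]
end

section
/- There are no real numbers x, y, t satisfying simultaneously y^2 + y = x^3 - x^2 - 7x + 10 and t^2 = -(4x^3 + 7x^2 - 6x + 19); that is, the affine model of the modular curve X_ns(11) has no real points. -/
/-- The affine model of the modular curve `X_ns(11)` has no real points: there
are no real numbers `x, y, t` with `y² + y = x³ - x² - 7x + 10` and
`t² = -(4x³ + 7x² - 6x + 19)`. -/
theorem Xns11_no_real_points :
    ¬ ∃ x y t : ℝ, y ^ 2 + y = x ^ 3 - x ^ 2 - 7 * x + 10 ∧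
      t ^ 2 = -(4 * x ^ 3 + 7 * x ^ 2 - 6 * x + 19) := by
  rintro ⟨x, y, t, h1, h2⟩
  have hx : x < -2.85 := by
    by_contra! h
    have hu : 0 ≤ x + 2.85 := by linarith
    have := mul_nonneg hu (sq_nonneg (2 * (x + 2.85) - 6.8))
    nlinarith [sq_nonneg t]
  have hs : 0 < -2.85 - x := by linarith
  have h3 : 0 < (-2.85 - x) ^ 2 := by positivity
  have h4 : 0 < (-2.85 - x) ^ 3 := by positivity
  nlinarith [sq_nonneg (2 * y + 1)]
end
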